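/- arXiv:math/9802083 — 2 statements merged into one kernel-verified Lean document; each statement's English description precedes it below -/
import Mathlib

section
/- For all real q > 1 and 0 < c < ∞, there exists a surjective unital *-homomorphism φ from C_{q,c} onto the C*-algebra C(𝕋) of continuous complex-valued functions on the circle, whose kernel is isomorphic, as a (non-unital) C*-algebra via a *-algebra isomorphism, to the direct sum K(ℓ²(ℕ)) ⊕ K(ℓ²(ℕ)) of two copies of the algebra of compact operators on ℓ²(ℕ). Equivalently, there is a short exact sequence 0 → K ⊕ K → C(S²_{μc}) → C(S¹) → 0. -/
set_option synthInstance.maxHeartbeats 1000000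
set_option maxHeartbeats 1000000

noncomputable section

/-- The Hilbert space `ℓ²(ℤ) ⊗ ℓ²(ℕ) = ℓ²(ℤ × ℕ)`. -/
abbrev HC : Type := lp (fun _ : ℤ × ℕ => ℂ) 2

/-- The standard orthonormal basis vectors `e_m ⊗ e_j` of `ℓ²(ℤ × ℕ)`. -/
def ec (m : ℤ) (j : ℕ) : HC := lp.single 2 (m, j) 1

/-- `IsXPair q c x` says that `x 0, x 1` are the operators
`x₁ = √c (S ⊗ α) + S* ⊗ γ` and `x₂ = -√c q⁻¹ (S ⊗ γ) + S* ⊗ α*` on `ℓ²(ℤ) ⊗ ℓ²(ℕ)`,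
where `S` is the bilateral shift, `α e_j = (1 - q^{-2j})^{1/2} e_{j-1}` (`α e_0 = 0`) and
`γ e_j = q^{-j} e_j`. -/
def IsXPair (q c : ℝ) (x : Fin 2 → (HC →L[ℂ] HC)) : Prop :=
  (∀ m : ℤ, x 0 (ec m 0) = ec (m - 1) 0) ∧
  (∀ (m : ℤ) (j : ℕ),
    x 0 (ec m (j + 1)) =
      (Real.sqrt c * Real.sqrt (1 - q ^ (-2 * ((j : ℤ) + 1)))) • ec (m + 1) j +
        (q ^ (-((j : ℤ) + 1))) • ec (m - 1) (j + 1)) ∧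
  (∀ (m : ℤ) (j : ℕ),
    x 1 (ec m j) =
      (-Real.sqrt c * q⁻¹ * q ^ (-(j : ℤ))) • ec (m + 1) j +
        Real.sqrt (1 - q ^ (-2 * ((j : ℤ) + 1))) • ec (m - 1) (j + 1))

/-- `C_{q,c}`: the unital C*-subalgebra of bounded operators on `ℓ²(ℤ) ⊗ ℓ²(ℕ)` generated
by `{x_i* x_j : i, j ∈ {1,2}}`; the concrete realization of the C*-algebra `C(S²_{μc})`
(`μ = q⁻¹`) of a nonstandard Podleś quantum 2-sphere, i.e. of `ℂP¹_{q,c}`. -/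
def Cqc (x : Fin 2 → (HC →L[ℂ] HC)) : StarSubalgebra ℂ (HC →L[ℂ] HC) :=
  (StarAlgebra.adjoin ℂ
    {a : HC →L[ℂ] HC | ∃ i j : Fin 2, a = star (x i) * x j}).topologicalClosure

/-- The Hilbert space ℓ²(ℕ). -/
abbrev Hnat : Type := lp (fun _ : ℕ => ℂ) 2
noncomputable section

/-- The compact operators on a complex Hilbert space `X`, as a non-unital star subalgebra
of the bounded operators (a C*-algebra).  By Schauder's theorem the condition that the
adjoint `star T` is also compact is automatic, so the carrier is exactly the set of
compact operators. -/
def compactOps (X : Type*) [NormedAddCommGroup X] [InnerProductSpace ℂ X]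
    [CompleteSpace X] : NonUnitalStarSubalgebra ℂ (X →L[ℂ] X) where
  carrier := {T | IsCompactOperator ⇑T ∧ IsCompactOperator ⇑(star T)}
  zero_mem' := by
    constructor <;> simpa using (isCompactOperator_zero (M₁ := X) (M₂ := X))
  add_mem' := by
    rintro a b ⟨ha1, ha2⟩ ⟨hb1, hb2⟩
    refine ⟨?_, ?_⟩
    · simpa [ContinuousLinearMap.coe_add] using ha1.add hb1
    · rw [star_add]; simpa [ContinuousLinearMap.coe_add] using ha2.add hb2
  mul_mem' := by
    rintro a b ⟨ha1, ha2⟩ ⟨hb1, hb2⟩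
    refine ⟨?_, ?_⟩
    · simpa [ContinuousLinearMap.mul_def, ContinuousLinearMap.coe_comp] using ha1.comp_clm b
    · rw [star_mul]
      simpa [ContinuousLinearMap.mul_def, ContinuousLinearMap.coe_comp] using
        hb2.comp_clm (star a)
  smul_mem' := by
    rintro c a ⟨ha1, ha2⟩
    refine ⟨?_, ?_⟩
    · simpa [ContinuousLinearMap.coe_smul] using ha1.smul c
    · rw [star_smul]; simpa [ContinuousLinearMap.coe_smul] using ha2.smul (star c)
  star_mem' := by
    rintro a ⟨ha1, ha2⟩
    exact ⟨ha2, by simpa [star_star] using ha1⟩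

/-- The kernel of a unital *-homomorphism, as a non-unital star subalgebra (a closed
two-sided star-ideal) of the domain. -/
def starAlgHomKer {A B : Type*} [Semiring A] [Algebra ℂ A] [StarRing A]
    [Semiring B] [Algebra ℂ B] [StarRing B] (φ : A →⋆ₐ[ℂ] B) :
    NonUnitalStarSubalgebra ℂ A where
  carrier := {x | φ x = 0}
  zero_mem' := by simp
  add_mem' := by
    intro a b ha hb
    simp only [Set.mem_setOf_eq] at *
    simp [map_add, ha, hb]
  mul_mem' := by
    intro a b ha hb
    simp only [Set.mem_setOf_eq] at *
    simp [map_mul, ha, hb]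
  smul_mem' := by
    intro c a ha
    simp only [Set.mem_setOf_eq] at *
    simp [map_smul, ha]
  star_mem' := by
    intro a ha
    simp only [Set.mem_setOf_eq] at *
    simp [map_star, ha]

section ShortcutInstances

-- Shortcut instances (all definitionally the canonical ones) to speed up elaboration.
instance : SMul ℂ ↥(compactOps Hnat) := inferInstance
instance : Add ↥(compactOps Hnat) := inferInstance
instance : Mul ↥(compactOps Hnat) := inferInstance
instance : Star ↥(compactOps Hnat) := inferInstance

variable {A B : Type*} [Semiring A] [Algebra ℂ A] [StarRing A]
    [Semiring B] [Algebra ℂ B] [StarRing B] (φ : A →⋆ₐ[ℂ] B)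

instance : SMul ℂ ↥(starAlgHomKer φ) := inferInstance
instance : Add ↥(starAlgHomKer φ) := inferInstance
instance : Mul ↥(starAlgHomKer φ) := inferInstance
instance : Star ↥(starAlgHomKer φ) := inferInstance

end ShortcutInstances

/-!
The operator `x₁* x₁ - c` has eigenvalues `νⁿ` and `-c νⁿ`, where `ν = q⁻²`. Normalised
eigenvectors in `ℓ²(ℕ)` form two chains, placed at each degree `m : ℤ` of the bilateral shift.
Along each chain `x₁* x₂` is a weighted shift, and the generators `xᵢ* xⱼ` act in the same way for
every `m`. Restricting to one chain of each kind therefore gives a faithful representation of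
`C_{q,c}` by pairs of operators on `ℓ²(ℕ)`. Both weights tend to `√c`, so the two components of the
image of an element are Toeplitz operators modulo compacts, with a common symbol; the homomorphism
onto `C(𝕋)` is the symbol map, and its kernel consists of the elements represented by pairs of
compact operators.

All pairs of compact operators occur. The powers of an affine function of the diagonal pair
representing `x₁* x₁` converge to the rank-one projection on the leading vector of one of the two
chains, and the weighted shifts turn it into every matrix unit of that chain.
-/

namespace Podles

open ContinuousLinearMap Filter InnerProductSpace Topology
open scoped lp

/-! ### Compact operators -/

section Compact

variable {ι : Type*} {E F G : Type*}

section NormedSpace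

variable {𝕜 : Type*} [RCLike 𝕜] [NormedAddCommGroup E] [NormedSpace 𝕜 E]
  [NormedAddCommGroup F] [NormedSpace 𝕜 F] [NormedAddCommGroup G] [NormedSpace 𝕜 G]

lemma tendsto_comp_zero_of_isCompactOperator {l : Filter ι} {T : ι → F →L[𝕜] G} {C : ℝ}
    (hC : ∀ i, ‖T i‖ ≤ C) (hT : ∀ y, Tendsto (fun i ↦ T i y) l (𝓝 0))
    {K : E →L[𝕜] F} (hK : IsCompactOperator K) : Tendsto (fun i ↦ T i ∘L K) l (𝓝 0) := by
  have hcompact : IsCompact (closure (K '' Metric.closedBall 0 1)) :=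
    hK.isCompact_closure_image_closedBall (f := K.toLinearMap) 1
  rw [NormedAddGroup.tendsto_nhds_zero]
  intro ε hε
  let r := ε / (4 * (|C| + 1))
  have hr : (|C| + 1) * r = ε / 4 := by
    have : |C| + 1 ≠ 0 := by positivity
    simp only [r]; field_simp
  obtain ⟨t, ht, hcover⟩ := Metric.totallyBounded_iff.1 hcompact.totallyBounded r (by positivity)
  have hsmall : ∀ᶠ i in l, ∀ y ∈ t, ‖T i y‖ < ε / 4 := by
    rw [ht.eventually_all]
    exact fun y _ ↦ NormedAddGroup.tendsto_nhds_zero.1 (hT y) _ (by positivity)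
  filter_upwards [hsmall] with i hi
  refine lt_of_le_of_lt (b := ε / 2) ?_ (by linarith)
  refine opNorm_le_of_unit_norm (by positivity) fun x hx ↦ ?_
  have hKx : K x ∈ closure (K '' Metric.closedBall 0 1) := subset_closure ⟨x, by simp [hx], rfl⟩
  obtain ⟨y, hy, hdist⟩ : ∃ y ∈ t, ‖K x - y‖ < r := by
    simpa only [Set.mem_iUnion, Metric.mem_ball, dist_eq_norm, exists_prop] using hcover hKx
  calc ‖T i (K x)‖ = ‖T i (K x - y) + T i y‖ := by rw [← map_add, sub_add_cancel]
    _ ≤ (|C| + 1) * r + ε / 4 := by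
      refine norm_add_le_of_le ?_ (hi y hy).le
      exact le_of_opNorm_le_of_le _ ((hC i).trans (by linarith [le_abs_self C])) hdist.le
    _ = ε / 2 := by rw [hr]; ring

end NormedSpace

variable [NormedAddCommGroup E] [InnerProductSpace ℂ E]
  [NormedAddCommGroup F] [InnerProductSpace ℂ F]

lemma isCompactOperator_rankOne (x : F) (y : E) : IsCompactOperator (rankOne ℂ x y) :=
  (isCompactOperator_of_locallyCompactSpace_dom (innerSL ℂ y)).clm_comp (toSpanSingleton ℂ x)

variable [CompleteSpace E]

lemma isStarProjection_sum_rankOne_self {v : ι → E} (hv : Orthonormal ℂ v) (s : Finset ι) :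
    IsStarProjection (∑ i ∈ s, rankOne ℂ (v i) (v i)) := by
  refine ⟨?_, isSelfAdjoint_sum s fun i _ ↦
    (isStarProjection_rankOne_self (hv.norm_eq_one i)).isSelfAdjoint⟩
  ext x
  simp only [mul_apply_eq_comp, sum_apply, rankOne_apply]
  exact Finset.sum_congr rfl fun i hi ↦ by rw [hv.inner_right_sum _ hi]

lemma hasSum_rankOne_of_isCompactOperator_adjoint [CompleteSpace F]
    (b : HilbertBasis ι ℂ E) {K : E →L[ℂ] F} (hK : IsCompactOperator (adjoint K)) :
    HasSum (fun i ↦ rankOne ℂ (K (b i)) (b i)) K := by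
  let Q (s : Finset ι) : E →L[ℂ] E := 1 - ∑ i ∈ s, rankOne ℂ (b i) (b i)
  have hQ (s) : IsStarProjection (Q s) :=
    (isStarProjection_sum_rankOne_self b.orthonormal s).one_sub
  have hQ_tendsto (x : E) : Tendsto (fun s ↦ Q s x) atTop (𝓝 0) := by
    simpa [Q, sum_apply, HasSum, b.repr_apply_apply] using (b.hasSum_repr x).const_sub x
  have hlim : Tendsto (fun s ↦ K ∘L Q s) atTop (𝓝 0) := by
    have := tendsto_comp_zero_of_isCompactOperator (fun s ↦ (hQ s).norm_le) hQ_tendsto hK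
    have hadj := ((adjoint (𝕜 := ℂ)).continuous.tendsto 0).comp this
    simpa [Function.comp_def, adjoint_comp, (hQ _).isSelfAdjoint.adjoint_eq] using hadj
  simpa [Q, HasSum, comp_sub, comp_finsetSum, comp_rankOne, one_def] using hlim.const_sub K

lemma tendsto_apply_zero_of_orthonormal [CompleteSpace F] {v : ι → E} (hv : Orthonormal ℂ v)
    {K : E →L[ℂ] F} (hK : IsCompactOperator K) : Tendsto (fun i ↦ K (v i)) cofinite (𝓝 0) := by
  have hbessel (y : E) : Tendsto (fun i ↦ innerSL ℂ (v i) y) cofinite (𝓝 0) := by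
    have := (hv.inner_products_summable y).tendsto_cofinite_zero
    rw [tendsto_zero_iff_norm_tendsto_zero]
    simpa using this.sqrt
  have hlim := tendsto_comp_zero_of_isCompactOperator (C := 1) (K := adjoint K ∘L K)
    (fun i ↦ by simp [hv.norm_eq_one]) hbessel (hK.clm_comp (adjoint K))
  have hsq : Tendsto (fun i ↦ ‖K (v i)‖ ^ 2) cofinite (𝓝 0) := by
    refine squeeze_zero (fun i ↦ sq_nonneg _) (fun i ↦ ?_) (by simpa using hlim.norm)
    calc ‖K (v i)‖ ^ 2 = ‖(innerSL ℂ (v i) ∘L adjoint K ∘L K) (v i)‖ := by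
          simp [adjoint_inner_right, inner_self_eq_norm_sq_to_K]
      _ ≤ ‖innerSL ℂ (v i) ∘L adjoint K ∘L K‖ := by
          simpa [hv.norm_eq_one] using le_opNorm (innerSL ℂ (v i) ∘L adjoint K ∘L K) (v i)
  rw [tendsto_zero_iff_norm_tendsto_zero]
  simpa using hsq.sqrt

end Compact

/-! ### Operators that are diagonal or weighted shifts in a Hilbert basis -/

section HilbertBasis

variable {ι : Type*} {E F : Type*} [NormedAddCommGroup E] [InnerProductSpace ℂ E]
  [NormedAddCommGroup F] [InnerProductSpace ℂ F] (b : HilbertBasis ι ℂ E)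

lemma ext_hilbertBasis {S T : E →L[ℂ] F} (h : ∀ i, S (b i) = T (b i)) : S = T :=
  ext_on (Submodule.dense_iff_topologicalClosure_eq_top.2 b.dense_span) <| by
    rintro _ ⟨i, rfl⟩
    exact h i

lemma inner_eq_ite (i j : ι) [Decidable (i = j)] :
    inner ℂ (b i) (b j) = if i = j then 1 else 0 := by
  classical
  convert orthonormal_iff_ite.1 b.orthonormal i j

variable {b} {T : E →L[ℂ] E} {d : ι → ℂ}

lemma inner_apply_of_diagonal (hT : ∀ i, T (b i) = d i • b i) (i : ι) (x : E) :
    inner ℂ (b i) (T x) = d i * inner ℂ (b i) x := by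
  classical
  have : innerSL ℂ (b i) ∘L T = d i • innerSL ℂ (b i) := by
    refine ext_hilbertBasis b fun j ↦ ?_
    by_cases hij : i = j <;> simp [hT, inner_eq_ite, hij]
  exact DFunLike.congr_fun this x

lemma norm_le_of_diagonal {C : ℝ} (hC : 0 ≤ C) (hT : ∀ i, T (b i) = d i • b i)
    (hd : ∀ i, ‖d i‖ ≤ C) : ‖T‖ ≤ C := by
  refine opNorm_le_bound _ hC fun x ↦ ?_
  calc ‖T x‖ = ‖b.repr (T x)‖ := (b.repr.norm_map _).symm
    _ ≤ ‖b.repr ((C : ℂ) • x)‖ := by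
      refine lp.norm_mono two_ne_zero fun i ↦ ?_
      rw [b.repr_apply_apply, b.repr_apply_apply, inner_apply_of_diagonal hT, inner_smul_right,
        norm_mul, norm_mul, Complex.norm_of_nonneg hC]
      gcongr
      exact hd i
    _ = C * ‖x‖ := by rw [b.repr.norm_map, norm_smul, Complex.norm_of_nonneg hC]

lemma adjoint_apply_of_diagonal [CompleteSpace E] (hT : ∀ i, T (b i) = d i • b i) (i : ι) :
    adjoint T (b i) = star (d i) • b i :=
  ext_inner_right ℂ fun x ↦ by
    rw [adjoint_inner_left, inner_apply_of_diagonal hT, inner_smul_left]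
    simp

lemma isCompactOperator_of_diagonal [CompleteSpace E] (hT : ∀ i, T (b i) = d i • b i)
    (hd : Tendsto d cofinite (𝓝 0)) : IsCompactOperator T := by
  classical
  let S (s : Finset ι) : E →L[ℂ] E := ∑ i ∈ s, d i • rankOne ℂ (b i) (b i)
  have hS (s) : IsCompactOperator (S s) :=
    (compactOperator (.id ℂ) E E).sum_mem fun i _ ↦ (isCompactOperator_rankOne _ _).smul (d i)
  have hdiff (s : Finset ι) (i) : (T - S s) (b i) = (if i ∈ s then 0 else d i) • b i := by
    by_cases hi : i ∈ s <;> simp [S, hT, sum_apply, inner_eq_ite, hi]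
  refine isCompactOperator_of_tendsto (F := S) (l := atTop) ?_ (.of_forall hS)
  rw [tendsto_iff_norm_sub_tendsto_zero, NormedAddGroup.tendsto_nhds_zero]
  intro ε hε
  have hfin : {i | ¬ ‖d i‖ < ε / 2}.Finite :=
    NormedAddGroup.tendsto_nhds_zero.1 hd _ (half_pos hε)
  filter_upwards [eventually_ge_atTop hfin.toFinset] with s hs
  rw [norm_norm, norm_sub_rev]
  refine (norm_le_of_diagonal (half_pos hε).le (hdiff s) fun i ↦ ?_).trans_lt (half_lt_self hε)
  split_ifs with hi
  · simpa using (half_pos hε).le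
  · by_contra h
    exact hi (hs (hfin.mem_toFinset.2 fun h' ↦ h h'.le))

lemma pow_apply_of_diagonal (hT : ∀ i, T (b i) = d i • b i) (n : ℕ) (i : ι) :
    (T ^ n) (b i) = d i ^ n • b i := by
  induction n with
  | zero => simp
  | succ n ih => rw [pow_succ, mul_apply_eq_comp, hT, map_smul, ih, smul_smul, mul_comm, pow_succ]

lemma tendsto_pow_zero_of_diagonal {ρ : ℝ} (hT : ∀ i, T (b i) = d i • b i) (hρ₀ : 0 ≤ ρ)
    (hρ : ρ < 1) (hd : ∀ i, ‖d i‖ ≤ ρ) : Tendsto (fun n ↦ T ^ n) atTop (𝓝 0) :=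
  squeeze_zero_norm (fun n ↦ norm_le_of_diagonal (by positivity) (pow_apply_of_diagonal hT n)
    fun i ↦ by rw [norm_pow]; exact pow_le_pow_left₀ (norm_nonneg _) (hd i) n)
    (tendsto_pow_atTop_nhds_zero_of_lt_one hρ₀ hρ)

lemma tendsto_pow_rankOne_of_diagonal {ρ : ℝ} {i₀ : ι} (hT : ∀ i, T (b i) = d i • b i)
    (hρ₀ : 0 ≤ ρ) (hρ : ρ < 1) (hd₀ : d i₀ = 1) (hd : ∀ i ≠ i₀, ‖d i‖ ≤ ρ) :
    Tendsto (fun n ↦ T ^ n) atTop (𝓝 (rankOne ℂ (b i₀) (b i₀))) := by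
  classical
  have hdiff (n : ℕ) (i : ι) : (T ^ n - rankOne ℂ (b i₀) (b i₀)) (b i) =
      (if i = i₀ then 0 else d i ^ n) • b i := by
    by_cases hi : i = i₀
    · simp [pow_apply_of_diagonal hT, hi, hd₀, b.orthonormal.norm_eq_one]
    · simp [pow_apply_of_diagonal hT, hi, inner_eq_ite, Ne.symm hi]
  rw [tendsto_iff_norm_sub_tendsto_zero]
  refine squeeze_zero (fun _ ↦ norm_nonneg _) (fun n ↦ ?_)
    (tendsto_pow_atTop_nhds_zero_of_lt_one hρ₀ hρ)
  refine norm_le_of_diagonal (by positivity) (hdiff n) fun i ↦ ?_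
  split_ifs with hi
  · simpa using pow_nonneg hρ₀ n
  · rw [norm_pow]
    exact pow_le_pow_left₀ (norm_nonneg _) (hd i hi) n

end HilbertBasis

section WeightedShift

variable {E : Type*} [NormedAddCommGroup E] [InnerProductSpace ℂ E] [CompleteSpace E]
  {b : HilbertBasis ℕ ℂ E} {B : E →L[ℂ] E} {β : ℕ → ℂ}

lemma adjoint_apply_zero_of_weightedShift (hB : ∀ n, B (b n) = β n • b (n + 1)) :
    adjoint B (b 0) = 0 := by
  suffices innerSL ℂ (b 0) ∘L B = 0 from
    ext_inner_right ℂ fun x ↦ by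
      rw [adjoint_inner_left, inner_zero_left]
      exact DFunLike.congr_fun this x
  exact ext_hilbertBasis b fun n ↦ by simp [hB, inner_eq_ite]

lemma adjoint_apply_succ_of_weightedShift (hB : ∀ n, B (b n) = β n • b (n + 1)) (n : ℕ) :
    adjoint B (b (n + 1)) = star (β n) • b n := by
  suffices innerSL ℂ (b (n + 1)) ∘L B = β n • innerSL ℂ (b n) from
    ext_inner_right ℂ fun x ↦ by
      rw [adjoint_inner_left, inner_smul_left]
      simpa using DFunLike.congr_fun this x
  refine ext_hilbertBasis b fun m ↦ ?_
  by_cases h : n = m <;> simp [hB, inner_eq_ite, h, b.orthonormal.norm_eq_one]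

variable {P : Submodule ℂ (E →L[ℂ] E)}

-- Every matrix unit is a multiple of `B ^ m * rankOne (b 0) (b 0) * (adjoint B) ^ n`.
lemma rankOne_mem_of_weightedShift (hB : ∀ n, B (b n) = β n • b (n + 1)) (hβ : ∀ n, β n ≠ 0)
    (hleft : ∀ T ∈ P, B * T ∈ P) (hright : ∀ T ∈ P, T * adjoint B ∈ P)
    (h₀ : rankOne ℂ (b 0) (b 0) ∈ P) (m n : ℕ) : rankOne ℂ (b m) (b n) ∈ P := by
  have hcol (m) : rankOne ℂ (b m) (b 0) ∈ P := by
    induction m with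
    | zero => exact h₀
    | succ m ih =>
      have := hleft _ ih
      rwa [mul_def, comp_rankOne, hB, map_smul, smul_apply, P.smul_mem_iff (hβ m)] at this
  induction n with
  | zero => exact hcol m
  | succ n ih =>
    have := hright _ ih
    rwa [mul_def, rankOne_comp, adjoint_adjoint, hB, map_smulₛₗ,
      P.smul_mem_iff (by simpa using hβ n)] at this

lemma mem_of_isCompactOperator_adjoint (hP : IsClosed (P : Set (E →L[ℂ] E)))
    (hB : ∀ n, B (b n) = β n • b (n + 1)) (hβ : ∀ n, β n ≠ 0)
    (hleft : ∀ T ∈ P, B * T ∈ P) (hright : ∀ T ∈ P, T * adjoint B ∈ P)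
    (h₀ : rankOne ℂ (b 0) (b 0) ∈ P) {K : E →L[ℂ] E} (hK : IsCompactOperator (adjoint K)) :
    K ∈ P := by
  have hmem_of_hasSum {f : ℕ → E →L[ℂ] E} {T} (h : HasSum f T) (hf : ∀ i, f i ∈ P) : T ∈ P :=
    hP.mem_of_tendsto h (.of_forall fun s ↦ P.sum_mem fun i _ ↦ hf i)
  have hrow (x n) : rankOne ℂ x (b n) ∈ P := by
    have := ((rankOne ℂ).flip (b n)).hasSum (b.hasSum_repr x)
    refine hmem_of_hasSum this fun m ↦ ?_
    simpa using P.smul_mem _ (rankOne_mem_of_weightedShift hB hβ hleft hright h₀ m n)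
  exact hmem_of_hasSum (hasSum_rankOne_of_isCompactOperator_adjoint b hK) fun n ↦ hrow _ n

end WeightedShift

/-! ### The standard basis of `ℓ²` -/

section SquareSummable

variable {ι κ : Type*} {H : Type*} [NormedAddCommGroup H] [InnerProductSpace ℂ H]

/-- The standard orthonormal basis of `ℓ²(ι, ℂ)`, as a Hilbert basis. -/
def stdBasis (ι : Type*) : HilbertBasis ι ℂ ℓ²(ι, ℂ) := .ofRepr (.refl ℂ _)

lemma stdBasis_eq_single [DecidableEq ι] (i : ι) : stdBasis ι i = lp.single 2 i 1 :=
  ((stdBasis ι).repr_symm_single i).symm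

lemma inner_stdBasis (i : ι) (f : ℓ²(ι, ℂ)) : inner ℂ (stdBasis ι i) f = f i :=
  ((stdBasis ι).repr_apply_apply f i).symm

/-- The operator on `ℓ²(ι, ℂ)` that multiplies the coordinate `i` by `d i`, for a bounded `d`. -/
def diagonal (d : ι → ℂ) {C : ℝ} (hC : 0 ≤ C) (hd : ∀ i, ‖d i‖ ≤ C) :
    ℓ²(ι, ℂ) →L[ℂ] ℓ²(ι, ℂ) :=
  lp.mapCLM 2 (fun i ↦ ContinuousLinearMap.mul ℂ ℂ (d i)) hC fun i ↦ by simpa using hd i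

lemma diagonal_stdBasis {d : ι → ℂ} {C : ℝ} (hC : 0 ≤ C) (hd : ∀ i, ‖d i‖ ≤ C) (i : ι) :
    diagonal d hC hd (stdBasis ι i) = d i • stdBasis ι i := by
  classical
  ext j
  simp only [diagonal, stdBasis_eq_single, lp.mapCLM_apply_coe, lp.coeFn_smul, Pi.smul_apply]
  obtain rfl | h := eq_or_ne i j <;> simp [*]

variable [CompleteSpace H] {v : ι → H}

/-- The isometry `ℓ²(ι, ℂ) → H` that maps the standard basis to an orthonormal family. -/
def ofOrthonormal (hv : Orthonormal ℂ v) : ℓ²(ι, ℂ) →L[ℂ] H :=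
  hv.orthogonalFamily.linearIsometry.toContinuousLinearMap

lemma ofOrthonormal_stdBasis (hv : Orthonormal ℂ v) (i : ι) :
    ofOrthonormal hv (stdBasis ι i) = v i := by
  classical
  simp [ofOrthonormal, stdBasis_eq_single, OrthogonalFamily.linearIsometry_apply_single]

lemma norm_ofOrthonormal (hv : Orthonormal ℂ v) (f : ℓ²(ι, ℂ)) : ‖ofOrthonormal hv f‖ = ‖f‖ :=
  hv.orthogonalFamily.linearIsometry.norm_map f

lemma adjoint_comp_ofOrthonormal (hv : Orthonormal ℂ v) :
    adjoint (ofOrthonormal hv) ∘L ofOrthonormal hv = 1 :=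
  (norm_map_iff_adjoint_comp_self _).1 (norm_ofOrthonormal hv)

/-- The isometry `ℓ²(ι, ℂ) → ℓ²(κ, ℂ)` that maps `e i` to `e (g i)`. -/
def reindex (g : ι → κ) (hg : Function.Injective g) : ℓ²(ι, ℂ) →L[ℂ] ℓ²(κ, ℂ) :=
  ofOrthonormal ((stdBasis κ).orthonormal.comp g hg)

lemma reindex_stdBasis (g : ι → κ) (hg : Function.Injective g) (i : ι) :
    reindex g hg (stdBasis ι i) = stdBasis κ (g i) :=
  ofOrthonormal_stdBasis _ i

lemma adjoint_comp_reindex (g : ι → κ) (hg : Function.Injective g) :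
    adjoint (reindex g hg) ∘L reindex g hg = 1 :=
  adjoint_comp_ofOrthonormal _

end SquareSummable

/-! ### Continuous functions of a unitary element -/

section CircleCalculus

variable {A : Type*} [CStarAlgebra A]

/-- The continuous functional calculus of a unitary element, with functions on the whole circle. -/
def circleCalculus {u : A} (hu : u ∈ unitary A) : C(Circle, ℂ) →⋆ₐ[ℂ] A :=
  haveI : IsStarNormal u := ⟨by rw [commute_iff_eq, hu.1, hu.2]⟩
  (cfcHom (R := ℂ) (a := u) ‹_›).comp <|
    ContinuousMap.compStarAlgHom' ℂ ℂ
      ⟨fun z : spectrum ℂ u ↦ (⟨z, spectrum.subset_circle_of_unitary hu z.2⟩ : Circle),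
        by fun_prop⟩

/-- The coordinate function `z` of the circle. -/
def circleCoord : C(Circle, ℂ) := ⟨fun z ↦ z, continuous_subtype_val⟩

lemma circleCalculus_circleCoord {u : A} (hu : u ∈ unitary A) :
    circleCalculus hu circleCoord = u :=
  haveI : IsStarNormal u := ⟨by rw [commute_iff_eq, hu.1, hu.2]⟩
  cfcHom_id ‹_›

lemma circleCalculus_injective {u : A} (hu : u ∈ unitary A)
    (hspec : ∀ z : Circle, (z : ℂ) ∈ spectrum ℂ u) : Function.Injective (circleCalculus hu) := by
  intro f g hfg
  have := cfcHom_injective (R := ℂ) (a := u) _ hfg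
  ext z
  exact DFunLike.congr_fun this ⟨z, hspec z⟩

lemma mem_spectrum_of_conj_eq_smul [Nontrivial A] {u : A} (hu : u ∈ unitary A)
    (hconj : ∀ z : Circle, ∃ r : Aˣ, r * u * r⁻¹ = (z : ℂ) • u) (z : Circle) :
    (z : ℂ) ∈ spectrum ℂ u := by
  obtain ⟨w, hw⟩ := spectrum.nonempty u
  let w' : Circle := ⟨w, spectrum.subset_circle_of_unitary hu hw⟩
  obtain ⟨r, hr⟩ := hconj (z * w'⁻¹)
  have hrot : spectrum ℂ (Circle.toUnits (z * w'⁻¹) • u) = spectrum ℂ u := by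
    rw [← spectrum.units_conjugate (a := u) (u := r), hr]
    rfl
  rw [← hrot, spectrum.unit_smul_eq_smul, Set.mem_smul_set]
  refine ⟨w, hw, ?_⟩
  change ((z * w'⁻¹ : Circle) : ℂ) * w' = z
  rw [← Circle.coe_mul, inv_mul_cancel_right]

lemma eq_top_of_circleCoord_mem {B : StarSubalgebra ℂ C(Circle, ℂ)}
    (hB : IsClosed (B : Set C(Circle, ℂ))) (hz : circleCoord ∈ B) : B = ⊤ := by
  have hdense : B.topologicalClosure = ⊤ :=
    ContinuousMap.starSubalgebra_topologicalClosure_eq_top_of_separatesPoints _ fun x y hxy ↦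
      ⟨circleCoord, ⟨_, hz, rfl⟩, fun h ↦ hxy (Subtype.ext h)⟩
  rw [← hdense]
  exact SetLike.coe_injective hB.closure_eq.symm

end CircleCalculus

/-! ### Shifts -/

/-- The bilateral shift on `ℓ²(ℤ)`. -/
def bilateralShift : ℓ²(ℤ, ℂ) →L[ℂ] ℓ²(ℤ, ℂ) := reindex (· + 1) (add_left_injective 1)

/-- The unilateral shift on `ℓ²(ℕ)`. -/
def unilateralShift : Hnat →L[ℂ] Hnat := reindex (· + 1) (add_left_injective 1)

/-- The isometric inclusion of `ℓ²(ℕ)`, viewed as the Hardy space, into `ℓ²(ℤ)`. -/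
def hardyIncl : Hnat →L[ℂ] ℓ²(ℤ, ℂ) := reindex Nat.cast Nat.cast_injective

lemma hardyIncl_comp_unilateralShift :
    hardyIncl ∘L unilateralShift = bilateralShift ∘L hardyIncl :=
  ext_hilbertBasis (stdBasis ℕ) fun n ↦ by
    simp [hardyIncl, unilateralShift, bilateralShift, reindex_stdBasis]

lemma bilateralShift_mem_unitary : bilateralShift ∈ unitary (ℓ²(ℤ, ℂ) →L[ℂ] ℓ²(ℤ, ℂ)) := by
  let R : ℓ²(ℤ, ℂ) →L[ℂ] ℓ²(ℤ, ℂ) := reindex (· - 1) sub_left_injective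
  have hleft : star bilateralShift * bilateralShift = 1 := adjoint_comp_reindex _ _
  have hright : bilateralShift * R = 1 :=
    ext_hilbertBasis (stdBasis ℤ) fun n ↦ by
      simp [R, bilateralShift, mul_apply_eq_comp, reindex_stdBasis]
  exact ⟨hleft, by rwa [left_inv_eq_right_inv hleft hright]⟩

/-- The unitary `e n ↦ z ^ n • e n` on `ℓ²(ℤ)`, for `z` on the circle. -/
def rotation (z : Circle) : ℓ²(ℤ, ℂ) →L[ℂ] ℓ²(ℤ, ℂ) :=
  diagonal (fun n ↦ ((z ^ n : Circle) : ℂ)) zero_le_one fun _ ↦ (Circle.norm_coe _).le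

lemma rotation_stdBasis (z : Circle) (n : ℤ) :
    rotation z (stdBasis ℤ n) = ((z ^ n : Circle) : ℂ) • stdBasis ℤ n :=
  diagonal_stdBasis _ _ n

lemma rotation_mul_rotation_inv (z : Circle) : rotation z * rotation z⁻¹ = 1 :=
  ext_hilbertBasis (stdBasis ℤ) fun n ↦ by
    rw [mul_apply_eq_comp, rotation_stdBasis, map_smul, rotation_stdBasis, smul_smul,
      ← Circle.coe_mul, inv_zpow, inv_mul_cancel]
    simp

lemma rotation_mul_bilateralShift (z : Circle) :
    rotation z * bilateralShift * rotation z⁻¹ = (z : ℂ) • bilateralShift :=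
  ext_hilbertBasis (stdBasis ℤ) fun n ↦ by
    simp only [mul_apply_eq_comp, smul_apply, bilateralShift, rotation_stdBasis, map_smul,
      reindex_stdBasis, smul_smul, ← Circle.coe_mul]
    rw [inv_zpow, zpow_add_one, inv_mul_cancel_left]

lemma mem_spectrum_bilateralShift (z : Circle) : (z : ℂ) ∈ spectrum ℂ bilateralShift := by
  have : Nontrivial ℓ²(ℤ, ℂ) := ⟨stdBasis ℤ 0, 0, (stdBasis ℤ).orthonormal.ne_zero 0⟩
  refine mem_spectrum_of_conj_eq_smul bilateralShift_mem_unitary (fun z ↦ ?_) z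
  exact ⟨⟨rotation z, rotation z⁻¹, rotation_mul_rotation_inv z,
    by simpa using rotation_mul_rotation_inv z⁻¹⟩, rotation_mul_bilateralShift z⟩

/-- The multiplication operators on `L²(𝕋) = ℓ²(ℤ)`: the coordinate function acts as the bilateral
shift. -/
def mulOp : C(Circle, ℂ) →⋆ₐ[ℂ] (ℓ²(ℤ, ℂ) →L[ℂ] ℓ²(ℤ, ℂ)) :=
  circleCalculus bilateralShift_mem_unitary

lemma mulOp_circleCoord : mulOp circleCoord = bilateralShift :=
  circleCalculus_circleCoord _

lemma mulOp_injective : Function.Injective mulOp :=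
  circleCalculus_injective _ mem_spectrum_bilateralShift

lemma continuous_mulOp : Continuous mulOp :=
  (NonUnitalStarAlgHom.isometry mulOp mulOp_injective).continuous

/-! ### Intertwining operators -/

section Intertwiners

variable {H K : Type*} [NormedAddCommGroup H] [InnerProductSpace ℂ H]
  [NormedAddCommGroup K] [InnerProductSpace ℂ K]

/-- A space of operators `H → K` that is stable under composition with bounded operators of `H` and
of `K`, such as zero or the compact operators. -/
structure IsOperatorIdeal (P : Submodule ℂ (H →L[ℂ] K)) : Prop where
  comp_mem (S : K →L[ℂ] K) {T : H →L[ℂ] K} (hT : T ∈ P) : S ∘L T ∈ P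
  mem_comp (S : H →L[ℂ] H) {T : H →L[ℂ] K} (hT : T ∈ P) : T ∘L S ∈ P

lemma isOperatorIdeal_bot : IsOperatorIdeal (⊥ : Submodule ℂ (H →L[ℂ] K)) where
  comp_mem S T hT := by simp_all
  mem_comp S T hT := by simp_all

lemma isOperatorIdeal_compactOperator : IsOperatorIdeal (compactOperator (.id ℂ) H K) where
  comp_mem S _ hT := hT.clm_comp S
  mem_comp S _ hT := hT.comp_clm S

variable [CompleteSpace H] [CompleteSpace K] {P : Submodule ℂ (H →L[ℂ] K)}

/-- The pairs `(S, T)` of operators for which `V` intertwines `S` with `T` and `S*` with `T*`,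
modulo the operator ideal `P`. -/
def intertwiners (V : H →L[ℂ] K) (hP : IsOperatorIdeal P) :
    StarSubalgebra ℂ ((K →L[ℂ] K) × (H →L[ℂ] H)) where
  carrier := {p | p.1 ∘L V - V ∘L p.2 ∈ P ∧ star p.1 ∘L V - V ∘L star p.2 ∈ P}
  mul_mem' := by
    have hmul {S S' : K →L[ℂ] K} {T T' : H →L[ℂ] H} (h : S ∘L V - V ∘L T ∈ P)
        (h' : S' ∘L V - V ∘L T' ∈ P) : (S * S') ∘L V - V ∘L (T * T') ∈ P := by
      convert P.add_mem (hP.comp_mem S h') (hP.mem_comp T' h) using 1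
      ext x
      simp [mul_apply_eq_comp]
    rintro p q ⟨hp, hp'⟩ ⟨hq, hq'⟩
    exact ⟨hmul hp hq, by simpa only [Prod.fst_mul, Prod.snd_mul, star_mul] using hmul hq' hp'⟩
  add_mem' := by
    rintro p q ⟨hp, hp'⟩ ⟨hq, hq'⟩
    simp only [Set.mem_ofPred_eq, Prod.fst_add, Prod.snd_add, star_add, add_comp, comp_add,
      add_sub_add_comm]
    exact ⟨P.add_mem hp hq, P.add_mem hp' hq'⟩
  algebraMap_mem' z := by
    constructor
    all_goals
      convert P.zero_mem
      ext x
      simp [Algebra.algebraMap_eq_smul_one]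
  star_mem' := by
    rintro p ⟨hp, hp'⟩
    exact ⟨hp', by simpa using hp⟩

lemma mem_intertwiners {V : H →L[ℂ] K} {hP : IsOperatorIdeal P} {S : K →L[ℂ] K}
    {T : H →L[ℂ] H} : (S, T) ∈ intertwiners V hP ↔
      S ∘L V - V ∘L T ∈ P ∧ star S ∘L V - V ∘L star T ∈ P :=
  Iff.rfl

lemma isClosed_intertwiners (V : H →L[ℂ] K) (hP : IsOperatorIdeal P)
    (hclosed : IsClosed (P : Set (H →L[ℂ] K))) :
    IsClosed (intertwiners V hP : Set ((K →L[ℂ] K) × (H →L[ℂ] H))) := by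
  refine .inter (hclosed.preimage ?_) (hclosed.preimage ?_) <;> fun_prop

end Intertwiners

/-! ### Toeplitz operators and their symbols -/

section Symbol

lemma mem_compactOps {T : Hnat →L[ℂ] Hnat} :
    T ∈ compactOps Hnat ↔ IsCompactOperator T ∧ IsCompactOperator ⇑(star T) :=
  Iff.rfl

/-- The pairs `(T, f)` such that `T` is, modulo compact operators, a Toeplitz operator with
symbol `f`. -/
def symbolGraph : StarSubalgebra ℂ ((Hnat →L[ℂ] Hnat) × C(Circle, ℂ)) :=
  (intertwiners hardyIncl isOperatorIdeal_compactOperator).comap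
    ((mulOp.comp (StarAlgHom.snd ℂ _ _)).prod (StarAlgHom.fst ℂ _ _))

lemma mem_symbolGraph {T : Hnat →L[ℂ] Hnat} {f : C(Circle, ℂ)} : (T, f) ∈ symbolGraph ↔
    IsCompactOperator (mulOp f ∘L hardyIncl - hardyIncl ∘L T) ∧
      IsCompactOperator (star (mulOp f) ∘L hardyIncl - hardyIncl ∘L star T) :=
  Iff.rfl

lemma isClosed_symbolGraph :
    IsClosed (symbolGraph : Set ((Hnat →L[ℂ] Hnat) × C(Circle, ℂ))) :=
  (isClosed_intertwiners hardyIncl isOperatorIdeal_compactOperator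
    isClosed_setOfPred_isCompactOperator).preimage
    ((continuous_mulOp.comp continuous_snd).prodMk continuous_fst)

lemma isCompactOperator_hardyIncl_comp_iff {T : Hnat →L[ℂ] Hnat} :
    IsCompactOperator (hardyIncl ∘L T) ↔ IsCompactOperator T := by
  refine ⟨fun h ↦ ?_, fun h ↦ h.clm_comp hardyIncl⟩
  have := h.clm_comp (adjoint hardyIncl)
  rwa [← coe_comp, ← comp_assoc, hardyIncl, adjoint_comp_reindex] at this

lemma prodMk_zero_mem_symbolGraph {T : Hnat →L[ℂ] Hnat} :
    (T, 0) ∈ symbolGraph ↔ T ∈ compactOps Hnat := by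
  have hneg (S : Hnat →L[ℂ] Hnat) : IsCompactOperator (-(hardyIncl ∘L S)) ↔
      IsCompactOperator S := by
    rw [← isCompactOperator_hardyIncl_comp_iff]
    exact (compactOperator (.id ℂ) Hnat ℓ²(ℤ, ℂ)).neg_mem_iff
  rw [mem_symbolGraph, mem_compactOps, map_zero, star_zero, zero_comp, zero_sub, zero_sub, hneg,
    hneg]

lemma norm_mulOp_stdBasis (f : C(Circle, ℂ)) (n : ℤ) :
    ‖mulOp f (stdBasis ℤ n)‖ = ‖mulOp f (stdBasis ℤ 0)‖ := by
  have hcomm : mulOp f * bilateralShift = bilateralShift * mulOp f := by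
    rw [← mulOp_circleCoord, ← map_mul, mul_comm, map_mul]
  have hsucc (n : ℤ) : ‖mulOp f (stdBasis ℤ (n + 1))‖ = ‖mulOp f (stdBasis ℤ n)‖ := by
    have hshift : bilateralShift (stdBasis ℤ n) = stdBasis ℤ (n + 1) := reindex_stdBasis _ _ n
    rw [← hshift, ← mul_apply_eq_comp, hcomm]
    exact norm_ofOrthonormal ((stdBasis ℤ).orthonormal.comp _ (add_left_injective 1)) _
  induction n with
  | zero => rfl
  | succ n ih => rw [hsucc, ih]
  | pred n ih => rw [← ih, ← hsucc, sub_add_cancel]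

-- `M_f e_n` has constant norm, while a compact operator maps `e_n` to a null sequence.
lemma eq_zero_of_zero_mem_symbolGraph {f : C(Circle, ℂ)} (h : (0, f) ∈ symbolGraph) : f = 0 := by
  have hcompact : IsCompactOperator (mulOp f ∘L hardyIncl) := by
    simpa using (mem_symbolGraph.1 h).1
  have hlim := (tendsto_apply_zero_of_orthonormal (stdBasis ℕ).orthonormal hcompact).norm
  have hnorm (n : ℕ) : ‖(mulOp f ∘L hardyIncl) (stdBasis ℕ n)‖ = ‖mulOp f (stdBasis ℤ 0)‖ := by
    rw [comp_apply, hardyIncl, reindex_stdBasis, norm_mulOp_stdBasis]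
  simp only [hnorm, norm_zero] at hlim
  have hzero := tendsto_nhds_unique tendsto_const_nhds hlim
  refine mulOp_injective <| ext_hilbertBasis (stdBasis ℤ) fun n ↦ ?_
  rw [norm_eq_zero.1 ((norm_mulOp_stdBasis f n).trans hzero), map_zero, zero_apply]

lemma symbol_unique {T : Hnat →L[ℂ] Hnat} {f g : C(Circle, ℂ)} (hf : (T, f) ∈ symbolGraph)
    (hg : (T, g) ∈ symbolGraph) : f = g :=
  sub_eq_zero.1 <| eq_zero_of_zero_mem_symbolGraph <| by simpa using sub_mem hf hg

lemma unilateralShift_stdBasis (n : ℕ) :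
    unilateralShift (stdBasis ℕ n) = stdBasis ℕ (n + 1) :=
  reindex_stdBasis _ _ n

lemma adjoint_bilateralShift_stdBasis (n : ℤ) :
    adjoint bilateralShift (stdBasis ℤ n) = stdBasis ℤ (n - 1) := by
  have hS : bilateralShift (stdBasis ℤ (n - 1)) = stdBasis ℤ n := by
    rw [bilateralShift, reindex_stdBasis, sub_add_cancel]
  rw [← hS, ← comp_apply, bilateralShift, adjoint_comp_reindex, one_apply_eq_self]

lemma unilateralShift_mem_symbolGraph : (unilateralShift, circleCoord) ∈ symbolGraph := by
  rw [mem_symbolGraph, mulOp_circleCoord, hardyIncl_comp_unilateralShift, sub_self]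
  refine ⟨isCompactOperator_zero, ?_⟩
  suffices star bilateralShift ∘L hardyIncl - hardyIncl ∘L star unilateralShift =
      rankOne ℂ (stdBasis ℤ (-1)) (stdBasis ℕ 0) by
    rw [this]
    exact isCompactOperator_rankOne _ _
  have hV : ∀ n, unilateralShift (stdBasis ℕ n) = (1 : ℂ) • stdBasis ℕ (n + 1) := by
    simp [unilateralShift_stdBasis]
  refine ext_hilbertBasis (stdBasis ℕ) fun n ↦ ?_
  rcases n with _ | n
  · simp [hardyIncl, reindex_stdBasis, star_eq_adjoint, adjoint_bilateralShift_stdBasis,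
      adjoint_apply_zero_of_weightedShift hV, (stdBasis ℕ).orthonormal.norm_eq_one]
  · simp [hardyIncl, reindex_stdBasis, star_eq_adjoint, adjoint_bilateralShift_stdBasis,
      inner_eq_ite, adjoint_apply_succ_of_weightedShift hV]

section Coefficients

variable {T : Hnat →L[ℂ] Hnat} {d : ℕ → ℂ} {z : ℂ}

lemma mem_symbolGraph_of_diagonal (hT : ∀ n, T (stdBasis ℕ n) = d n • stdBasis ℕ n)
    (hd : Tendsto d cofinite (𝓝 z)) : (T, z • 1) ∈ symbolGraph := by
  have hdiag (n : ℕ) : (T - z • 1) (stdBasis ℕ n) = (d n - z) • stdBasis ℕ n := by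
    simp [hT, sub_smul]
  have hlim : Tendsto (fun n ↦ d n - z) cofinite (𝓝 0) := by simpa using hd.sub_const z
  have hcompact : T - z • 1 ∈ compactOps Hnat :=
    ⟨isCompactOperator_of_diagonal hdiag hlim,
      isCompactOperator_of_diagonal (adjoint_apply_of_diagonal hdiag) (by simpa using hlim.star)⟩
  have hconst := symbolGraph.smul_mem symbolGraph.one_mem z
  convert add_mem (prodMk_zero_mem_symbolGraph.2 hcompact) hconst using 1
  ext1 <;> simp

lemma mem_symbolGraph_of_weightedShift
    (hT : ∀ n, T (stdBasis ℕ n) = d n • stdBasis ℕ (n + 1))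
    (hd : Tendsto d cofinite (𝓝 z)) : (T, z • circleCoord) ∈ symbolGraph := by
  have hV : adjoint unilateralShift ∘L unilateralShift = 1 := adjoint_comp_reindex _ _
  have hdiag (n : ℕ) : (adjoint unilateralShift ∘L T) (stdBasis ℕ n) = d n • stdBasis ℕ n := by
    rw [comp_apply, hT, map_smul, ← unilateralShift_stdBasis, ← comp_apply, hV, one_apply_eq_self]
  convert mul_mem unilateralShift_mem_symbolGraph (mem_symbolGraph_of_diagonal hdiag hd) using 1
  ext1
  · refine ext_hilbertBasis (stdBasis ℕ) fun n ↦ ?_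
    rw [Prod.fst_mul, mul_apply_eq_comp, hdiag, map_smul, unilateralShift_stdBasis, hT]
  · simp

end Coefficients

/-- The Toeplitz operator with symbol `f`. -/
def toeplitz (f : C(Circle, ℂ)) : Hnat →L[ℂ] Hnat :=
  adjoint hardyIncl ∘L mulOp f ∘L hardyIncl

lemma continuous_toeplitz : Continuous toeplitz := by
  have := continuous_mulOp
  unfold toeplitz
  fun_prop

lemma sub_toeplitz_mem_compactOps {T : Hnat →L[ℂ] Hnat} {f : C(Circle, ℂ)}
    (h : (T, f) ∈ symbolGraph) : T - toeplitz f ∈ compactOps Hnat := by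
  have hj (T : Hnat →L[ℂ] Hnat) : adjoint hardyIncl ∘L hardyIncl ∘L T = T := by
    rw [← comp_assoc, hardyIncl, adjoint_comp_reindex]
    rfl
  obtain ⟨h₁, h₂⟩ := mem_symbolGraph.1 h
  rw [← neg_mem_iff]
  have hcompact := h₁.clm_comp (adjoint hardyIncl)
  have hcompact_star := h₂.clm_comp (adjoint hardyIncl)
  rw [← coe_comp, comp_sub, hj] at hcompact hcompact_star
  rw [neg_sub]
  refine ⟨hcompact, ?_⟩
  rwa [star_sub, toeplitz, star_eq_adjoint, adjoint_comp, adjoint_comp, adjoint_adjoint,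
    comp_assoc]

lemma toeplitz_mem_symbolGraph (f : C(Circle, ℂ)) : (toeplitz f, f) ∈ symbolGraph := by
  have hiff (f) : f ∈ symbolGraph.map (StarAlgHom.snd ℂ _ _) ↔ (toeplitz f, f) ∈ symbolGraph := by
    refine ⟨?_, fun h ↦ ⟨_, h, rfl⟩⟩
    rintro ⟨⟨T, f⟩, h, rfl⟩
    have hsub := prodMk_zero_mem_symbolGraph.2 (sub_toeplitz_mem_compactOps h)
    have := sub_mem (show (T, f) ∈ symbolGraph from h) hsub
    rwa [Prod.mk_sub_mk, sub_sub_cancel, sub_zero] at this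
  have hclosed : IsClosed (symbolGraph.map (StarAlgHom.snd ℂ _ _) : Set C(Circle, ℂ)) := by
    convert isClosed_symbolGraph.preimage (continuous_toeplitz.prodMk continuous_id)
    ext f
    exact hiff f
  have htop := eq_top_of_circleCoord_mem hclosed ⟨_, unilateralShift_mem_symbolGraph, rfl⟩
  exact (hiff f).1 (htop ▸ StarSubalgebra.mem_top)

end Symbol

/-! ### Star homomorphisms of C*-algebras given by their graphs -/

section Graph

variable {A B : Type*} [CStarAlgebra A] [CStarAlgebra B]

lemma isClosed_range_of_injective {S : StarSubalgebra ℂ A} (hS : IsClosed (S : Set A))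
    {φ : S →⋆ₐ[ℂ] B} (hφ : Function.Injective φ) : IsClosed (φ.range : Set B) :=
  let : CStarAlgebra S := StarSubalgebra.cstarAlgebra S (h_closed := hS)
  (NonUnitalStarAlgHom.isometry φ hφ).isClosedEmbedding.isClosed_range

lemma exists_starAlgHom_of_graph {D : StarSubalgebra ℂ (A × B)} (hD : IsClosed (D : Set (A × B)))
    (hzero : ∀ b, (0, b) ∈ D → b = 0) {s : Set A} (hs : ∀ a ∈ s, ∃ b, (a, b) ∈ D) :
    ∃ Φ : (StarAlgebra.adjoin ℂ s).topologicalClosure →⋆ₐ[ℂ] B,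
      ∀ a : (StarAlgebra.adjoin ℂ s).topologicalClosure, ((a : A), Φ a) ∈ D := by
  let π : D →⋆ₐ[ℂ] A := (StarAlgHom.fst ℂ A B).comp D.subtype
  have hπ : Function.Injective π := by
    refine (injective_iff_map_eq_zero π).2 fun p hp ↦ ?_
    obtain ⟨⟨a, b⟩, hab⟩ := p
    obtain rfl : a = 0 := hp
    exact Subtype.ext (Prod.ext rfl (hzero b hab))
  have hle : (StarAlgebra.adjoin ℂ s).topologicalClosure ≤ π.range := by
    refine StarSubalgebra.topologicalClosure_minimal (StarAlgebra.adjoin_le fun a ha ↦ ?_)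
      (isClosed_range_of_injective hD hπ)
    obtain ⟨b, hab⟩ := hs a ha
    exact ⟨⟨(a, b), hab⟩, rfl⟩
  let section_π := (StarAlgEquiv.ofInjective π hπ).symm.toStarAlgHom.comp
    (StarSubalgebra.inclusion hle)
  refine ⟨((StarAlgHom.snd ℂ A B).comp D.subtype).comp section_π, fun a ↦ ?_⟩
  have hfst : π (section_π a) = a :=
    congr_arg Subtype.val ((StarAlgEquiv.ofInjective π hπ).apply_symm_apply ⟨a, hle a.2⟩)
  rw [← hfst]
  exact (section_π a).2

end Graph

/-! ### The relations of the Podleś sphere -/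

section PodlesPair

variable {H : Type*} [NormedAddCommGroup H] [InnerProductSpace ℂ H] [CompleteSpace H]

lemma norm_apply_sq_of_adjoint_apply {T : H →L[ℂ] H} {f : H} {r : ℝ}
    (h : adjoint T (T f) = (r : ℂ) • f) : ‖T f‖ ^ 2 = r * ‖f‖ ^ 2 := by
  rw [apply_norm_sq_eq_inner_adjoint_left, comp_apply, h, inner_smul_left, Complex.conj_ofReal,
    RCLike.re_to_complex, Complex.re_ofReal_mul, ← RCLike.re_to_complex, ← norm_sq_eq_re_inner]

lemma eq_zero_of_adjoint_apply_eq_zero {T : H →L[ℂ] H} {f : H} (h : adjoint T (T f) = 0) :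
    T f = 0 := by
  have hsq := norm_apply_sq_of_adjoint_apply (T := T) (f := f) (r := 0) (by simpa using h)
  simpa using hsq

/-- The relations between the coordinates `x, y` of the quantum projective line, where `ν = q⁻²`.
The Podleś sphere is generated by `x* x`, `x* y` and `y* y`; the operator `x* x - c` has eigenvalue
`l` on `f` if `x* x f = (c + l) f`. -/
structure IsPodlesPair (ν c : ℝ) (x y : H →L[ℂ] H) : Prop where
  add_adjoint (f : H) : x (adjoint x f) + y (adjoint y f) = (1 + c : ℂ) • f
  adjoint_add (f : H) : adjoint y (y f) + (ν : ℂ) • adjoint x (x f) = (1 + ν * c : ℂ) • f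

namespace IsPodlesPair

variable {ν c l : ℝ} {x y : H →L[ℂ] H} {f : H}

lemma adjoint_right_apply (h : IsPodlesPair ν c x y)
    (hf : adjoint x (x f) = (c + l : ℂ) • f) : adjoint y (y f) = (1 - ν * l : ℂ) • f := by
  rw [eq_sub_of_add_eq (h.adjoint_add f), hf]
  module

lemma raise_lower (h : IsPodlesPair ν c x y) (hf : adjoint x (x f) = (c + l : ℂ) • f) :
    adjoint x (y (adjoint y (x f))) = ((c + l) * (1 - l) : ℂ) • f := by
  rw [eq_sub_of_add_eq' (h.add_adjoint (x f)), hf, map_sub, map_smul, map_smul, map_smul, hf]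
  module

lemma lower_raise (h : IsPodlesPair ν c x y) (hf : adjoint x (x f) = (c + l : ℂ) • f) :
    adjoint y (x (adjoint x (y f))) = ((1 - ν * l) * (c + ν * l) : ℂ) • f := by
  rw [eq_sub_of_add_eq (h.add_adjoint (y f)), h.adjoint_right_apply hf, map_sub, map_smul,
    map_smul, map_smul, h.adjoint_right_apply hf]
  module

lemma apply_raise (h : IsPodlesPair ν c x y) (hf : adjoint x (x f) = (c + l : ℂ) • f) :
    adjoint x (x (adjoint x (y f))) = (c + ν * l : ℂ) • adjoint x (y f) := by
  rw [eq_sub_of_add_eq (h.add_adjoint (y f)), h.adjoint_right_apply hf, map_sub, map_smul,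
    map_smul, map_smul]
  module

lemma apply_lower (h : IsPodlesPair ν c x y) (hν : ν ≠ 0)
    (hf : adjoint x (x f) = (c + l : ℂ) • f) :
    adjoint x (x (adjoint y (x f))) = (c + (l / ν : ℝ) : ℂ) • adjoint y (x f) := by
  have hνC : (ν : ℂ) ≠ 0 := by exact_mod_cast hν
  have hy : adjoint y (y (adjoint y (x f))) = (1 - l : ℂ) • adjoint y (x f) := by
    rw [eq_sub_of_add_eq' (h.add_adjoint (x f)), hf, map_sub, map_smul, map_smul, map_smul]
    module
  refine smul_right_injective H hνC ?_
  beta_reduce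
  rw [eq_sub_of_add_eq' (h.adjoint_add _), hy, smul_smul]
  push_cast
  rw [mul_add, mul_div_cancel₀ _ hνC]
  module

lemma norm_lower_sq (h : IsPodlesPair ν c x y) (hf : adjoint x (x f) = (c + l : ℂ) • f) :
    ‖adjoint y (x f)‖ ^ 2 = (c + l) * (1 - l) * ‖f‖ ^ 2 := by
  refine norm_apply_sq_of_adjoint_apply (T := adjoint y ∘L x) ?_
  rw [adjoint_comp, adjoint_adjoint, comp_apply, comp_apply, h.raise_lower hf]
  push_cast
  rfl

lemma norm_raise_sq (h : IsPodlesPair ν c x y) (hf : adjoint x (x f) = (c + l : ℂ) • f) :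
    ‖adjoint x (y f)‖ ^ 2 = (1 - ν * l) * (c + ν * l) * ‖f‖ ^ 2 := by
  refine norm_apply_sq_of_adjoint_apply (T := adjoint x ∘L y) ?_
  rw [adjoint_comp, adjoint_adjoint, comp_apply, comp_apply, h.lower_raise hf]
  push_cast
  rfl

lemma lower_eq_zero (h : IsPodlesPair ν c x y) (hl : l = 1 ∨ l = -c)
    (hf : adjoint x (x f) = (c + l : ℂ) • f) : adjoint y (x f) = 0 := by
  have hzero : (c + l) * (1 - l) = 0 := by rcases hl with rfl | rfl <;> ring
  simpa [hzero] using h.norm_lower_sq hf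

lemma eigenspace_neg_eq_ker {u : H} (hu : ∀ f, x f = 0 ↔ f ∈ ℂ ∙ u) (f : H) :
    adjoint x (x f) = (c + (-c : ℝ) : ℂ) • f ↔ f ∈ ℂ ∙ u := by
  have hzero : (c + (-c : ℝ) : ℂ) = 0 := by simp
  rw [← hu, hzero, zero_smul]
  exact ⟨eq_zero_of_adjoint_apply_eq_zero, fun hf ↦ by rw [hf, map_zero]⟩

lemma apply_adjoint_of_ker (h : IsPodlesPair ν c x y) (hf : adjoint y f = 0) :
    x (adjoint x f) = (1 + c : ℂ) • f := by
  simpa [hf] using h.add_adjoint f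

lemma eigenspace_one_eq_adjoint_ker (h : IsPodlesPair ν c x y) (hc : 0 < c) {u : H}
    (hu : ∀ f, adjoint y f = 0 ↔ f ∈ ℂ ∙ u) (f : H) :
    adjoint x (x f) = (c + (1 : ℝ) : ℂ) • f ↔ f ∈ ℂ ∙ adjoint x u := by
  have hc₁ : (c + (1 : ℝ) : ℂ) ≠ 0 := by exact_mod_cast (by positivity : c + 1 ≠ 0)
  simp only [Submodule.mem_span_singleton] at hu ⊢
  constructor
  · intro hf
    obtain ⟨z, hz⟩ := (hu (x f)).1 (h.lower_eq_zero (.inl rfl) hf)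
    refine ⟨(c + (1 : ℝ) : ℂ)⁻¹ * z, ?_⟩
    rw [mul_smul, ← map_smul, hz, hf, inv_smul_smul₀ hc₁]
  · rintro ⟨z, rfl⟩
    rw [← map_smul, h.apply_adjoint_of_ker ((hu _).2 ⟨z, rfl⟩), map_smul, Complex.ofReal_one,
      add_comm]

end IsPodlesPair

/-! ### Chains of eigenvectors -/

/-- The weights of the shift `x* y` along a chain of eigenvectors of `x* x - c` that starts with
the eigenvalue `l`. -/
def weight (ν c l : ℝ) (n : ℕ) : ℝ := √((1 - l * ν ^ (n + 1)) * (c + l * ν ^ (n + 1)))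

section Weight

variable {ν c l : ℝ}

lemma weight_arg_pos (hν : ν ∈ Set.Ioo 0 1) (hc : 0 < c) (hl : l = 1 ∨ l = -c) (n : ℕ) :
    0 < (1 - l * ν ^ (n + 1)) * (c + l * ν ^ (n + 1)) := by
  have hpos : 0 < ν ^ (n + 1) := pow_pos hν.1 _
  have hlt : 0 < 1 - ν ^ (n + 1) := sub_pos.2 (pow_lt_one₀ hν.1.le hν.2 n.succ_ne_zero)
  rcases hl with rfl | rfl
  · rw [one_mul]
    positivity
  · rw [show (1 - -c * ν ^ (n + 1)) * (c + -c * ν ^ (n + 1)) =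
      (1 + c * ν ^ (n + 1)) * (c * (1 - ν ^ (n + 1))) by ring]
    positivity

lemma weight_pos (hν : ν ∈ Set.Ioo 0 1) (hc : 0 < c) (hl : l = 1 ∨ l = -c) (n : ℕ) :
    0 < weight ν c l n :=
  Real.sqrt_pos.2 (weight_arg_pos hν hc hl n)

lemma weight_sq (hν : ν ∈ Set.Ioo 0 1) (hc : 0 < c) (hl : l = 1 ∨ l = -c) (n : ℕ) :
    weight ν c l n ^ 2 = (1 - l * ν ^ (n + 1)) * (c + l * ν ^ (n + 1)) :=
  Real.sq_sqrt (weight_arg_pos hν hc hl n).le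

lemma tendsto_mul_pow_zero (hν : ν ∈ Set.Ioo 0 1) (l : ℝ) :
    Tendsto (fun n : ℕ ↦ l * ν ^ n) atTop (𝓝 0) := by
  simpa using (tendsto_pow_atTop_nhds_zero_of_lt_one hν.1.le hν.2).const_mul l

lemma tendsto_weight (hν : ν ∈ Set.Ioo 0 1) (c l : ℝ) :
    Tendsto (weight ν c l) atTop (𝓝 √c) := by
  have h := (tendsto_mul_pow_zero hν l).comp (tendsto_add_atTop_nat 1)
  have hsqrt := ((h.const_sub 1).mul (h.const_add c)).sqrt
  rwa [sub_zero, add_zero, one_mul] at hsqrt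

end Weight

/-- A sequence of unit eigenvectors of `x* x - c` with eigenvalues `l ν ^ n`, along which `x* y`
acts as a weighted shift. -/
structure IsChain (ν c l : ℝ) (x y : H →L[ℂ] H) (w : ℕ → H) : Prop where
  norm_eq_one (n : ℕ) : ‖w n‖ = 1
  eigen (n : ℕ) : adjoint x (x (w n)) = (c + (l * ν ^ n : ℝ) : ℂ) • w n
  raise (n : ℕ) : adjoint x (y (w n)) = (weight ν c l n : ℂ) • w (n + 1)

namespace IsChain

variable {ν c l : ℝ} {x y : H →L[ℂ] H} {w : ℕ → H}

lemma adjoint_right (hw : IsChain ν c l x y w) (h : IsPodlesPair ν c x y) (n : ℕ) :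
    adjoint y (y (w n)) = (1 - (l * ν ^ (n + 1) : ℝ) : ℂ) • w n := by
  rw [h.adjoint_right_apply (hw.eigen n)]
  push_cast
  congr 1
  ring

lemma lower_zero (hw : IsChain ν c l x y w) (h : IsPodlesPair ν c x y) (hl : l = 1 ∨ l = -c) :
    adjoint y (x (w 0)) = 0 :=
  h.lower_eq_zero hl (by simpa using hw.eigen 0)

lemma lower_raise (h : IsPodlesPair ν c x y) (hν : ν ∈ Set.Ioo 0 1) (hc : 0 < c)
    (hl : l = 1 ∨ l = -c) {f : H} {n : ℕ}
    (hf : adjoint x (x f) = (c + (l * ν ^ n : ℝ) : ℂ) • f) :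
    adjoint y (x (adjoint x (y f))) = (weight ν c l n : ℂ) ^ 2 • f := by
  rw [h.lower_raise hf]
  norm_cast
  rw [weight_sq hν hc hl, pow_succ', mul_left_comm]

lemma lower_succ (hw : IsChain ν c l x y w) (h : IsPodlesPair ν c x y) (hν : ν ∈ Set.Ioo 0 1)
    (hc : 0 < c) (hl : l = 1 ∨ l = -c) (n : ℕ) :
    adjoint y (x (w (n + 1))) = (weight ν c l n : ℂ) • w n := by
  have hβ : (weight ν c l n : ℂ) ≠ 0 := by exact_mod_cast (weight_pos hν hc hl n).ne'
  refine smul_right_injective H hβ ?_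
  beta_reduce
  rw [← map_smul, ← map_smul, ← hw.raise, lower_raise h hν hc hl (hw.eigen n), sq, mul_smul]

end IsChain

namespace IsPodlesPair

variable {ν c l : ℝ} {x y : H →L[ℂ] H}

lemma exists_isChain_of_norm_eq_one (h : IsPodlesPair ν c x y) (hν : ν ∈ Set.Ioo 0 1) (hc : 0 < c)
    (hl : l = 1 ∨ l = -c) {u : H} (hu : ‖u‖ = 1) (hxu : adjoint x (x u) = (c + l : ℂ) • u) :
    ∃ w, IsChain ν c l x y w ∧ w 0 = u := by
  let w : ℕ → H := Nat.rec u fun n v ↦ (weight ν c l n : ℂ)⁻¹ • adjoint x (y v)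
  have hw (n : ℕ) : w (n + 1) = (weight ν c l n : ℂ)⁻¹ • adjoint x (y (w n)) := rfl
  have heigen (n : ℕ) : adjoint x (x (w n)) = (c + (l * ν ^ n : ℝ) : ℂ) • w n := by
    induction n with
    | zero => simpa [w] using hxu
    | succ n ih =>
      rw [hw, map_smul, map_smul, h.apply_raise ih, smul_comm]
      congr 2
      push_cast
      ring
  refine ⟨w, ⟨fun n ↦ ?_, heigen, fun n ↦ ?_⟩, rfl⟩
  · induction n with
    | zero => exact hu
    | succ n ih =>
      have hβ := weight_pos hν hc hl n
      have hsq := h.norm_raise_sq (heigen n)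
      rw [ih, one_pow, mul_one, mul_left_comm, ← pow_succ', ← weight_sq hν hc hl,
        sq_eq_sq₀ (norm_nonneg _) hβ.le] at hsq
      rw [hw, norm_smul, hsq, norm_inv, Complex.norm_of_nonneg hβ.le, inv_mul_cancel₀ hβ.ne']
  · have hβ : (weight ν c l n : ℂ) ≠ 0 := by exact_mod_cast (weight_pos hν hc hl n).ne'
    rw [hw, smul_inv_smul₀ hβ]

lemma exists_isChain (h : IsPodlesPair ν c x y) (hν : ν ∈ Set.Ioo 0 1) (hc : 0 < c)
    (hl : l = 1 ∨ l = -c) {u : H} (hu : u ≠ 0)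
    (heigen : ∀ f, adjoint x (x f) = (c + l : ℂ) • f ↔ f ∈ ℂ ∙ u) :
    ∃ w, IsChain ν c l x y w ∧ ∀ f, adjoint x (x f) = (c + l : ℂ) • f → f ∈ ℂ ∙ w 0 := by
  have hnorm : (‖u‖ : ℂ) ≠ 0 := by exact_mod_cast norm_ne_zero_iff.2 hu
  have hspan : (ℂ ∙ ((‖u‖ : ℂ)⁻¹ • u)) = ℂ ∙ u :=
    Submodule.span_singleton_smul_eq (inv_ne_zero hnorm).isUnit u
  obtain ⟨w, hw, hw₀⟩ := h.exists_isChain_of_norm_eq_one hν hc hl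
    (norm_smul_inv_norm (𝕜 := ℂ) hu) ((heigen _).2 (hspan ▸ Submodule.mem_span_singleton_self _))
  refine ⟨w, hw, fun f hf ↦ ?_⟩
  rw [hw₀, RCLike.ofReal_eq_complex_ofReal, hspan]
  exact (heigen f).1 hf

end IsPodlesPair

end PodlesPair

/-! ### Totality of the eigenvector chains -/

section Total

variable {H : Type*} [NormedAddCommGroup H] [InnerProductSpace ℂ H] [CompleteSpace H]
  {ν c : ℝ} {x y : H →L[ℂ] H}

namespace IsPodlesPair

lemma mem_Icc_of_eigenvector (h : IsPodlesPair ν c x y) (hc : 0 ≤ c) {l : ℝ} {f : H} (hf : f ≠ 0)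
    (hl : adjoint x (x f) = (c + l : ℂ) • f) : l ∈ Set.Icc (-c) 1 := by
  have hprod : 0 ≤ (c + l) * (1 - l) :=
    nonneg_of_mul_nonneg_left ((sq_nonneg _).trans_eq (h.norm_lower_sq hl))
      (by positivity)
  constructor <;> nlinarith

-- If `l ≠ 1, -c`, then `f` is a multiple of `x* y (y* x f)`, where `y* x f` has eigenvalue `l / ν`.
-- This can be iterated only until the eigenvalue leaves the interval `[-c, 1]`.
lemma mem_of_eigenvector (h : IsPodlesPair ν c x y) (hν : ν ∈ Set.Ioo 0 1) (hc : 0 < c)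
    {U : Submodule ℂ H} (hU : ∀ f ∈ U, adjoint x (y f) ∈ U)
    (hstart : ∀ l : ℝ, l = 1 ∨ l = -c → ∀ f, adjoint x (x f) = (c + l : ℂ) • f → f ∈ U)
    {l : ℝ} (hl : l ≠ 0) {f : H} (hf : adjoint x (x f) = (c + l : ℂ) • f) : f ∈ U := by
  have key (N : ℕ) : ∀ (l : ℝ) (f : H), (1 + c) * ν ^ N < |l| →
      adjoint x (x f) = (c + l : ℂ) • f → f ∈ U := by
    induction N with
    | zero =>
      intro l f hl hf
      suffices f = 0 from this ▸ U.zero_mem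
      by_contra hf₀
      obtain ⟨hcl, hl₁⟩ := h.mem_Icc_of_eigenvector hc.le hf₀ hf
      rw [pow_zero, mul_one] at hl
      exact hl.not_ge (abs_le.2 ⟨by linarith, by linarith⟩)
    | succ N ih =>
      intro l f hl hf
      by_cases hl' : l = 1 ∨ l = -c
      · exact hstart l hl' f hf
      have hne : ((c + l) * (1 - l) : ℂ) ≠ 0 := by
        rw [not_or] at hl'
        norm_cast
        exact mul_ne_zero (fun h ↦ hl'.2 (by linarith)) (fun h ↦ hl'.1 (by linarith))
      have hlower : adjoint y (x f) ∈ U := by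
        refine ih (l / ν) _ ?_ (h.apply_lower hν.1.ne' hf)
        rwa [abs_div, abs_of_pos hν.1, lt_div_iff₀ hν.1, mul_assoc, ← pow_succ]
      rw [← U.smul_mem_iff hne, ← h.raise_lower hf]
      exact hU _ hlower
  have hpos : 0 < |l| / (1 + c) := by positivity
  obtain ⟨N, hN⟩ := exists_pow_lt_of_lt_one hpos hν.2
  exact key N l f ((lt_div_iff₀' (by positivity)).1 hN) hf

lemma orthogonal_eq_bot (h : IsPodlesPair ν c x y) (hν : ν ∈ Set.Ioo 0 1) (hc : 0 < c)
    (hcompact : IsCompactOperator (adjoint x ∘L x - (c : ℂ) • 1 : H →L[ℂ] H))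
    (hker : ∀ f, adjoint x (x f) = (c : ℂ) • f → f = 0)
    {U : Submodule ℂ H} (hU : ∀ f ∈ U, adjoint x (y f) ∈ U)
    (hstart : ∀ l : ℝ, l = 1 ∨ l = -c → ∀ f, adjoint x (x f) = (c + l : ℂ) • f → f ∈ U) :
    Uᗮ = ⊥ := by
  have hsymm : ((adjoint x ∘L x - (c : ℂ) • 1 : H →L[ℂ] H) : H →ₗ[ℂ] H).IsSymmetric := by
    rw [← isSelfAdjoint_iff_isSymmetric]
    have hreal : IsSelfAdjoint (c : ℂ) := Complex.conj_ofReal c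
    exact (IsSelfAdjoint.star_mul_self x).sub (hreal.smul (IsSelfAdjoint.one _))
  refine eq_bot_iff.2 ?_
  rw [← orthogonalComplement_iSup_eigenspaces_eq_bot hcompact hsymm]
  refine Submodule.orthogonal_le (iSup_le fun z f hf ↦ ?_)
  obtain rfl | hf₀ := eq_or_ne f 0
  · exact U.zero_mem
  have hz : (adjoint x ∘L x - (c : ℂ) • 1 : H →L[ℂ] H) f = z • f :=
    Module.End.mem_eigenspace_iff.1 hf
  obtain ⟨l, rfl⟩ : ∃ l : ℝ, z = l := Complex.conj_eq_iff_real.1 <|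
    hsymm.conj_eigenvalue_eq_self (Module.End.hasEigenvalue_of_hasEigenvector ⟨hf, hf₀⟩)
  have heigen : adjoint x (x f) = (c + l : ℂ) • f := by
    rw [add_smul, ← hz]
    simp
  refine h.mem_of_eigenvector hν hc hU hstart (fun hl ↦ hf₀ (hker f ?_)) heigen
  simpa [hl] using heigen

lemma eq_zero_of_inner_chain_eq_zero (h : IsPodlesPair ν c x y) (hν : ν ∈ Set.Ioo 0 1) (hc : 0 < c)
    (hcompact : IsCompactOperator (adjoint x ∘L x - (c : ℂ) • 1 : H →L[ℂ] H))
    (hker : ∀ f, adjoint x (x f) = (c : ℂ) • f → f = 0)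
    {w w' : ℕ → H} (hw : IsChain ν c 1 x y w) (hw' : IsChain ν c (-c) x y w')
    (hspan : ∀ f, adjoint x (x f) = (c + (1 : ℝ) : ℂ) • f → f ∈ ℂ ∙ w 0)
    (hspan' : ∀ f, adjoint x (x f) = (c + (-c : ℝ) : ℂ) • f → f ∈ ℂ ∙ w' 0)
    {u : H} (hu : ∀ n, inner ℂ (w n) u = 0) (hu' : ∀ n, inner ℂ (w' n) u = 0) : u = 0 := by
  let U := Submodule.span ℂ (Set.range w ∪ Set.range w')
  have hmem (n : ℕ) : w n ∈ U := Submodule.subset_span (.inl ⟨n, rfl⟩)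
  have hmem' (n : ℕ) : w' n ∈ U := Submodule.subset_span (.inr ⟨n, rfl⟩)
  have hstable : U ≤ U.comap (adjoint x ∘L y : H →L[ℂ] H).toLinearMap := by
    refine Submodule.span_le.2 (Set.union_subset ?_ ?_) <;> rintro _ ⟨n, rfl⟩
    · change adjoint x (y (w n)) ∈ U
      exact hw.raise n ▸ U.smul_mem _ (hmem (n + 1))
    · change adjoint x (y (w' n)) ∈ U
      exact hw'.raise n ▸ U.smul_mem _ (hmem' (n + 1))
  have hU : Uᗮ = ⊥ := by
    refine h.orthogonal_eq_bot hν hc hcompact hker (fun f hf ↦ hstable hf) ?_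
    rintro l (rfl | rfl) f hf
    · exact (Submodule.span_singleton_le_iff_mem _ _).2 (hmem 0) (hspan f hf)
    · exact (Submodule.span_singleton_le_iff_mem _ _).2 (hmem' 0) (hspan' f hf)
  have horth : U ≤ (ℂ ∙ u)ᗮ := by
    refine Submodule.span_le.2 (Set.union_subset ?_ ?_) <;> rintro _ ⟨n, rfl⟩
    · exact Submodule.mem_orthogonal_singleton_iff_inner_left.2 (hu n)
    · exact Submodule.mem_orthogonal_singleton_iff_inner_left.2 (hu' n)
  have huU : u ∈ Uᗮ := (Submodule.mem_orthogonal _ _).2 fun v hv ↦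
    Submodule.mem_orthogonal_singleton_iff_inner_left.1 (horth hv)
  rwa [hU, Submodule.mem_bot] at huU

lemma mul_norm_inner_of_eigenvector (h : IsPodlesPair ν c x y) (hc : 0 ≤ c) {e : H} {z : ℂ}
    (he : adjoint y (x e) = z • e) {f : H} (hf : adjoint x (x f) = (c : ℂ) • f) :
    c * ‖inner ℂ e f‖ = ‖z‖ * ‖inner ℂ e (adjoint y (x f))‖ := by
  have hf₀ : adjoint x (x f) = (c + (0 : ℝ) : ℂ) • f := by simpa using hf
  have hinner : (c : ℂ) * inner ℂ e f = star z * inner ℂ e (adjoint y (x f)) := by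
    rw [RCLike.star_def, ← inner_smul_left, ← he, adjoint_inner_left, ← adjoint_inner_right,
      h.raise_lower hf₀, inner_smul_right]
    simp
  simpa [abs_of_nonneg hc] using congrArg norm hinner

-- On the kernel of `x* x - c` the operator `c⁻¹ᐟ² y* x` is unitary, which makes `e` orthogonal to
-- the kernel if `e` is an eigenvector of `y* x` whose eigenvalue is too small.
lemma inner_eq_zero_of_eigenvector (h : IsPodlesPair ν c x y) (hν : ν ≠ 0) (hc : 0 < c) {e : H}
    {z : ℂ} (he : adjoint y (x e) = z • e) (hz : ‖z‖ < √c) {f : H}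
    (hf : adjoint x (x f) = (c : ℂ) • f) : inner ℂ e f = 0 := by
  have hsc : 0 < √c := Real.sqrt_pos.2 hc
  have bound (N : ℕ) : ∀ f, adjoint x (x f) = (c : ℂ) • f →
      ‖inner ℂ e f‖ ≤ (‖z‖ / √c) ^ N * (‖e‖ * ‖f‖) := by
    induction N with
    | zero => simpa using fun f _ ↦ norm_inner_le_norm e f
    | succ N ih =>
      intro f hf
      have hf₀ : adjoint x (x f) = (c + (0 : ℝ) : ℂ) • f := by simpa using hf
      have hlower := ih _ (by simpa using h.apply_lower hν hf₀)
      have hnorm : ‖adjoint y (x f)‖ = √c * ‖f‖ := by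
        rw [← sq_eq_sq₀ (norm_nonneg _) (by positivity), h.norm_lower_sq hf₀, mul_pow,
          Real.sq_sqrt hc.le]
        ring
      rw [← mul_le_mul_iff_right₀ hc, h.mul_norm_inner_of_eigenvector hc.le he hf]
      calc ‖z‖ * ‖inner ℂ e (adjoint y (x f))‖
          ≤ ‖z‖ * ((‖z‖ / √c) ^ N * (‖e‖ * (√c * ‖f‖))) := by
            rw [← hnorm]
            gcongr
        _ = √c * √c * ((‖z‖ / √c) ^ (N + 1) * (‖e‖ * ‖f‖)) := by
            rw [pow_succ]
            field_simp
        _ = c * ((‖z‖ / √c) ^ (N + 1) * (‖e‖ * ‖f‖)) := by rw [Real.mul_self_sqrt hc.le]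
  have hlim := (tendsto_pow_atTop_nhds_zero_of_lt_one (by positivity)
    ((div_lt_one hsc).2 hz)).mul_const (‖e‖ * ‖f‖)
  rw [zero_mul] at hlim
  exact norm_le_zero_iff.1 (ge_of_tendsto' hlim fun N ↦ bound N f hf)

end IsPodlesPair

end Total

/-! ### The quantum projective line on `ℓ²(ℕ)` -/

section ConcretePair

/-- The weights `(1 - μ ^ (2 (j + 1)))¹ᐟ²` of the weighted shift `α*`, where `μ = q⁻¹`. -/
def alphaWeight (μ : ℝ) (j : ℕ) : ℝ := √(1 - μ ^ (2 * (j + 1)))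

variable {μ c : ℝ}

lemma alphaWeight_arg_pos (hμ : μ ∈ Set.Ioo 0 1) (j : ℕ) : 0 < 1 - μ ^ (2 * (j + 1)) :=
  sub_pos.2 (pow_lt_one₀ hμ.1.le hμ.2 (by positivity))

lemma alphaWeight_pos (hμ : μ ∈ Set.Ioo 0 1) (j : ℕ) : 0 < alphaWeight μ j :=
  Real.sqrt_pos.2 (alphaWeight_arg_pos hμ j)

lemma alphaWeight_mul_self (hμ : μ ∈ Set.Ioo 0 1) (j : ℕ) :
    (alphaWeight μ j * alphaWeight μ j : ℂ) = 1 - μ ^ (2 * (j + 1)) := by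
  exact_mod_cast Real.mul_self_sqrt (alphaWeight_arg_pos hμ j).le

lemma alphaWeight_le_one (hμ : μ ∈ Set.Ioo 0 1) (j : ℕ) : alphaWeight μ j ≤ 1 :=
  Real.sqrt_le_one.2 (sub_le_self _ (pow_nonneg hμ.1.le _))

lemma tendsto_alphaWeight (hμ : μ ∈ Set.Ioo 0 1) : Tendsto (alphaWeight μ) atTop (𝓝 1) := by
  have hpow := (tendsto_pow_atTop_nhds_zero_of_lt_one hμ.1.le hμ.2).comp
    ((tendsto_add_atTop_nat 1).const_mul_atTop' two_pos)
  have hsqrt := (hpow.const_sub 1).sqrt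
  rwa [sub_zero, Real.sqrt_one] at hsqrt

/-- The weighted shift `α*` on `ℓ²(ℕ)`. -/
def alphaStar (hμ : μ ∈ Set.Ioo 0 1) : Hnat →L[ℂ] Hnat :=
  unilateralShift ∘L diagonal (fun j ↦ (alphaWeight μ j : ℂ)) zero_le_one fun j ↦ by
    rw [Complex.norm_of_nonneg (alphaWeight_pos hμ j).le]
    exact alphaWeight_le_one hμ j

/-- The diagonal operator `γ e_j = μ ^ j • e_j` on `ℓ²(ℕ)`. -/
def gamma (hμ : μ ∈ Set.Ioo 0 1) : Hnat →L[ℂ] Hnat :=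
  diagonal (fun j ↦ (μ : ℂ) ^ j) zero_le_one fun j ↦ by
    rw [norm_pow, Complex.norm_of_nonneg hμ.1.le]
    exact pow_le_one₀ hμ.1.le hμ.2.le

section Relations

variable (hμ : μ ∈ Set.Ioo 0 1)

lemma alphaStar_stdBasis (j : ℕ) :
    alphaStar hμ (stdBasis ℕ j) = (alphaWeight μ j : ℂ) • stdBasis ℕ (j + 1) := by
  rw [alphaStar, comp_apply, diagonal_stdBasis, map_smul, unilateralShift_stdBasis]

lemma alpha_stdBasis_zero : adjoint (alphaStar hμ) (stdBasis ℕ 0) = 0 :=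
  adjoint_apply_zero_of_weightedShift (alphaStar_stdBasis hμ)

lemma alpha_stdBasis_succ (j : ℕ) :
    adjoint (alphaStar hμ) (stdBasis ℕ (j + 1)) = (alphaWeight μ j : ℂ) • stdBasis ℕ j := by
  rw [adjoint_apply_succ_of_weightedShift (alphaStar_stdBasis hμ), RCLike.star_def,
    Complex.conj_ofReal]

lemma gamma_stdBasis (j : ℕ) : gamma hμ (stdBasis ℕ j) = (μ : ℂ) ^ j • stdBasis ℕ j :=
  diagonal_stdBasis _ _ j

lemma adjoint_gamma : adjoint (gamma hμ) = gamma hμ :=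
  ext_hilbertBasis (stdBasis ℕ) fun j ↦ by
    rw [adjoint_apply_of_diagonal (gamma_stdBasis hμ), gamma_stdBasis, star_pow, RCLike.star_def,
      Complex.conj_ofReal]

lemma isCompactOperator_gamma : IsCompactOperator (gamma hμ) := by
  refine isCompactOperator_of_diagonal (gamma_stdBasis hμ) ?_
  rw [Nat.cofinite_eq_atTop]
  exact tendsto_pow_atTop_nhds_zero_of_norm_lt_one
    (by rw [Complex.norm_of_nonneg hμ.1.le]; exact hμ.2)

lemma alpha_alphaStar (f : Hnat) : adjoint (alphaStar hμ) (alphaStar hμ f) =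
    f - (μ : ℂ) ^ 2 • gamma hμ (gamma hμ f) := by
  suffices adjoint (alphaStar hμ) ∘L alphaStar hμ = 1 - (μ : ℂ) ^ 2 • gamma hμ ∘L gamma hμ from
    DFunLike.congr_fun this f
  refine ext_hilbertBasis (stdBasis ℕ) fun j ↦ ?_
  simp only [comp_apply, sub_apply, smul_apply, one_apply_eq_self, alphaStar_stdBasis, map_smul,
    alpha_stdBasis_succ, gamma_stdBasis, smul_smul, alphaWeight_mul_self hμ]
  module

lemma alphaStar_alpha (f : Hnat) : alphaStar hμ (adjoint (alphaStar hμ) f) =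
    f - gamma hμ (gamma hμ f) := by
  suffices alphaStar hμ ∘L adjoint (alphaStar hμ) = 1 - gamma hμ ∘L gamma hμ from
    DFunLike.congr_fun this f
  refine ext_hilbertBasis (stdBasis ℕ) fun j ↦ ?_
  rcases j with _ | j
  · simp [alpha_stdBasis_zero, gamma_stdBasis]
  · simp only [comp_apply, sub_apply, one_apply_eq_self, alphaStar_stdBasis, map_smul,
      alpha_stdBasis_succ, gamma_stdBasis, smul_smul, alphaWeight_mul_self hμ]
    module

lemma gamma_alphaStar (f : Hnat) :
    gamma hμ (alphaStar hμ f) = (μ : ℂ) • alphaStar hμ (gamma hμ f) := by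
  suffices gamma hμ ∘L alphaStar hμ = (μ : ℂ) • alphaStar hμ ∘L gamma hμ from
    DFunLike.congr_fun this f
  refine ext_hilbertBasis (stdBasis ℕ) fun j ↦ ?_
  simp only [comp_apply, smul_apply, alphaStar_stdBasis, map_smul, gamma_stdBasis, smul_smul]
  module

lemma alpha_gamma (f : Hnat) : adjoint (alphaStar hμ) (gamma hμ f) =
    (μ : ℂ) • gamma hμ (adjoint (alphaStar hμ) f) := by
  suffices adjoint (alphaStar hμ) ∘L gamma hμ =
      (μ : ℂ) • gamma hμ ∘L adjoint (alphaStar hμ) from DFunLike.congr_fun this f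
  refine ext_hilbertBasis (stdBasis ℕ) fun j ↦ ?_
  rcases j with _ | j
  · simp only [comp_apply, smul_apply, gamma_stdBasis, map_smul, alpha_stdBasis_zero, map_zero,
      smul_zero]
  · simp only [comp_apply, smul_apply, alpha_stdBasis_succ, map_smul, gamma_stdBasis, smul_smul]
    module

lemma alpha_apply (f : Hnat) (j : ℕ) :
    adjoint (alphaStar hμ) f j = alphaWeight μ j * f (j + 1) := by
  rw [← inner_stdBasis, adjoint_inner_right, alphaStar_stdBasis, inner_smul_left,
    Complex.conj_ofReal, inner_stdBasis]

lemma alphaStar_apply_zero (f : Hnat) : alphaStar hμ f 0 = 0 := by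
  rw [← inner_stdBasis, ← adjoint_inner_left, alpha_stdBasis_zero, inner_zero_left]

lemma alphaStar_apply_succ (f : Hnat) (j : ℕ) :
    alphaStar hμ f (j + 1) = alphaWeight μ j * f j := by
  rw [← inner_stdBasis, ← adjoint_inner_left, alpha_stdBasis_succ, inner_smul_left,
    Complex.conj_ofReal, inner_stdBasis]

lemma gamma_apply (f : Hnat) (j : ℕ) : gamma hμ f j = (μ : ℂ) ^ j * f j := by
  rw [← inner_stdBasis, ← adjoint_inner_left, adjoint_gamma, gamma_stdBasis, inner_smul_left,
    map_pow, Complex.conj_ofReal, inner_stdBasis]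

/-- The operator `√c α + γ` on `ℓ²(ℕ)`, a slice of the coordinate `x₁`. -/
def leftCoord (c : ℝ) : Hnat →L[ℂ] Hnat :=
  (√c : ℂ) • adjoint (alphaStar hμ) + gamma hμ

/-- The operator `α* - √c μ γ` on `ℓ²(ℕ)`, a slice of the coordinate `x₂`. -/
def rightCoord (c : ℝ) : Hnat →L[ℂ] Hnat :=
  alphaStar hμ - (√c * μ : ℂ) • gamma hμ

lemma adjoint_leftCoord (c : ℝ) :
    adjoint (leftCoord hμ c) = (√c : ℂ) • alphaStar hμ + gamma hμ := by
  rw [leftCoord, map_add, map_smulₛₗ, adjoint_adjoint, adjoint_gamma, Complex.conj_ofReal]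

lemma adjoint_rightCoord (c : ℝ) :
    adjoint (rightCoord hμ c) = adjoint (alphaStar hμ) - (√c * μ : ℂ) • gamma hμ := by
  rw [rightCoord, map_sub, map_smulₛₗ, adjoint_gamma, map_mul, Complex.conj_ofReal,
    Complex.conj_ofReal]

lemma isPodlesPair (hc : 0 ≤ c) :
    IsPodlesPair (μ ^ 2) c (leftCoord hμ c) (rightCoord hμ c) := by
  have hsq : (c : ℂ) = √c * √c := by exact_mod_cast (Real.mul_self_sqrt hc).symm
  constructor <;> intro f
  all_goals
    rw [adjoint_leftCoord, adjoint_rightCoord, leftCoord, rightCoord]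
    simp only [add_apply, sub_apply, smul_apply, map_add, map_sub, map_smul, alpha_alphaStar,
      alphaStar_alpha, gamma_alphaStar, alpha_gamma, hsq]
    push_cast
    module

lemma isCompactOperator_leftCoord_sub (hc : 0 ≤ c) : IsCompactOperator
    (adjoint (leftCoord hμ c) ∘L leftCoord hμ c - (c : ℂ) • 1 : Hnat →L[ℂ] Hnat) := by
  have hsq : (c : ℂ) = √c * √c := by exact_mod_cast (Real.mul_self_sqrt hc).symm
  have heq : adjoint (leftCoord hμ c) ∘L leftCoord hμ c - (c : ℂ) • 1 =
      ((1 - c : ℂ) • gamma hμ + (√c : ℂ) • alphaStar hμ) ∘L gamma hμ +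
        (√c : ℂ) • gamma hμ ∘L adjoint (alphaStar hμ) := by
    ext1 f
    rw [adjoint_leftCoord, leftCoord]
    simp only [comp_apply, add_apply, sub_apply, smul_apply, one_apply_eq_self, map_add, map_smul,
      alphaStar_alpha, hsq]
    module
  rw [heq]
  have hleft := (isCompactOperator_gamma hμ).clm_comp
    ((1 - c : ℂ) • gamma hμ + (√c : ℂ) • alphaStar hμ)
  have hright := ((isCompactOperator_gamma hμ).comp_clm (adjoint (alphaStar hμ))).smul (√c : ℂ)
  exact hleft.add hright

lemma leftCoord_apply (c : ℝ) (f : Hnat) (j : ℕ) :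
    leftCoord hμ c f j = √c * (alphaWeight μ j * f (j + 1)) + μ ^ j * f j := by
  simp only [leftCoord, add_apply, smul_apply, lp.coeFn_add, lp.coeFn_smul, Pi.add_apply,
    Pi.smul_apply, smul_eq_mul, alpha_apply, gamma_apply]

lemma adjoint_leftCoord_apply_zero (c : ℝ) (f : Hnat) : adjoint (leftCoord hμ c) f 0 = f 0 := by
  simp only [adjoint_leftCoord, add_apply, smul_apply, lp.coeFn_add, lp.coeFn_smul, Pi.add_apply,
    Pi.smul_apply, alphaStar_apply_zero, smul_zero, gamma_apply, pow_zero, one_mul, zero_add]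

lemma adjoint_leftCoord_apply_succ (c : ℝ) (f : Hnat) (j : ℕ) : adjoint (leftCoord hμ c) f (j + 1) =
    √c * (alphaWeight μ j * f j) + μ ^ (j + 1) * f (j + 1) := by
  simp only [adjoint_leftCoord, add_apply, smul_apply, lp.coeFn_add, lp.coeFn_smul, Pi.add_apply,
    Pi.smul_apply, smul_eq_mul, alphaStar_apply_succ, gamma_apply]

lemma apply_zero_of_leftCoord_eigenvector (hc : 0 < c) {f : Hnat}
    (hf : adjoint (leftCoord hμ c) (leftCoord hμ c f) = (c : ℂ) • f) : f 0 = 0 := by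
  have he : adjoint (rightCoord hμ c) (leftCoord hμ c (stdBasis ℕ 0)) =
      (-(√c * μ) : ℂ) • stdBasis ℕ 0 := by
    simp [-Complex.coe_smul, leftCoord, adjoint_rightCoord, alpha_stdBasis_zero, gamma_stdBasis]
  rw [← inner_stdBasis]
  refine (isPodlesPair hμ hc.le).inner_eq_zero_of_eigenvector (pow_pos hμ.1 2).ne' hc he ?_ hf
  rw [norm_neg, norm_mul, Complex.norm_of_nonneg (Real.sqrt_nonneg c),
    Complex.norm_of_nonneg hμ.1.le]
  exact mul_lt_of_lt_one_right (Real.sqrt_pos.2 hc) hμ.2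

lemma eq_zero_of_leftCoord_eigenvector (hc : 0 < c) {f : Hnat}
    (hf : adjoint (leftCoord hμ c) (leftCoord hμ c f) = (c : ℂ) • f) : f = 0 := by
  have hsc : (√c : ℂ) ≠ 0 := by exact_mod_cast (Real.sqrt_pos.2 hc).ne'
  have hμC : (μ : ℂ) ≠ 0 := by exact_mod_cast hμ.1.ne'
  set g := leftCoord hμ c f with hg
  have hf_zero : g 0 = c * f 0 := by
    rw [← adjoint_leftCoord_apply_zero hμ c, hf, lp.coeFn_smul, Pi.smul_apply, smul_eq_mul]
  have hf_succ (j : ℕ) :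
      √c * (alphaWeight μ j * g j) + μ ^ (j + 1) * g (j + 1) = c * f (j + 1) := by
    rw [← adjoint_leftCoord_apply_succ hμ, hf, lp.coeFn_smul, Pi.smul_apply, smul_eq_mul]
  have hzero : f 0 = 0 := apply_zero_of_leftCoord_eigenvector hμ hc hf
  have hall (j : ℕ) : f j = 0 ∧ g j = 0 := by
    induction j with
    | zero => exact ⟨hzero, by rw [hf_zero, hzero, mul_zero]⟩
    | succ j ih =>
      have hα : (alphaWeight μ j : ℂ) ≠ 0 := by exact_mod_cast (alphaWeight_pos hμ j).ne'
      have hfj : f (j + 1) = 0 := by simpa [← hg, ih, hsc, hα] using leftCoord_apply hμ c f j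
      exact ⟨hfj, by simpa [hfj, ih, hμC] using hf_succ j⟩
  ext j
  exact (hall j).1

end Relations

/-! ### The kernels of the coordinates -/

lemma exists_recurrence_span {t : ℕ → ℂ} (ht : Tendsto t atTop (𝓝 0)) :
    ∃ h : Hnat, h ≠ 0 ∧ ∀ f : Hnat, f ∈ ℂ ∙ h ↔ ∀ j, f (j + 1) = t j * f j := by
  let p (j : ℕ) : ℂ := ∏ i ∈ Finset.range j, t i
  have hp (j : ℕ) : p (j + 1) = t j * p j := by rw [mul_comm]; exact Finset.prod_range_succ t j
  have hsummable : Summable fun j ↦ ‖p j‖ ^ 2 := by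
    refine summable_of_ratio_norm_eventually_le (r := 1 / 2) (by norm_num) ?_
    have hlim : Tendsto (fun j ↦ ‖t j‖ ^ 2) atTop (𝓝 0) := by simpa using ht.norm.pow 2
    filter_upwards [hlim.eventually_le_const (by norm_num : (0 : ℝ) < 1 / 2)] with j hj
    rw [hp, norm_mul, mul_pow, norm_mul, norm_pow, norm_norm]
    gcongr
  let h : Hnat := ⟨p, memℓp_gen (by simpa using hsummable)⟩
  have hh (j : ℕ) : h (j + 1) = t j * h j := hp j
  have hh₀ : h 0 = 1 := Finset.prod_range_zero t
  refine ⟨h, fun hzero ↦ ?_, fun f ↦ ⟨?_, fun hf ↦ Submodule.mem_span_singleton.2 ⟨f 0, ?_⟩⟩⟩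
  · simp [hzero] at hh₀
  · rintro hf j
    obtain ⟨z, rfl⟩ := Submodule.mem_span_singleton.1 hf
    simp [hh, mul_left_comm]
  · ext j
    induction j with
    | zero => simp [hh₀]
    | succ j ih => rw [hf, ← ih]; simp [hh, mul_left_comm]

lemma exists_ker_smul_alpha_add_smul_gamma (hμ : μ ∈ Set.Ioo 0 1) {a : ℂ} (ha : a ≠ 0) (b : ℂ) :
    ∃ h : Hnat, h ≠ 0 ∧
      ∀ f, (a • adjoint (alphaStar hμ) + b • gamma hμ) f = 0 ↔ f ∈ ℂ ∙ h := by
  have ht : Tendsto (fun j ↦ -(b / a) * (μ : ℂ) ^ j / alphaWeight μ j) atTop (𝓝 0) := by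
    have hpow : Tendsto (fun j ↦ (μ : ℂ) ^ j) atTop (𝓝 0) :=
      tendsto_pow_atTop_nhds_zero_of_norm_lt_one
        (by rw [Complex.norm_of_nonneg hμ.1.le]; exact hμ.2)
    have hweight : Tendsto (fun j ↦ (alphaWeight μ j : ℂ)) atTop (𝓝 1) := by
      exact_mod_cast (Complex.continuous_ofReal.tendsto 1).comp (tendsto_alphaWeight hμ)
    have hquot := (hpow.const_mul (-(b / a))).div hweight one_ne_zero
    rwa [mul_zero, zero_div] at hquot
  obtain ⟨h, hh, hspan⟩ := exists_recurrence_span ht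
  refine ⟨h, hh, fun f ↦ ?_⟩
  rw [hspan, lp.ext_iff, funext_iff]
  refine forall_congr' fun j ↦ ?_
  have hα : (alphaWeight μ j : ℂ) ≠ 0 := by exact_mod_cast (alphaWeight_pos hμ j).ne'
  simp only [add_apply, smul_apply, lp.coeFn_add, lp.coeFn_smul, lp.coeFn_zero, Pi.add_apply,
    Pi.smul_apply, Pi.zero_apply, smul_eq_mul, alpha_apply, gamma_apply]
  constructor <;> intro h
  · field_simp
    linear_combination h
  · rw [h]
    field_simp
    ring

lemma exists_ker_leftCoord (hμ : μ ∈ Set.Ioo 0 1) (hc : 0 < c) :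
    ∃ h : Hnat, h ≠ 0 ∧ ∀ f, leftCoord hμ c f = 0 ↔ f ∈ ℂ ∙ h := by
  have hsc : (√c : ℂ) ≠ 0 := by exact_mod_cast (Real.sqrt_pos.2 hc).ne'
  have := exists_ker_smul_alpha_add_smul_gamma hμ hsc 1
  rwa [one_smul] at this

lemma exists_ker_adjoint_rightCoord (hμ : μ ∈ Set.Ioo 0 1) (c : ℝ) :
    ∃ h : Hnat, h ≠ 0 ∧ ∀ f, adjoint (rightCoord hμ c) f = 0 ↔ f ∈ ℂ ∙ h := by
  have := exists_ker_smul_alpha_add_smul_gamma hμ one_ne_zero (-(√c * μ))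
  rwa [one_smul, neg_smul, ← sub_eq_add_neg, ← adjoint_rightCoord] at this

lemma sq_mem_Ioo (hμ : μ ∈ Set.Ioo (0 : ℝ) 1) : μ ^ 2 ∈ Set.Ioo (0 : ℝ) 1 :=
  ⟨pow_pos hμ.1 2, pow_lt_one₀ hμ.1.le hμ.2 two_ne_zero⟩

lemma exists_chains (hμ : μ ∈ Set.Ioo 0 1) (hc : 0 < c) :
    ∃ w w' : ℕ → Hnat, IsChain (μ ^ 2) c 1 (leftCoord hμ c) (rightCoord hμ c) w ∧
      IsChain (μ ^ 2) c (-c) (leftCoord hμ c) (rightCoord hμ c) w' ∧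
      ∀ u, (∀ n, inner ℂ (w n) u = 0) → (∀ n, inner ℂ (w' n) u = 0) → u = 0 := by
  have h := isPodlesPair hμ hc.le
  have hν := sq_mem_Ioo hμ
  obtain ⟨u, hu, hu_ker⟩ := exists_ker_adjoint_rightCoord hμ c
  obtain ⟨u', hu', hu'_ker⟩ := exists_ker_leftCoord hμ hc
  have hne : adjoint (leftCoord hμ c) u ≠ 0 := fun hzero ↦ by
    have hxx := h.apply_adjoint_of_ker ((hu_ker u).2 (Submodule.mem_span_singleton_self u))
    have hc₁ : (1 + c : ℂ) ≠ 0 := by exact_mod_cast (by positivity : 1 + c ≠ 0)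
    rw [hzero, map_zero, eq_comm, smul_eq_zero_iff_right hc₁] at hxx
    exact hu hxx
  obtain ⟨w, hw, hspan⟩ :=
    h.exists_isChain hν hc (.inl rfl) hne (h.eigenspace_one_eq_adjoint_ker hc hu_ker)
  obtain ⟨w', hw', hspan'⟩ :=
    h.exists_isChain hν hc (.inr rfl) hu' (IsPodlesPair.eigenspace_neg_eq_ker hu'_ker)
  exact ⟨w, w', hw, hw', fun u ↦ h.eq_zero_of_inner_chain_eq_zero hν hc
    (isCompactOperator_leftCoord_sub hμ hc.le) (fun f ↦ eq_zero_of_leftCoord_eigenvector hμ hc)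
    hw hw' hspan hspan'⟩

end ConcretePair

/-! ### Slices of `ℓ²(ℤ × ℕ)` -/

section Slice

/-- The inclusion of `ℓ²(ℕ)` as the slice of `ℓ²(ℤ × ℕ)` spanned by the `e (m - 2 j, j)`. The
operators `x₁` and `x₂` move slices to neighbouring slices. -/
def slice (m : ℤ) : Hnat →L[ℂ] HC :=
  reindex (fun j : ℕ ↦ (m - 2 * j, j)) fun _ _ h ↦ congrArg Prod.snd h

lemma ec_eq_stdBasis (m : ℤ) (j : ℕ) : ec m j = stdBasis (ℤ × ℕ) (m, j) :=
  (stdBasis_eq_single _).symm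

lemma slice_stdBasis (m : ℤ) (j : ℕ) : slice m (stdBasis ℕ j) = ec (m - 2 * j) j := by
  rw [ec_eq_stdBasis]
  exact reindex_stdBasis _ _ j

lemma adjoint_slice_comp_slice (a b : ℤ) :
    adjoint (slice a) ∘L slice b = if a = b then 1 else 0 := by
  split_ifs with h
  · rw [h]
    exact adjoint_comp_reindex _ _
  · refine ext_hilbertBasis (stdBasis ℕ) fun j ↦ ?_
    ext i
    rw [comp_apply, ← inner_stdBasis, adjoint_inner_right, slice_stdBasis, slice_stdBasis,
      ec_eq_stdBasis, ec_eq_stdBasis, inner_eq_ite, if_neg]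
    · rfl
    · rintro hij
      obtain ⟨hab, rfl⟩ := Prod.ext_iff.1 hij
      exact h (sub_left_injective hab)

lemma eq_zero_of_adjoint_slice_eq_zero {u : HC} (hu : ∀ m, adjoint (slice m) u = 0) : u = 0 := by
  ext ⟨m, j⟩
  have hslice : slice (m + 2 * j) (stdBasis ℕ j) = stdBasis (ℤ × ℕ) (m, j) := by
    rw [slice_stdBasis, add_sub_cancel_right, ec_eq_stdBasis]
  rw [← inner_stdBasis, ← hslice, ← adjoint_inner_right, hu, inner_zero_right]
  rfl

lemma adjoint_comp_slice {T : HC →L[ℂ] HC} {S : Hnat →L[ℂ] Hnat} {d : ℤ}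
    (h : ∀ m, T ∘L slice m = slice (m + d) ∘L S) (m : ℤ) :
    adjoint T ∘L slice m = slice (m - d) ∘L adjoint S := by
  ext1 v
  refine sub_eq_zero.1 (eq_zero_of_adjoint_slice_eq_zero fun a ↦ ?_)
  have hleft : adjoint (slice a) ∘L adjoint T = adjoint S ∘L adjoint (slice (a + d)) := by
    rw [← adjoint_comp, h, adjoint_comp]
  have hslice (a b : ℤ) (f : Hnat) : adjoint (slice a) (slice b f) = if a = b then f else 0 := by
    rw [← comp_apply, adjoint_slice_comp_slice]
    split_ifs <;> rfl
  rw [map_sub, comp_apply, comp_apply, ← comp_apply (adjoint (slice a)) (adjoint T), hleft,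
    comp_apply, hslice, hslice]
  simp only [eq_sub_iff_add_eq]
  split_ifs <;> simp

variable {q c : ℝ} {x : Fin 2 → (HC →L[ℂ] HC)}

lemma inv_mem_Ioo (hq : 1 < q) : q⁻¹ ∈ Set.Ioo (0 : ℝ) 1 :=
  ⟨by positivity, inv_lt_one_of_one_lt₀ hq⟩

lemma real_smul_eq (r : ℝ) (u : HC) : r • u = (r : ℂ) • u := (Complex.coe_smul r u).symm

lemma zpow_neg_natCast (q : ℝ) (n : ℕ) : q ^ (-(n : ℤ)) = q⁻¹ ^ n := by
  rw [zpow_neg, zpow_natCast, inv_pow]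

lemma sqrt_one_sub_zpow (q : ℝ) (j : ℕ) :
    √(1 - q ^ (-2 * ((j : ℤ) + 1))) = alphaWeight q⁻¹ j := by
  rw [alphaWeight, ← zpow_neg_natCast, neg_mul]
  norm_cast

lemma zero_comp_slice (hq : 1 < q) (hx : IsXPair q c x) (m : ℤ) :
    x 0 ∘L slice m = slice (m + -1) ∘L leftCoord (inv_mem_Ioo hq) c := by
  refine ext_hilbertBasis (stdBasis ℕ) fun j ↦ ?_
  rcases j with _ | j
  · have hm : m - 2 * ((0 : ℕ) : ℤ) - 1 = m + -1 - 2 * ((0 : ℕ) : ℤ) := by ring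
    rw [comp_apply, slice_stdBasis, hx.1, comp_apply, leftCoord, add_apply, smul_apply,
      alpha_stdBasis_zero, gamma_stdBasis, smul_zero, zero_add, pow_zero, one_smul,
      slice_stdBasis, hm]
  · have hm : m - 2 * ((j + 1 : ℕ) : ℤ) + 1 = m + -1 - 2 * j := by push_cast; ring
    have hm' : m - 2 * ((j + 1 : ℕ) : ℤ) - 1 = m + -1 - 2 * (j + 1 : ℕ) := by ring
    rw [comp_apply, slice_stdBasis, hx.2.1, comp_apply, leftCoord, add_apply, smul_apply,
      alpha_stdBasis_succ, gamma_stdBasis, map_add, map_smul, map_smul, map_smul,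
      slice_stdBasis, slice_stdBasis, hm, hm', sqrt_one_sub_zpow, ← Nat.cast_succ,
      zpow_neg_natCast, real_smul_eq, real_smul_eq, smul_smul]
    push_cast
    rfl

lemma one_comp_slice (hq : 1 < q) (hx : IsXPair q c x) (m : ℤ) :
    x 1 ∘L slice m = slice (m + 1) ∘L rightCoord (inv_mem_Ioo hq) c := by
  refine ext_hilbertBasis (stdBasis ℕ) fun j ↦ ?_
  have hm : m - 2 * (j : ℤ) + 1 = m + 1 - 2 * j := by ring
  have hm' : m - 2 * (j : ℤ) - 1 = m + 1 - 2 * (j + 1 : ℕ) := by push_cast; ring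
  rw [comp_apply, slice_stdBasis, hx.2.2, comp_apply, rightCoord, sub_apply, smul_apply,
    alphaStar_stdBasis, gamma_stdBasis, map_sub, map_smul, map_smul, map_smul,
    slice_stdBasis, slice_stdBasis, hm, hm', sqrt_one_sub_zpow, zpow_neg_natCast, real_smul_eq,
    real_smul_eq]
  push_cast
  module

end Slice

/-! ### Operators acting along chains -/

section ChainGraph

variable {H ι : Type*} [NormedAddCommGroup H] [InnerProductSpace ℂ H] [CompleteSpace H]
  {V : ι → Hnat →L[ℂ] H} {S : H →L[ℂ] H} {T : Hnat →L[ℂ] Hnat} {f : C(Circle, ℂ)}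

variable (V) in
/-- The triples `(S, T, f)` such that `S` acts on each copy of `ℓ²(ℕ)` given by `V` as one and the
same operator `T`, and `T` has symbol `f`. -/
def chainGraph : StarSubalgebra ℂ ((H →L[ℂ] H) × (Hnat →L[ℂ] Hnat) × C(Circle, ℂ)) :=
  (⨅ i, (intertwiners (V i) isOperatorIdeal_bot).comap
    ((StarAlgHom.fst ℂ _ _).prod ((StarAlgHom.fst ℂ _ _).comp (StarAlgHom.snd ℂ _ _)))) ⊓
  symbolGraph.comap (StarAlgHom.snd ℂ _ _)

lemma mem_chainGraph : (S, T, f) ∈ chainGraph V ↔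
    (∀ i, S ∘L V i = V i ∘L T ∧ star S ∘L V i = V i ∘L star T) ∧ (T, f) ∈ symbolGraph := by
  have hmem (i : ι) : (S, T) ∈ intertwiners (V i) isOperatorIdeal_bot ↔
      S ∘L V i = V i ∘L T ∧ star S ∘L V i = V i ∘L star T := by
    simp only [mem_intertwiners, Submodule.mem_bot, sub_eq_zero]
  simp only [← hmem]
  exact StarSubalgebra.mem_inf.trans (and_congr_left' StarSubalgebra.mem_iInf)

lemma isClosed_chainGraph :
    IsClosed (chainGraph V : Set ((H →L[ℂ] H) × (Hnat →L[ℂ] Hnat) × C(Circle, ℂ))) := by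
  rw [chainGraph, StarSubalgebra.coe_inf, StarSubalgebra.coe_iInf]
  refine .inter (isClosed_iInter fun i ↦ ?_) (isClosed_symbolGraph.preimage continuous_snd)
  refine (isClosed_intertwiners (V i) isOperatorIdeal_bot ?_).preimage
    (continuous_fst.prodMk (continuous_fst.comp continuous_snd))
  simp

variable {d : ℕ → ℂ} {z : ℂ} [Nonempty ι]

lemma exists_diagonal_mem_chainGraph (hV : ∀ i, adjoint (V i) ∘L V i = 1)
    (hS : ∀ i n, S (V i (stdBasis ℕ n)) = d n • V i (stdBasis ℕ n))
    (hS' : IsSelfAdjoint S) (hd : Tendsto d atTop (𝓝 z)) :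
    ∃ T, (∀ n, T (stdBasis ℕ n) = d n • stdBasis ℕ n) ∧ (S, T, z • 1) ∈ chainGraph V := by
  let i₀ := Classical.arbitrary ι
  have hT (n : ℕ) : (adjoint (V i₀) ∘L S ∘L V i₀) (stdBasis ℕ n) = d n • stdBasis ℕ n := by
    rw [comp_apply, comp_apply, hS, map_smul, ← comp_apply, hV, one_apply_eq_self]
  have hstar : star (adjoint (V i₀) ∘L S ∘L V i₀) = adjoint (V i₀) ∘L S ∘L V i₀ := by
    rw [star_eq_adjoint, adjoint_comp, adjoint_comp, adjoint_adjoint, hS'.adjoint_eq, comp_assoc]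
  have hSV (i : ι) : S ∘L V i = V i ∘L adjoint (V i₀) ∘L S ∘L V i₀ :=
    ext_hilbertBasis (stdBasis ℕ) fun n ↦ by rw [comp_apply, hS, comp_apply, hT, map_smul]
  refine ⟨_, hT, mem_chainGraph.2 ⟨fun i ↦ ⟨hSV i, ?_⟩, mem_symbolGraph_of_diagonal hT ?_⟩⟩
  · rw [hstar, hS'.star_eq, hSV]
  · rwa [Nat.cofinite_eq_atTop]

lemma exists_weightedShift_mem_chainGraph (hV : ∀ i, adjoint (V i) ∘L V i = 1)
    (hS : ∀ i n, S (V i (stdBasis ℕ n)) = d n • V i (stdBasis ℕ (n + 1)))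
    (hS₀ : ∀ i, adjoint S (V i (stdBasis ℕ 0)) = 0)
    (hS' : ∀ i n, adjoint S (V i (stdBasis ℕ (n + 1))) = star (d n) • V i (stdBasis ℕ n))
    (hd : Tendsto d atTop (𝓝 z)) :
    ∃ T, (∀ n, T (stdBasis ℕ n) = d n • stdBasis ℕ (n + 1)) ∧
      (S, T, z • circleCoord) ∈ chainGraph V := by
  let i₀ := Classical.arbitrary ι
  have hT (n : ℕ) :
      (adjoint (V i₀) ∘L S ∘L V i₀) (stdBasis ℕ n) = d n • stdBasis ℕ (n + 1) := by
    rw [comp_apply, comp_apply, hS, map_smul, ← comp_apply, hV, one_apply_eq_self]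
  refine ⟨_, hT, mem_chainGraph.2 ⟨fun i ↦ ⟨?_, ?_⟩, mem_symbolGraph_of_weightedShift hT ?_⟩⟩
  · exact ext_hilbertBasis (stdBasis ℕ) fun n ↦ by
      rw [comp_apply, hS, comp_apply, hT, map_smul]
  · rw [star_eq_adjoint, star_eq_adjoint]
    refine ext_hilbertBasis (stdBasis ℕ) fun n ↦ ?_
    rw [comp_apply, comp_apply]
    rcases n with _ | n
    · rw [hS₀, adjoint_apply_zero_of_weightedShift hT, map_zero]
    · rw [hS', adjoint_apply_succ_of_weightedShift hT, map_smul]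
  · rwa [Nat.cofinite_eq_atTop]

end ChainGraph

section JointGraph

variable {H ι : Type*} [NormedAddCommGroup H] [InnerProductSpace ℂ H] [CompleteSpace H]
  {V V' : ι → Hnat →L[ℂ] H} {S : H →L[ℂ] H} {T T' : Hnat →L[ℂ] Hnat} {f : C(Circle, ℂ)}

variable (V V') in
/-- The tuples `(S, (T, T'), f)` such that `S` acts as `T` on the copies of `ℓ²(ℕ)` given by `V`
and as `T'` on those given by `V'`, and both `T` and `T'` have symbol `f`. -/
def jointGraph :
    StarSubalgebra ℂ
      ((H →L[ℂ] H) × ((Hnat →L[ℂ] Hnat) × (Hnat →L[ℂ] Hnat)) × C(Circle, ℂ)) :=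
  let op := StarAlgHom.fst ℂ (H →L[ℂ] H)
    (((Hnat →L[ℂ] Hnat) × (Hnat →L[ℂ] Hnat)) × C(Circle, ℂ))
  let restrictions := (StarAlgHom.fst ℂ _ _).comp (StarAlgHom.snd ℂ _ _)
  let symbol := (StarAlgHom.snd ℂ _ _).comp (StarAlgHom.snd ℂ _ _)
  (chainGraph V).comap (op.prod (((StarAlgHom.fst ℂ _ _).comp restrictions).prod symbol)) ⊓
  (chainGraph V').comap (op.prod (((StarAlgHom.snd ℂ _ _).comp restrictions).prod symbol))

lemma mem_jointGraph : (S, (T, T'), f) ∈ jointGraph V V' ↔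
    (S, T, f) ∈ chainGraph V ∧ (S, T', f) ∈ chainGraph V' :=
  StarSubalgebra.mem_inf

lemma isClosed_jointGraph : IsClosed (jointGraph V V' : Set
    ((H →L[ℂ] H) × ((Hnat →L[ℂ] Hnat) × (Hnat →L[ℂ] Hnat)) × C(Circle, ℂ))) := by
  rw [jointGraph, StarSubalgebra.coe_inf]
  refine .inter (isClosed_chainGraph.preimage ?_) (isClosed_chainGraph.preimage ?_)
  · exact continuous_fst.prodMk ((continuous_fst.comp (continuous_fst.comp continuous_snd)).prodMk
      (continuous_snd.comp continuous_snd))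
  · exact continuous_fst.prodMk ((continuous_snd.comp (continuous_fst.comp continuous_snd)).prodMk
      (continuous_snd.comp continuous_snd))

lemma eq_zero_of_mem_jointGraph_zero (h : (S, 0, f) ∈ jointGraph V V')
    (htotal : ∀ u, (∀ i, adjoint (V i) u = 0) → (∀ i, adjoint (V' i) u = 0) → u = 0) : S = 0 := by
  have hadjoint {W : ι → Hnat →L[ℂ] H} (hW : (S, 0, f) ∈ chainGraph W) (i : ι) (u : H) :
      adjoint (W i) (adjoint S u) = 0 := by
    rw [← comp_apply, ← adjoint_comp, ((mem_chainGraph.1 hW).1 i).1, comp_zero, map_zero,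
      zero_apply]
  obtain ⟨h₁, h₂⟩ := mem_jointGraph.1 h
  have hzero : adjoint S = 0 := by
    ext1 u
    exact htotal _ (fun i ↦ hadjoint h₁ i u) fun i ↦ hadjoint h₂ i u
  rw [← adjoint_adjoint S, hzero, map_zero]

variable [Nonempty ι]

lemma eq_zero_of_zero_mem_chainGraph (hV : ∀ i, adjoint (V i) ∘L V i = 1)
    (h : (0, T, f) ∈ chainGraph V) : T = 0 ∧ f = 0 := by
  obtain ⟨hV', hsymbol⟩ := mem_chainGraph.1 h
  let i := Classical.arbitrary ι
  obtain rfl : T = 0 := by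
    calc T = adjoint (V i) ∘L V i ∘L T := by
            rw [← comp_assoc, hV]
            rfl
      _ = 0 := by rw [← (hV' i).1, zero_comp, comp_zero]
  exact ⟨rfl, eq_zero_of_zero_mem_symbolGraph hsymbol⟩

lemma eq_zero_of_zero_mem_jointGraph (hV : ∀ i, adjoint (V i) ∘L V i = 1)
    (hV' : ∀ i, adjoint (V' i) ∘L V' i = 1)
    (b : ((Hnat →L[ℂ] Hnat) × (Hnat →L[ℂ] Hnat)) × C(Circle, ℂ))
    (h : (0, b) ∈ jointGraph V V') : b = 0 := by
  obtain ⟨⟨T, T'⟩, f⟩ := b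
  obtain ⟨h₁, h₂⟩ := mem_jointGraph.1 h
  obtain ⟨rfl, rfl⟩ := eq_zero_of_zero_mem_chainGraph hV h₁
  obtain ⟨rfl, -⟩ := eq_zero_of_zero_mem_chainGraph hV' h₂
  rfl

end JointGraph

/-! ### The faithful representation by restriction to the two kinds of chains -/

section Representation

variable {w : ℕ → Hnat}

lemma orthonormal_slice (hw : ∀ n, ‖w n‖ = 1) (m : ℤ) :
    Orthonormal ℂ fun n : ℕ ↦ slice (m + 2 * n) (w n) := by
  rw [orthonormal_iff_ite]
  intro i j
  rw [← adjoint_inner_right, ← comp_apply, adjoint_slice_comp_slice]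
  by_cases hij : i = j
  · simp [hij, hw, inner_self_eq_norm_sq_to_K]
  · have hne : m + 2 * (i : ℤ) ≠ m + 2 * j := by simpa using hij
    rw [if_neg hij, if_neg hne, zero_apply, inner_zero_right]

/-- The inclusion of `ℓ²(ℕ)` into `ℓ²(ℤ × ℕ)` that sends `e n` to the copy of `w n` in the slice
`m + 2 n`; the operator `x₁* x₂` moves each slice by `2`. -/
def chainIncl (hw : ∀ n, ‖w n‖ = 1) (m : ℤ) : Hnat →L[ℂ] HC :=
  ofOrthonormal (orthonormal_slice hw m)

lemma chainIncl_stdBasis (hw : ∀ n, ‖w n‖ = 1) (m : ℤ) (n : ℕ) :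
    chainIncl hw m (stdBasis ℕ n) = slice (m + 2 * n) (w n) :=
  ofOrthonormal_stdBasis _ n

lemma adjoint_chainIncl_comp_chainIncl (hw : ∀ n, ‖w n‖ = 1) (m : ℤ) :
    adjoint (chainIncl hw m) ∘L chainIncl hw m = 1 :=
  adjoint_comp_ofOrthonormal _

lemma inner_adjoint_slice_eq_zero (hw : ∀ n, ‖w n‖ = 1) {u : HC}
    (hu : ∀ m, adjoint (chainIncl hw m) u = 0) (k : ℤ) (n : ℕ) :
    inner ℂ (w n) (adjoint (slice k) u) = 0 := by
  have h := chainIncl_stdBasis hw (k - 2 * n) n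
  rw [sub_add_cancel] at h
  rw [adjoint_inner_right, ← h, ← adjoint_inner_right, hu, inner_zero_right]

lemma star_mul_apply_slice {A B : HC →L[ℂ] HC} {S T : Hnat →L[ℂ] Hnat} {a b : ℤ}
    (hA : ∀ m, A ∘L slice m = slice (m + a) ∘L S) (hB : ∀ m, B ∘L slice m = slice (m + b) ∘L T)
    (m : ℤ) (f : Hnat) :
    (star A * B) (slice m f) = slice (m + b - a) (adjoint S (T f)) := by
  rw [mul_apply_eq_comp, ← comp_apply B, hB, comp_apply, star_eq_adjoint,
    ← comp_apply (adjoint A), adjoint_comp_slice hA, comp_apply]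

/-- The symbols of the coordinates: `x₁` and `x₂` are to the sphere what `√c` and `z` are to the
circle, in the sense that `xᵢ* xⱼ` has the symbol `conj (coordSymbol c i) * coordSymbol c j`. -/
def coordSymbol (c : ℝ) : Fin 2 → C(Circle, ℂ) := ![(√c : ℂ) • 1, circleCoord]

lemma star_circleCoord_mul_self : star circleCoord * circleCoord = 1 := by
  ext z
  exact (Complex.conj_mul' (z : ℂ)).trans (by rw [Circle.norm_coe]; simp)

variable {q c l : ℝ} {x : Fin 2 → (HC →L[ℂ] HC)} (hq : 1 < q)

lemma exists_zero_zero_mem_chainGraph (hx : IsXPair q c x) (hc : 0 ≤ c)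
    (hw : IsChain (q⁻¹ ^ 2) c l (leftCoord (inv_mem_Ioo hq) c) (rightCoord (inv_mem_Ioo hq) c) w) :
    ∃ T, (∀ n, T (stdBasis ℕ n) = (c + (l * (q⁻¹ ^ 2) ^ n : ℝ) : ℂ) • stdBasis ℕ n) ∧
      (star (x 0) * x 0, T, star (coordSymbol c 0) * coordSymbol c 0) ∈
        chainGraph (chainIncl hw.norm_eq_one) := by
  have hsymbol : star (coordSymbol c 0) * coordSymbol c 0 = (c : ℂ) • 1 := by
    ext z
    simp [coordSymbol, ← Complex.ofReal_mul, Real.mul_self_sqrt hc]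
  have hlim : Tendsto (fun n : ℕ ↦ (c + (l * (q⁻¹ ^ 2) ^ n : ℝ) : ℂ)) atTop (𝓝 c) := by
    have h := tendsto_mul_pow_zero (sq_mem_Ioo (inv_mem_Ioo hq)) l
    simpa only [Complex.ofReal_zero, add_zero] using h.ofReal.const_add (c : ℂ)
  rw [hsymbol]
  refine exists_diagonal_mem_chainGraph (adjoint_chainIncl_comp_chainIncl _) (fun m n ↦ ?_)
    (.star_mul_self _) hlim
  rw [chainIncl_stdBasis, star_mul_apply_slice (zero_comp_slice hq hx) (zero_comp_slice hq hx),
    hw.eigen, map_smul, add_sub_cancel_right]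

lemma exists_one_one_mem_chainGraph (hx : IsXPair q c x) (hc : 0 ≤ c)
    (hw : IsChain (q⁻¹ ^ 2) c l (leftCoord (inv_mem_Ioo hq) c) (rightCoord (inv_mem_Ioo hq) c) w) :
    ∃ T, (star (x 1) * x 1, T, star (coordSymbol c 1) * coordSymbol c 1) ∈
        chainGraph (chainIncl hw.norm_eq_one) := by
  have hsymbol : star (coordSymbol c 1) * coordSymbol c 1 = (1 : ℂ) • 1 :=
    star_circleCoord_mul_self.trans (one_smul ℂ 1).symm
  have hlim : Tendsto (fun n : ℕ ↦ (1 - (l * (q⁻¹ ^ 2) ^ (n + 1) : ℝ) : ℂ)) atTop (𝓝 1) := by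
    have h := (tendsto_mul_pow_zero (sq_mem_Ioo (inv_mem_Ioo hq)) l).comp
      (tendsto_add_atTop_nat 1)
    simpa only [Complex.ofReal_zero, sub_zero, Function.comp_apply] using h.ofReal.const_sub 1
  rw [hsymbol]
  refine (exists_diagonal_mem_chainGraph (adjoint_chainIncl_comp_chainIncl _) (fun m n ↦ ?_)
    (.star_mul_self _) hlim).imp fun T hT ↦ hT.2
  rw [chainIncl_stdBasis, star_mul_apply_slice (one_comp_slice hq hx) (one_comp_slice hq hx),
    hw.adjoint_right (isPodlesPair (inv_mem_Ioo hq) hc), map_smul, add_sub_cancel_right]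

lemma exists_zero_one_mem_chainGraph (hx : IsXPair q c x) (hc : 0 < c) (hl : l = 1 ∨ l = -c)
    (hw : IsChain (q⁻¹ ^ 2) c l (leftCoord (inv_mem_Ioo hq) c) (rightCoord (inv_mem_Ioo hq) c) w) :
    ∃ T, (∀ n, T (stdBasis ℕ n) = (weight (q⁻¹ ^ 2) c l n : ℂ) • stdBasis ℕ (n + 1)) ∧
      (star (x 0) * x 1, T, star (coordSymbol c 0) * coordSymbol c 1) ∈
        chainGraph (chainIncl hw.norm_eq_one) := by
  have hν := sq_mem_Ioo (inv_mem_Ioo hq)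
  have hpair := isPodlesPair (inv_mem_Ioo hq) hc.le
  have hadjoint : adjoint (star (x 0) * x 1) = star (x 1) * x 0 := by
    rw [← star_eq_adjoint, star_mul, star_star]
  have hsymbol : star (coordSymbol c 0) * coordSymbol c 1 = (√c : ℂ) • circleCoord := by
    ext z
    simp [coordSymbol]
  rw [hsymbol]
  refine exists_weightedShift_mem_chainGraph (adjoint_chainIncl_comp_chainIncl _)
    (fun m n ↦ ?_) (fun m ↦ ?_) (fun m n ↦ ?_)
    (tendsto_weight hν c l).ofReal
  · have hm : m + 2 * (n : ℤ) + 1 - -1 = m + 2 * (n + 1 : ℕ) := by push_cast; ring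
    rw [chainIncl_stdBasis, star_mul_apply_slice (zero_comp_slice hq hx) (one_comp_slice hq hx),
      hw.raise, map_smul, chainIncl_stdBasis, hm]
  · rw [hadjoint, chainIncl_stdBasis,
      star_mul_apply_slice (one_comp_slice hq hx) (zero_comp_slice hq hx),
      hw.lower_zero hpair hl, map_zero]
  · have hm : m + 2 * ((n + 1 : ℕ) : ℤ) + -1 - 1 = m + 2 * n := by push_cast; ring
    rw [hadjoint, chainIncl_stdBasis, chainIncl_stdBasis,
      star_mul_apply_slice (one_comp_slice hq hx) (zero_comp_slice hq hx),
      hw.lower_succ hpair hν hc hl, map_smul, hm]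
    simp

end Representation

section Representation

variable {q c l : ℝ} {x : Fin 2 → (HC →L[ℂ] HC)} {w : ℕ → Hnat}

lemma exists_mem_chainGraph (hq : 1 < q) (hx : IsXPair q c x) (hc : 0 < c)
    (hl : l = 1 ∨ l = -c)
    (hw : IsChain (q⁻¹ ^ 2) c l (leftCoord (inv_mem_Ioo hq) c) (rightCoord (inv_mem_Ioo hq) c) w) :
    ∃ T : Fin 2 → Fin 2 → (Hnat →L[ℂ] Hnat),
      (∀ i j, (star (x i) * x j, T i j, star (coordSymbol c i) * coordSymbol c j) ∈
        chainGraph (chainIncl hw.norm_eq_one)) ∧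
      (∀ n, T 0 0 (stdBasis ℕ n) = (c + (l * (q⁻¹ ^ 2) ^ n : ℝ) : ℂ) • stdBasis ℕ n) ∧
      ∀ n, T 0 1 (stdBasis ℕ n) = (weight (q⁻¹ ^ 2) c l n : ℂ) • stdBasis ℕ (n + 1) := by
  obtain ⟨T₀₀, hdiag, h₀₀⟩ := exists_zero_zero_mem_chainGraph hq hx hc.le hw
  obtain ⟨T₀₁, hshift, h₀₁⟩ := exists_zero_one_mem_chainGraph hq hx hc hl hw
  obtain ⟨T₁₁, h₁₁⟩ := exists_one_one_mem_chainGraph hq hx hc.le hw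
  refine ⟨![![T₀₀, T₀₁], ![star T₀₁, T₁₁]], ?_, hdiag, hshift⟩
  simp only [Fin.forall_fin_two]
  refine ⟨⟨h₀₀, h₀₁⟩, ?_, h₁₁⟩
  have h₁₀ := star_mem h₀₁
  rwa [Prod.star_def, Prod.star_def, star_mul, star_star, star_mul, star_star] at h₁₀

lemma eq_zero_of_adjoint_chainIncl_eq_zero {w w' : ℕ → Hnat} (hw : ∀ n, ‖w n‖ = 1)
    (hw' : ∀ n, ‖w' n‖ = 1)
    (htotal : ∀ u, (∀ n, inner ℂ (w n) u = 0) → (∀ n, inner ℂ (w' n) u = 0) → u = 0) {u : HC}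
    (hu : ∀ m, adjoint (chainIncl hw m) u = 0) (hu' : ∀ m, adjoint (chainIncl hw' m) u = 0) :
    u = 0 :=
  eq_zero_of_adjoint_slice_eq_zero fun k ↦ htotal _ (inner_adjoint_slice_eq_zero hw hu k)
    (inner_adjoint_slice_eq_zero hw' hu' k)

/-- A representation `ρ` by pairs of operators on `ℓ²(ℕ)` that is faithful with closed range and
such that both components of `ρ a` are Toeplitz operators with symbol `φ a` modulo compacts. -/
structure IsToeplitzPair {A : Type*} [Ring A] [Algebra ℂ A] [StarRing A]
    (ρ : A →⋆ₐ[ℂ] (Hnat →L[ℂ] Hnat) × (Hnat →L[ℂ] Hnat)) (φ : A →⋆ₐ[ℂ] C(Circle, ℂ)) : Prop where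
  injective : Function.Injective ρ
  isClosed_range : IsClosed (ρ.range : Set ((Hnat →L[ℂ] Hnat) × (Hnat →L[ℂ] Hnat)))
  symbol_fst (a : A) : ((ρ a).1, φ a) ∈ symbolGraph
  symbol_snd (a : A) : ((ρ a).2, φ a) ∈ symbolGraph

lemma exists_isToeplitzPair_of_graph {H ι : Type*} [NormedAddCommGroup H] [InnerProductSpace ℂ H]
    [CompleteSpace H] [Nonempty ι] {V V' : ι → Hnat →L[ℂ] H}
    (hV : ∀ i, adjoint (V i) ∘L V i = 1) (hV' : ∀ i, adjoint (V' i) ∘L V' i = 1)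
    (htotal : ∀ u, (∀ i, adjoint (V i) u = 0) → (∀ i, adjoint (V' i) u = 0) → u = 0)
    {s : Set (H →L[ℂ] H)} (hs : ∀ a ∈ s, ∃ b, (a, b) ∈ jointGraph V V') :
    ∃ (ρ : (StarAlgebra.adjoin ℂ s).topologicalClosure →⋆ₐ[ℂ]
        (Hnat →L[ℂ] Hnat) × (Hnat →L[ℂ] Hnat))
      (φ : (StarAlgebra.adjoin ℂ s).topologicalClosure →⋆ₐ[ℂ] C(Circle, ℂ)),
      IsToeplitzPair ρ φ ∧ ∀ (a : (StarAlgebra.adjoin ℂ s).topologicalClosure) (T T' f),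
        ((a : H →L[ℂ] H), (T, T'), f) ∈ jointGraph V V' → ρ a = (T, T') := by
  obtain ⟨Φ, hΦ⟩ := exists_starAlgHom_of_graph (A := H →L[ℂ] H)
    (B := ((Hnat →L[ℂ] Hnat) × (Hnat →L[ℂ] Hnat)) × C(Circle, ℂ)) isClosed_jointGraph
    (eq_zero_of_zero_mem_jointGraph hV hV') hs
  let ρ := (StarAlgHom.fst ℂ ((Hnat →L[ℂ] Hnat) × (Hnat →L[ℂ] Hnat)) C(Circle, ℂ)).comp Φ
  have hinj : Function.Injective ρ := (injective_iff_map_eq_zero ρ).2 fun a ha ↦ by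
    refine Subtype.ext (eq_zero_of_mem_jointGraph_zero (f := (Φ a).2) ?_ htotal)
    rw [← show (Φ a).1 = 0 from ha]
    exact hΦ a
  have hmem (a) := mem_jointGraph.1 (hΦ a)
  refine ⟨ρ, (StarAlgHom.snd ℂ _ C(Circle, ℂ)).comp Φ, ⟨hinj, isClosed_range_of_injective
    (StarSubalgebra.isClosed_topologicalClosure _) hinj,
    fun a ↦ (mem_chainGraph.1 (hmem a).1).2, fun a ↦ (mem_chainGraph.1 (hmem a).2).2⟩,
    fun a T T' f h ↦ ?_⟩
  have hsub := sub_mem (hΦ a) h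
  rw [Prod.mk_sub_mk, sub_self] at hsub
  exact congrArg Prod.fst (sub_eq_zero.1 (eq_zero_of_zero_mem_jointGraph hV hV' _ hsub))

lemma star_mul_mem_Cqc (x : Fin 2 → (HC →L[ℂ] HC)) (i j : Fin 2) : star (x i) * x j ∈ Cqc x :=
  StarSubalgebra.le_topologicalClosure _ (StarAlgebra.subset_adjoin ℂ _ ⟨i, j, rfl⟩)

lemma exists_isToeplitzPair (hq : 1 < q) (hx : IsXPair q c x) (hc : 0 < c) :
    ∃ (ρ : Cqc x →⋆ₐ[ℂ] (Hnat →L[ℂ] Hnat) × (Hnat →L[ℂ] Hnat))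
      (φ : Cqc x →⋆ₐ[ℂ] C(Circle, ℂ)), IsToeplitzPair ρ φ ∧
      (∃ D D', (D, D') ∈ ρ.range ∧
        (∀ n, D (stdBasis ℕ n) = (c + (1 * (q⁻¹ ^ 2) ^ n : ℝ) : ℂ) • stdBasis ℕ n) ∧
        ∀ n, D' (stdBasis ℕ n) = (c + (-c * (q⁻¹ ^ 2) ^ n : ℝ) : ℂ) • stdBasis ℕ n) ∧
      ∃ B B', (B, B') ∈ ρ.range ∧
        (∀ n, B (stdBasis ℕ n) = (weight (q⁻¹ ^ 2) c 1 n : ℂ) • stdBasis ℕ (n + 1)) ∧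
        ∀ n, B' (stdBasis ℕ n) = (weight (q⁻¹ ^ 2) c (-c) n : ℂ) • stdBasis ℕ (n + 1) := by
  obtain ⟨w, w', hw, hw', htotal⟩ := exists_chains (inv_mem_Ioo hq) hc
  obtain ⟨T, hT, hdiag, hshift⟩ := exists_mem_chainGraph hq hx hc (.inl rfl) hw
  obtain ⟨T', hT', hdiag', hshift'⟩ := exists_mem_chainGraph hq hx hc (.inr rfl) hw'
  have hmem (i j) := mem_jointGraph.2 ⟨hT i j, hT' i j⟩
  obtain ⟨ρ, φ, hρφ, hρ⟩ := exists_isToeplitzPair_of_graph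
    (adjoint_chainIncl_comp_chainIncl hw.norm_eq_one)
    (adjoint_chainIncl_comp_chainIncl hw'.norm_eq_one)
    (fun _ ↦ eq_zero_of_adjoint_chainIncl_eq_zero _ _ htotal)
    (s := {a | ∃ i j, a = star (x i) * x j}) (by rintro _ ⟨i, j, rfl⟩; exact ⟨_, hmem i j⟩)
  have hrange (i j) : (T i j, T' i j) ∈ ρ.range :=
    ⟨⟨_, star_mul_mem_Cqc x i j⟩, hρ _ _ _ _ (hmem i j)⟩
  exact ⟨ρ, φ, hρφ, ⟨_, _, hrange 0 0, hdiag, hdiag'⟩, _, _, hrange 0 1, hshift, hshift'⟩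

end Representation

/-! ### Compact operators in the image -/

section Compact

lemma map_mem_of_isCompactOperator_adjoint {E : Type*} [NormedRing E] [NormedAlgebra ℂ E]
    [StarRing E] [StarModule ℂ E] {A : StarSubalgebra ℂ E} (hA : IsClosed (A : Set E))
    {j : (Hnat →L[ℂ] Hnat) →L[ℂ] E} {B : Hnat →L[ℂ] Hnat} {β : ℕ → ℂ} {Q : E} (hQ : Q ∈ A)
    (hB : ∀ n, B (stdBasis ℕ n) = β n • stdBasis ℕ (n + 1)) (hβ : ∀ n, β n ≠ 0)
    (hleft : ∀ T, Q * j T = j (B * T)) (hright : ∀ T, j T * star Q = j (T * adjoint B))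
    (h₀ : j (rankOne ℂ (stdBasis ℕ 0) (stdBasis ℕ 0)) ∈ A) {K : Hnat →L[ℂ] Hnat}
    (hK : IsCompactOperator (adjoint K)) : j K ∈ A := by
  let P := A.toSubalgebra.toSubmodule.comap j.toLinearMap
  have hP : IsClosed (P : Set (Hnat →L[ℂ] Hnat)) := hA.preimage j.continuous
  have hleft' (T) (hT : T ∈ P) : B * T ∈ P := by
    change j (B * T) ∈ A
    rw [← hleft]
    exact mul_mem hQ hT
  have hright' (T) (hT : T ∈ P) : T * adjoint B ∈ P := by
    change j (T * adjoint B) ∈ A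
    rw [← hright]
    exact mul_mem hT (star_mem hQ)
  exact mem_of_isCompactOperator_adjoint hP hB hβ hleft' hright' h₀ hK

section Projections

variable {ν s c l : ℝ} {D : Hnat →L[ℂ] Hnat}

lemma smul_apply_of_geometric
    (hD : ∀ n, D (stdBasis ℕ n) = (c + (l * ν ^ n : ℝ) : ℂ) • stdBasis ℕ n) (r : ℝ) (n : ℕ) :
    ((r : ℂ) • D) (stdBasis ℕ n) = ((r * (c + l * ν ^ n) : ℝ) : ℂ) • stdBasis ℕ n := by
  rw [smul_apply, hD, smul_smul, Complex.ofReal_mul r, Complex.ofReal_add c]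

lemma one_sub_smul_apply_of_geometric
    (hD : ∀ n, D (stdBasis ℕ n) = (c + (l * ν ^ n : ℝ) : ℂ) • stdBasis ℕ n) (r : ℝ) (n : ℕ) :
    (1 - (r : ℂ) • D) (stdBasis ℕ n) =
      ((1 - r * (c + l * ν ^ n) : ℝ) : ℂ) • stdBasis ℕ n := by
  rw [sub_apply, smul_apply_of_geometric hD, one_apply_eq_self, Complex.ofReal_sub, sub_smul,
    Complex.ofReal_one, one_smul]

lemma tendsto_pow_rankOne_of_geometric (hν : ν ∈ Set.Ioo 0 1) (hs : s ∈ Set.Ioo 0 1)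
    (hD : ∀ n, D (stdBasis ℕ n) = ((s + (1 - s) * ν ^ n : ℝ) : ℂ) • stdBasis ℕ n) :
    Tendsto (fun N ↦ D ^ N) atTop (𝓝 (rankOne ℂ (stdBasis ℕ 0) (stdBasis ℕ 0))) := by
  obtain ⟨hs₀, hs₁⟩ := hs
  have h1s : 0 < 1 - s := sub_pos.2 hs₁
  refine tendsto_pow_rankOne_of_diagonal (ρ := s + (1 - s) * ν) hD
    (add_nonneg hs₀.le (mul_nonneg h1s.le hν.1.le)) ?_ (by simp) fun n hn ↦ ?_
  · linarith [mul_lt_mul_of_pos_left hν.2 h1s]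
  · have := hν.1.le
    rw [Complex.norm_of_nonneg (by positivity)]
    gcongr
    exact pow_le_of_le_one this hν.2.le hn

lemma tendsto_pow_zero_of_geometric (hν : ν ∈ Set.Ioo 0 1) (hs : s ∈ Set.Ioo 0 1)
    (hD : ∀ n, D (stdBasis ℕ n) = ((s * (1 - ν ^ n) : ℝ) : ℂ) • stdBasis ℕ n) :
    Tendsto (fun N ↦ D ^ N) atTop (𝓝 0) := by
  refine tendsto_pow_zero_of_diagonal hD hs.1.le hs.2 fun n ↦ ?_
  have hle : ν ^ n ≤ 1 := pow_le_one₀ hν.1.le hν.2.le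
  rw [Complex.norm_of_nonneg (mul_nonneg hs.1.le (sub_nonneg.2 hle))]
  exact mul_le_of_le_one_right hs.1.le (sub_le_self 1 (pow_nonneg hν.1.le n))

end Projections

variable {ν c : ℝ} {A : StarSubalgebra ℂ ((Hnat →L[ℂ] Hnat) × (Hnat →L[ℂ] Hnat))}
  {D D' B B' : Hnat →L[ℂ] Hnat} {β β' : ℕ → ℂ}

lemma rankOne_mem_of_diagonal (hA : IsClosed (A : Set ((Hnat →L[ℂ] Hnat) × (Hnat →L[ℂ] Hnat))))
    (hν : ν ∈ Set.Ioo 0 1) (hc : 0 < c) (hDA : (D, D') ∈ A)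
    (hD : ∀ n, D (stdBasis ℕ n) = (c + (1 * ν ^ n : ℝ) : ℂ) • stdBasis ℕ n)
    (hD' : ∀ n, D' (stdBasis ℕ n) = (c + (-c * ν ^ n : ℝ) : ℂ) • stdBasis ℕ n) :
    (rankOne ℂ (stdBasis ℕ 0) (stdBasis ℕ 0), 0) ∈ A ∧
      (0, rankOne ℂ (stdBasis ℕ 0) (stdBasis ℕ 0)) ∈ A := by
  have mem_of_tendsto_pow {S S' P P' : Hnat →L[ℂ] Hnat} (hmem : (S, S') ∈ A)
      (hS : Tendsto (fun N ↦ S ^ N) atTop (𝓝 P)) (hS' : Tendsto (fun N ↦ S' ^ N) atTop (𝓝 P')) :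
      (P, P') ∈ A :=
    hA.mem_of_tendsto (hS.prodMk_nhds hS') (.of_forall fun N ↦ pow_mem hmem N)
  -- `s` and `1 - s` are the limits of the eigenvalues of `r • D` and of `1 - r • D`.
  let r : ℝ := (1 + c)⁻¹
  let s : ℝ := c / (1 + c)
  have hs : s ∈ Set.Ioo 0 1 := ⟨by positivity, (div_lt_one (by positivity)).2 (by linarith)⟩
  have hs' : 1 - s ∈ Set.Ioo 0 1 := ⟨sub_pos.2 hs.2, sub_lt_self 1 hs.1⟩
  have hrD : ((r : ℂ) • D, (r : ℂ) • D') ∈ A := A.smul_mem hDA (r : ℂ)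
  have hsub : (1 - (r : ℂ) • D, 1 - (r : ℂ) • D') ∈ A := sub_mem (one_mem A) hrD
  constructor
  · refine mem_of_tendsto_pow hrD (tendsto_pow_rankOne_of_geometric hν hs fun n ↦ ?_)
      (tendsto_pow_zero_of_geometric hν hs fun n ↦ ?_)
    · rw [smul_apply_of_geometric hD]; congr 2; simp only [r, s]; field
    · rw [smul_apply_of_geometric hD']; congr 2; simp only [r, s]; field
  · refine mem_of_tendsto_pow hsub (tendsto_pow_zero_of_geometric hν hs' fun n ↦ ?_)
      (tendsto_pow_rankOne_of_geometric hν hs' fun n ↦ ?_)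
    · rw [one_sub_smul_apply_of_geometric hD]; congr 2; simp only [r, s]; field
    · rw [one_sub_smul_apply_of_geometric hD']; congr 2; simp only [r, s]; field

lemma prodMk_mem_of_mem_compactOps
    (hA : IsClosed (A : Set ((Hnat →L[ℂ] Hnat) × (Hnat →L[ℂ] Hnat)))) (hBA : (B, B') ∈ A)
    (hB : ∀ n, B (stdBasis ℕ n) = β n • stdBasis ℕ (n + 1)) (hβ : ∀ n, β n ≠ 0)
    (hB' : ∀ n, B' (stdBasis ℕ n) = β' n • stdBasis ℕ (n + 1)) (hβ' : ∀ n, β' n ≠ 0)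
    (h₁ : (rankOne ℂ (stdBasis ℕ 0) (stdBasis ℕ 0), 0) ∈ A)
    (h₂ : (0, rankOne ℂ (stdBasis ℕ 0) (stdBasis ℕ 0)) ∈ A) {K K' : Hnat →L[ℂ] Hnat}
    (hK : K ∈ compactOps Hnat) (hK' : K' ∈ compactOps Hnat) : (K, K') ∈ A := by
  have hfst : (K, 0) ∈ A :=
    map_mem_of_isCompactOperator_adjoint (j := .inl ℂ _ _) hA hBA hB hβ
      (fun T ↦ by simp) (fun T ↦ by simp [Prod.star_def, star_eq_adjoint]) h₁ hK.2
  have hsnd : (0, K') ∈ A :=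
    map_mem_of_isCompactOperator_adjoint (j := .inr ℂ _ _) hA hBA hB' hβ'
      (fun T ↦ by simp) (fun T ↦ by simp [Prod.star_def, star_eq_adjoint]) h₂ hK'.2
  simpa using add_mem hfst hsnd

end Compact

/-! ### The extension by compact operators -/

namespace IsToeplitzPair

variable {A : Type*} [Ring A] [Algebra ℂ A] [StarRing A]
  {ρ : A →⋆ₐ[ℂ] (Hnat →L[ℂ] Hnat) × (Hnat →L[ℂ] Hnat)} {φ : A →⋆ₐ[ℂ] C(Circle, ℂ)}

lemma apply_eq_zero_iff (h : IsToeplitzPair ρ φ) (a : A) :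
    φ a = 0 ↔ (ρ a).1 ∈ compactOps Hnat ∧ (ρ a).2 ∈ compactOps Hnat := by
  simp only [← prodMk_zero_mem_symbolGraph]
  constructor
  · intro ha
    exact ⟨ha ▸ h.symbol_fst a, ha ▸ h.symbol_snd a⟩
  · intro ha
    exact symbol_unique (h.symbol_fst a) ha.1

lemma surjective (h : IsToeplitzPair ρ φ)
    (hcompact : ∀ K ∈ compactOps Hnat, ∀ K' ∈ compactOps Hnat, (K, K') ∈ ρ.range)
    {a : A} {β : ℕ → ℂ} {z : ℂ} (hz : z ≠ 0) (hβ : Tendsto β atTop (𝓝 z))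
    (ha : ∀ n, (ρ a).1 (stdBasis ℕ n) = β n • stdBasis ℕ (n + 1)) : Function.Surjective φ := by
  have hiff (f) : f ∈ φ.range ↔ (toeplitz f, toeplitz f) ∈ ρ.range := by
    constructor
    · rintro ⟨a, rfl⟩
      have hsub := hcompact _ (sub_toeplitz_mem_compactOps (h.symbol_fst a)) _
        (sub_toeplitz_mem_compactOps (h.symbol_snd a))
      have := sub_mem (show ρ a ∈ ρ.range from ⟨a, rfl⟩) hsub
      rwa [← Prod.mk.eta (p := ρ a), Prod.mk_sub_mk, sub_sub_cancel, sub_sub_cancel] at this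
    · rintro ⟨a, ha⟩
      have hfst := h.symbol_fst a
      rw [show (ρ a).1 = toeplitz f from congrArg Prod.fst ha] at hfst
      exact ⟨a, symbol_unique hfst (toeplitz_mem_symbolGraph f)⟩
  have hclosed : IsClosed (φ.range : Set C(Circle, ℂ)) := by
    convert h.isClosed_range.preimage (continuous_toeplitz.prodMk continuous_toeplitz)
    ext f
    exact hiff f
  have hφa : φ a = z • circleCoord := symbol_unique (h.symbol_fst a)
    (mem_symbolGraph_of_weightedShift ha (by rwa [Nat.cofinite_eq_atTop]))
  have hcoord : circleCoord ∈ φ.range := ⟨z⁻¹ • a, by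
    change φ (z⁻¹ • a) = _
    rw [map_smul, hφa, inv_smul_smul₀ hz]⟩
  intro f
  exact (eq_top_of_circleCoord_mem hclosed hcoord).ge (StarSubalgebra.mem_top (x := f))

lemma nonempty_ker_starAlgEquiv (h : IsToeplitzPair ρ φ)
    (hcompact : ∀ K ∈ compactOps Hnat, ∀ K' ∈ compactOps Hnat, (K, K') ∈ ρ.range) :
    Nonempty (starAlgHomKer φ ≃⋆ₐ[ℂ] (compactOps Hnat × compactOps Hnat)) := by
  have hρ (a : starAlgHomKer φ) := (h.apply_eq_zero_iff a).1 a.2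
  let e (a : starAlgHomKer φ) : compactOps Hnat × compactOps Hnat :=
    (⟨(ρ a).1, (hρ a).1⟩, ⟨(ρ a).2, (hρ a).2⟩)
  have he : Function.Bijective e := by
    constructor
    · intro a b hab
      refine Subtype.ext (h.injective (Prod.ext ?_ ?_))
      · exact congrArg (fun p ↦ (p.1 : Hnat →L[ℂ] Hnat)) hab
      · exact congrArg (fun p ↦ (p.2 : Hnat →L[ℂ] Hnat)) hab
    · rintro ⟨⟨K, hK⟩, K', hK'⟩
      obtain ⟨a, ha⟩ := hcompact K hK K' hK'
      have ha' : ρ a = (K, K') := ha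
      refine ⟨⟨a, (h.apply_eq_zero_iff a).2 (by simp [ha', hK, hK'])⟩, ?_⟩
      ext1 <;> simp [e, ha']
  have e_eq_of_eq {a : starAlgHomKer φ} {p : compactOps Hnat × compactOps Hnat}
      (ha : ρ a = ((p.1 : Hnat →L[ℂ] Hnat), (p.2 : Hnat →L[ℂ] Hnat))) : e a = p :=
    Prod.ext (Subtype.ext (congrArg Prod.fst ha)) (Subtype.ext (congrArg Prod.snd ha))
  exact ⟨{ Equiv.ofBijective e he with
    map_mul' a b := e_eq_of_eq (map_mul ρ (a : A) b)
    map_add' a b := e_eq_of_eq (map_add ρ (a : A) b)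
    map_star' a := e_eq_of_eq (map_star ρ (a : A))
    map_smul' z a := e_eq_of_eq (map_smul ρ z (a : A)) }⟩

end IsToeplitzPair

end Podles

/-- For all reals `q > 1` and `0 < c < ∞`, there is a surjective unital *-homomorphism
`φ` from `C_{q,c}` onto `C(𝕋)`, whose kernel is isomorphic, as a non-unital C*-algebra
(via a *-algebra isomorphism), to `K(ℓ²(ℕ)) ⊕ K(ℓ²(ℕ))`.  Equivalently, there is a short
exact sequence `0 → K ⊕ K → C(S²_{μc}) → C(S¹) → 0`. -/
theorem stmt_3 (q : ℝ) (hq : 1 < q) (c : ℝ) (hc : 0 < c)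
    (x : Fin 2 → (HC →L[ℂ] HC)) (hx : IsXPair q c x) :
    ∃ φ : (Cqc x) →⋆ₐ[ℂ] C(Circle, ℂ),
      Function.Surjective φ ∧
      Nonempty ((starAlgHomKer φ) ≃⋆ₐ[ℂ] (↥(compactOps Hnat) × ↥(compactOps Hnat))) := by
  obtain ⟨ρ, φ, h, ⟨D, D', hDρ, hD, hD'⟩, B, B', ⟨b, hb⟩, hB, hB'⟩ :=
    Podles.exists_isToeplitzPair hq hx hc
  have hν := Podles.sq_mem_Ioo (Podles.inv_mem_Ioo hq)
  have hweight (l : ℝ) (hl : l = 1 ∨ l = -c) (n : ℕ) :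
      (Podles.weight (q⁻¹ ^ 2) c l n : ℂ) ≠ 0 :=
    Complex.ofReal_ne_zero.2 (Podles.weight_pos hν hc hl n).ne'
  have hcompact (K) (hK : K ∈ compactOps Hnat) (K') (hK' : K' ∈ compactOps Hnat) :
      (K, K') ∈ ρ.range := by
    obtain ⟨h₁, h₂⟩ := Podles.rankOne_mem_of_diagonal h.isClosed_range hν hc hDρ hD hD'
    exact Podles.prodMk_mem_of_mem_compactOps h.isClosed_range ⟨b, hb⟩ hB (hweight 1 (.inl rfl))
      hB' (hweight (-c) (.inr rfl)) h₁ h₂ hK hK'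
  have hlimit : (√c : ℂ) ≠ 0 := Complex.ofReal_ne_zero.2 (Real.sqrt_ne_zero'.2 hc)
  have hb_fst (n) := (congrArg (fun p ↦ p.1 (Podles.stdBasis ℕ n)) hb).trans (hB n)
  exact ⟨φ, h.surjective hcompact hlimit (Podles.tendsto_weight hν c 1).ofReal hb_fst,
    h.nonempty_ker_starAlgEquiv hcompact⟩
end
end
end

section
/- For all real numbers q, q' > 1 and all c, c' with 0 < c, c' < ∞, the C*-algebras C_{q,c} and C_{q',c'} are isomorphic as unital C*-algebras (each being isomorphic to the C*-algebra of the groupoid 𝔊'); in particular the C*-algebra of the nonstandard Podleś quantum 2-sphere is independent of the parameters q and c. -/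
set_option synthInstance.maxHeartbeats 1000000
set_option maxHeartbeats 1000000

noncomputable section

/-!
Write `μ = q⁻¹`, `A = x₁* x₁ - c` and `B = x₁* x₂`. The relations of the quantum sphere express
`x₂* x₂`, `B B*` and `B* B` as polynomials in `A` and give `A B = μ² B A`. As
`B* B ≥ c (1 - μ²) > 0`, the operator `B` has a polar decomposition `B = V |B|` inside the algebra,
with an isometry `V`, and `A V = μ² V A`. On the cokernel `E = 1 - V V*` the operator `A` equals
`(1 + c) P - c` for a projection `P ≤ E`, so `A - μ² V A V*` lies in the algebra generated by `V`
and `P`; iterating this, so does `A`, hence so does `B`. Thus `C_{q,c}` is generated by `V` and `P`.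

`A V = μ² V A` and the injectivity of `A` make `V` a pure isometry, so by the Wold decomposition
the pair `(V, P)` is determined up to unitary equivalence by the ranks of `P` and `E - P`. These are
the dimensions of `ker x₂*` and `ker x₁`, which are countably infinite whatever `q` and `c` are.
-/

section ClosedStarSubalgebra

open StarAlgebra StarSubalgebra

theorem nonempty_starAlgEquiv_topologicalClosure_adjoin_image {M N : Type*} [CStarAlgebra M]
    [CStarAlgebra N] (Φ : M ≃⋆ₐ[ℂ] N) (s : Set M) :
    Nonempty ((adjoin ℂ s).topologicalClosure ≃⋆ₐ[ℂ] (adjoin ℂ (Φ '' s)).topologicalClosure) := by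
  let φ : M →⋆ₐ[ℂ] N := Φ
  have hφ : Topology.IsClosedEmbedding φ := (StarAlgEquiv.isometry Φ).isClosedEmbedding
  have himage : (adjoin ℂ s).topologicalClosure.map φ = (adjoin ℂ (Φ '' s)).topologicalClosure := by
    rw [← topologicalClosure_map _ _ hφ.isClosedMap hφ.continuous, StarAlgHom.map_adjoin]
    rfl
  let ψ := φ.comp (adjoin ℂ s).topologicalClosure.subtype
  have hψ : Function.Injective ψ := Φ.injective.comp Subtype.val_injective
  have hrange : ψ.range = (adjoin ℂ (Φ '' s)).topologicalClosure := by
    rw [← himage]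
    exact SetLike.coe_injective (by simp [ψ, Set.range_comp, StarAlgHom.range])
  exact ⟨hrange ▸ StarAlgEquiv.ofInjective ψ hψ⟩

theorem mem_of_sub_smul_conj_mem {𝕜 M : Type*} [NormedField 𝕜] [StarRing 𝕜] [NormedRing M]
    [StarRing M] [NormedStarGroup M] [NormedAlgebra 𝕜 M] [StarModule 𝕜 M]
    {S : StarSubalgebra 𝕜 M} (hS : IsClosed (S : Set M)) {V A : M} {r : 𝕜} (hV : V ∈ S)
    (hV1 : ‖V‖ ≤ 1) (hr : ‖r‖ < 1) (h : A - r • (V * A * star V) ∈ S) : A ∈ S := by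
  have approx (n : ℕ) : ∃ R, A - R ∈ S ∧ ‖R‖ ≤ ‖r‖ ^ n * ‖A‖ := by
    induction n with
    | zero => exact ⟨A, by simp⟩
    | succ n ih =>
      obtain ⟨R, hRS, hR⟩ := ih
      refine ⟨r • (V * R * star V), ?_, ?_⟩
      · have : A - r • (V * R * star V) =
            (A - r • (V * A * star V)) + r • (V * (A - R) * star V) := by
          rw [mul_sub, sub_mul, smul_sub]; abel
        rw [this]
        exact add_mem h (SMulMemClass.smul_mem _ (mul_mem (mul_mem hV hRS) (star_mem hV)))
      · calc ‖r • (V * R * star V)‖ ≤ ‖r‖ * (‖V‖ * ‖R‖ * ‖star V‖) := by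
              rw [norm_smul]; gcongr; exact norm_mul₃_le
          _ ≤ ‖r‖ * (1 * ‖R‖ * 1) := by rw [norm_star]; gcongr
          _ ≤ ‖r‖ ^ (n + 1) * ‖A‖ := by rw [one_mul, mul_one, pow_succ', mul_assoc]; gcongr
  choose R hRS hR using approx
  have hR0 : Filter.Tendsto R Filter.atTop (nhds 0) := by
    refine squeeze_zero_norm hR ?_
    simpa using (tendsto_pow_atTop_nhds_zero_of_lt_one (norm_nonneg r) hr).mul_const ‖A‖
  have hA : Filter.Tendsto (fun n => A - R n) Filter.atTop (nhds A) := by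
    simpa using hR0.const_sub A
  exact hS.mem_of_tendsto hA (Filter.Eventually.of_forall hRS)

theorem norm_le_one_of_star_mul_self_eq_one {M : Type*} [NormedRing M] [StarRing M] [CStarRing M]
    {V : M} (hV : star V * V = 1) : ‖V‖ ≤ 1 := by
  rcases subsingleton_or_nontrivial M with _ | _
  · simp [Subsingleton.elim V 0]
  · have hnorm : ‖V‖ * ‖V‖ = 1 := by
      rw [← CStarRing.norm_star_mul_self, hV, CStarRing.norm_one]
    nlinarith [norm_nonneg V]

theorem real_smul_mem {M : Type*} [CStarAlgebra M] {S : StarSubalgebra ℂ M} (r : ℝ) {z : M}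
    (hz : z ∈ S) : r • z ∈ S := by
  rw [← Complex.coe_smul]
  exact S.smul_mem hz r

end ClosedStarSubalgebra

section Polar

variable {M : Type*} [CStarAlgebra M] [PartialOrder M] [StarOrderedRing M] {x : M}

/-- The isometry `x |x|⁻¹` in the polar decomposition of an element `x` for which `star x * x` is
invertible. -/
def polarIsometry (x : M) : M := x * (star x * x) ^ (-(1 / 2) : ℝ)

theorem star_polarIsometry_mul_self (hx : IsStrictlyPositive (star x * x)) :
    star (polarIsometry x) * polarIsometry x = 1 := by
  have h : star ((star x * x) ^ (-(1 / 2) : ℝ)) = (star x * x) ^ (-(1 / 2) : ℝ) :=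
    CFC.rpow_nonneg.isSelfAdjoint
  rw [polarIsometry, star_mul, h]
  simpa [mul_assoc] using CFC.conjugate_rpow_neg_one_half (star x * x)

theorem polarIsometry_mul_rpow (hx : IsStrictlyPositive (star x * x)) :
    polarIsometry x * (star x * x) ^ (1 / 2 : ℝ) = x := by
  rw [polarIsometry, mul_assoc, CFC.rpow_neg_mul_rpow (1 / 2) hx, mul_one]

theorem rpow_mem_of_isClosed {S : StarSubalgebra ℂ M} (hS : IsClosed (S : Set M)) {z : M}
    (hz : 0 ≤ z) (hzS : z ∈ S) (r : ℝ) : z ^ r ∈ S := by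
  rw [CFC.rpow_eq_cfc_real]
  exact cfc_mem (𝕜' := ℂ) _ hzS

end Polar

section Podles

variable {M : Type*} {μ c : ℝ} {a b : M}

/-- The quadratic relations between the coordinates `a = x₁` and `b = x₂` of the nonstandard quantum
projective line with parameters `μ = q⁻¹` and `c`. -/
structure IsPodlesPair [Ring M] [StarRing M] [Algebra ℝ M] (μ c : ℝ) (a b : M) : Prop where
  mul_star : a * star a + b * star b = (1 + c) • 1
  star_mul : μ ^ 2 • (star a * a) + star b * b = (1 + μ ^ 2 * c) • 1

/-- The self-adjoint generator `x₁* x₁ - c` of the Podleś sphere. -/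
def podlesA [Ring M] [StarRing M] [Algebra ℝ M] (c : ℝ) (a : M) : M := star a * a - c • 1

theorem isSelfAdjoint_podlesA [Ring M] [StarRing M] [Algebra ℝ M] [StarModule ℝ M] (c : ℝ) (a : M) :
    IsSelfAdjoint (podlesA c a) :=
  (IsSelfAdjoint.star_mul_self a).sub ((IsSelfAdjoint.all c).smul (.one M))

theorem star_mul_self_eq_podlesA_add [Ring M] [StarRing M] [Algebra ℝ M] (c : ℝ) (a : M) :
    star a * a = podlesA c a + c • 1 :=
  (sub_add_cancel _ _).symm

/-- The generator `x₁* x₂` of the Podleś sphere. -/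
def podlesB [Mul M] [Star M] (a b : M) : M := star a * b

theorem star_podlesB [Mul M] [StarMul M] (a b : M) : star (podlesB a b) = star b * a := by
  rw [podlesB, star_mul, star_star]

/-- The isometry in the polar decomposition of `podlesB a b`. -/
def podlesV [CStarAlgebra M] [PartialOrder M] [StarOrderedRing M] (a b : M) : M :=
  polarIsometry (podlesB a b)

/-- The compression of `(1 + c)⁻¹ x₁* x₁` to the cokernel of the isometry `podlesV a b`; in the
concrete representation it is the projection of that cokernel onto the part orthogonal to
`ker x₁`. -/
def podlesP [CStarAlgebra M] [PartialOrder M] [StarOrderedRing M] (c : ℝ) (a b : M) : M :=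
  (1 + c)⁻¹ • (star a * a * (1 - podlesV a b * star (podlesV a b)))

theorem podlesV_mem [CStarAlgebra M] [PartialOrder M] [StarOrderedRing M] {S : StarSubalgebra ℂ M}
    (hS : IsClosed (S : Set M)) (hB : podlesB a b ∈ S) : podlesV a b ∈ S :=
  mul_mem hB (rpow_mem_of_isClosed hS (star_mul_self_nonneg _) (mul_mem (star_mem hB) hB) _)

theorem podlesP_mem [CStarAlgebra M] [PartialOrder M] [StarOrderedRing M] {S : StarSubalgebra ℂ M}
    (hS : IsClosed (S : Set M)) (haa : star a * a ∈ S)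
    (hB : podlesB a b ∈ S) : podlesP c a b ∈ S := by
  have hV := podlesV_mem hS hB
  exact real_smul_mem _ (mul_mem haa (sub_mem (one_mem S) (mul_mem hV (star_mem hV))))

namespace IsPodlesPair

section Algebra

variable [Ring M] [StarRing M] [Algebra ℝ M]

theorem star_mul_self_eq_one_sub (h : IsPodlesPair μ c a b) :
    star b * b = 1 - μ ^ 2 • podlesA c a := by
  rw [eq_sub_of_add_eq' h.star_mul, podlesA]
  module

theorem mul_star_right (h : IsPodlesPair μ c a b) : b * star b = (1 + c) • 1 - a * star a :=
  eq_sub_of_add_eq' h.mul_star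

theorem mul_star_left (h : IsPodlesPair μ c a b) : a * star a = (1 + c) • 1 - b * star b :=
  eq_sub_of_add_eq h.mul_star

theorem podlesB_mul_star (h : IsPodlesPair μ c a b) : podlesB a b * star (podlesB a b) =
    c • 1 + (1 - c) • podlesA c a - podlesA c a * podlesA c a := by
  calc podlesB a b * star (podlesB a b) = star a * (b * star b) * a := by
        rw [star_podlesB, podlesB]; simp only [mul_assoc]
    _ = (1 + c) • (star a * a) - (star a * a) * (star a * a) := by
        rw [h.mul_star_right, mul_sub, sub_mul, mul_smul_comm, mul_one, smul_mul_assoc]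
        simp only [mul_assoc]
    _ = c • 1 + (1 - c) • podlesA c a - podlesA c a * podlesA c a := by
        rw [star_mul_self_eq_podlesA_add c]
        simp only [mul_add, add_mul, smul_mul_assoc, mul_smul_comm, one_mul, mul_one]
        module

theorem star_podlesB_mul (h : IsPodlesPair μ c a b) : star (podlesB a b) * podlesB a b =
    c • 1 + (μ ^ 2 * (1 - c)) • podlesA c a - μ ^ 4 • (podlesA c a * podlesA c a) := by
  calc star (podlesB a b) * podlesB a b = star b * (a * star a) * b := by
        rw [star_podlesB, podlesB]; simp only [mul_assoc]
    _ = (1 + c) • (star b * b) - (star b * b) * (star b * b) := by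
        rw [h.mul_star_left, mul_sub, sub_mul, mul_smul_comm, mul_one, smul_mul_assoc]
        simp only [mul_assoc]
    _ = c • 1 + (μ ^ 2 * (1 - c)) • podlesA c a - μ ^ 4 • (podlesA c a * podlesA c a) := by
        rw [h.star_mul_self_eq_one_sub]
        simp only [mul_sub, sub_mul, smul_mul_assoc, mul_smul_comm, one_mul, mul_one]
        module

theorem podlesA_mul_podlesB (h : IsPodlesPair μ c a b) :
    podlesA c a * podlesB a b = μ ^ 2 • (podlesB a b * podlesA c a) := by
  calc podlesA c a * podlesB a b = star a * (a * star a) * b - c • (star a * b) := by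
        rw [podlesA, podlesB, sub_mul, smul_mul_assoc, one_mul]; simp only [mul_assoc]
    _ = star a * b - star a * b * (star b * b) := by
        rw [h.mul_star_left, mul_sub, sub_mul, mul_smul_comm, mul_one, smul_mul_assoc]
        simp only [mul_assoc]
        module
    _ = μ ^ 2 • (podlesB a b * podlesA c a) := by
        rw [h.star_mul_self_eq_one_sub, mul_sub, mul_one, sub_sub_cancel, mul_smul_comm, podlesB]

theorem star_podlesB_mul_eq_add (h : IsPodlesPair μ c a b) : star (podlesB a b) * podlesB a b =
    (c * (1 - μ ^ 2)) • 1 + (μ ^ 2 • (podlesB a b * star (podlesB a b)) +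
      (μ ^ 2 * (1 - μ ^ 2)) • (podlesA c a * podlesA c a)) := by
  rw [h.star_podlesB_mul, h.podlesB_mul_star]
  module

theorem commute_star_podlesB_mul (h : IsPodlesPair μ c a b) :
    Commute (star (podlesB a b) * podlesB a b) (podlesA c a) := by
  rw [h.star_podlesB_mul]
  refine .sub_left (.add_left ?_ ?_) ?_
  · exact (Commute.one_left _).smul_left _
  · exact (Commute.refl _).smul_left _
  · exact ((Commute.refl _).mul_left (Commute.refl _)).smul_left _

end Algebra

section CStarAlgebra

variable [CStarAlgebra M] [PartialOrder M] [StarOrderedRing M]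

theorem isStrictlyPositive_star_podlesB_mul (h : IsPodlesPair μ c a b) (hμ : μ ^ 2 < 1)
    (hc : 0 < c) : IsStrictlyPositive (star (podlesB a b) * podlesB a b) := by
  have hδ : 0 < c * (1 - μ ^ 2) := mul_pos hc (sub_pos.2 hμ)
  have hμ' : 0 ≤ 1 - μ ^ 2 := (sub_pos.2 hμ).le
  have hA : 0 ≤ podlesA c a * podlesA c a := (isSelfAdjoint_podlesA c a).mul_self_nonneg
  rw [h.star_podlesB_mul_eq_add]
  refine (isStrictlyPositive_one.smul hδ).add_nonneg (add_nonneg ?_ ?_)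
  · exact smul_nonneg (sq_nonneg μ) (mul_star_self_nonneg _)
  · exact smul_nonneg (mul_nonneg (sq_nonneg μ) hμ') hA

theorem podlesA_mul_podlesV (h : IsPodlesPair μ c a b) :
    podlesA c a * podlesV a b = μ ^ 2 • (podlesV a b * podlesA c a) := by
  have hcomm := h.commute_star_podlesB_mul.cfc_nnreal (· ^ (-(1 / 2) : ℝ))
  rw [podlesV, polarIsometry, CFC.rpow_def, ← mul_assoc, h.podlesA_mul_podlesB, smul_mul_assoc,
    mul_assoc, mul_assoc, hcomm.eq]

theorem star_podlesV_mul_self (h : IsPodlesPair μ c a b) (hμ : μ ^ 2 < 1) (hc : 0 < c) :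
    star (podlesV a b) * podlesV a b = 1 :=
  star_polarIsometry_mul_self (h.isStrictlyPositive_star_podlesB_mul hμ hc)

theorem podlesA_mem (h : IsPodlesPair μ c a b) {S : StarSubalgebra ℂ M}
    (hS : IsClosed (S : Set M)) (hμ : μ ^ 2 < 1) (hc : 0 < c)
    (hV : podlesV a b ∈ S) (hP : podlesP c a b ∈ S) : podlesA c a ∈ S := by
  set V := podlesV a b
  set E := 1 - V * star V with hE
  have hES : E ∈ S := sub_mem (one_mem S) (mul_mem hV (star_mem hV))
  have hdefect : podlesA c a - ((μ ^ 2 : ℝ) : ℂ) • (V * podlesA c a * star V) =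
      (1 + c) • podlesP c a b - c • E := by
    calc podlesA c a - ((μ ^ 2 : ℝ) : ℂ) • (V * podlesA c a * star V)
        = podlesA c a * E := by
          rw [Complex.coe_smul, ← smul_mul_assoc, ← h.podlesA_mul_podlesV, hE, mul_sub, mul_one,
            mul_assoc]
      _ = star a * a * E - c • E := by rw [podlesA, sub_mul, smul_mul_assoc, one_mul]
      _ = (1 + c) • podlesP c a b - c • E := by
          rw [podlesP, smul_inv_smul₀ (by positivity)]
  refine mem_of_sub_smul_conj_mem hS hV
    (norm_le_one_of_star_mul_self_eq_one (h.star_podlesV_mul_self hμ hc)) ?_ ?_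
    (r := ((μ ^ 2 : ℝ) : ℂ))
  · simpa using hμ
  · rw [hdefect]
    exact sub_mem (real_smul_mem _ hP) (real_smul_mem _ hES)

theorem podlesB_mem (h : IsPodlesPair μ c a b) {S : StarSubalgebra ℂ M}
    (hS : IsClosed (S : Set M)) (hμ : μ ^ 2 < 1) (hc : 0 < c)
    (hV : podlesV a b ∈ S) (hA : podlesA c a ∈ S) : podlesB a b ∈ S := by
  have hBB : star (podlesB a b) * podlesB a b ∈ S := by
    rw [h.star_podlesB_mul]
    exact sub_mem (add_mem (real_smul_mem _ (one_mem S)) (real_smul_mem _ hA))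
      (real_smul_mem _ (mul_mem hA hA))
  rw [← polarIsometry_mul_rpow (h.isStrictlyPositive_star_podlesB_mul hμ hc)]
  exact mul_mem hV (rpow_mem_of_isClosed hS (star_mul_self_nonneg _) hBB _)

theorem topologicalClosure_adjoin_eq (h : IsPodlesPair μ c a b) (hμ : μ ^ 2 < 1) (hc : 0 < c) :
    (StarAlgebra.adjoin ℂ {star a * a, star a * b, star b * a, star b * b}).topologicalClosure =
      (StarAlgebra.adjoin ℂ {podlesV a b, podlesP c a b}).topologicalClosure := by
  refine le_antisymm
    (StarSubalgebra.topologicalClosure_minimal (StarAlgebra.adjoin_le ?_)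
      (StarSubalgebra.isClosed_topologicalClosure _))
    (StarSubalgebra.topologicalClosure_minimal (StarAlgebra.adjoin_le ?_)
      (StarSubalgebra.isClosed_topologicalClosure _))
  · set S := (StarAlgebra.adjoin ℂ {podlesV a b, podlesP c a b}).topologicalClosure
    have hS : IsClosed (S : Set M) := StarSubalgebra.isClosed_topologicalClosure _
    have hsub : {podlesV a b, podlesP c a b} ⊆ (S : Set M) :=
      (StarAlgebra.subset_adjoin ℂ _).trans (StarSubalgebra.le_topologicalClosure _)
    have hV : podlesV a b ∈ S := hsub (by simp)
    have hA : podlesA c a ∈ S := h.podlesA_mem hS hμ hc hV (hsub (by simp))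
    have hB : podlesB a b ∈ S := h.podlesB_mem hS hμ hc hV hA
    rintro _ (rfl | rfl | rfl | rfl)
    · rw [star_mul_self_eq_podlesA_add c]
      exact add_mem hA (real_smul_mem _ (one_mem S))
    · exact hB
    · rw [← star_podlesB]
      exact star_mem hB
    · rw [h.star_mul_self_eq_one_sub]
      exact sub_mem (one_mem S) (real_smul_mem _ hA)
  · set S := (StarAlgebra.adjoin ℂ
      {star a * a, star a * b, star b * a, star b * b}).topologicalClosure
    have hS : IsClosed (S : Set M) := StarSubalgebra.isClosed_topologicalClosure _
    have hsub : {star a * a, star a * b, star b * a, star b * b} ⊆ (S : Set M) :=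
      (StarAlgebra.subset_adjoin ℂ _).trans (StarSubalgebra.le_topologicalClosure _)
    have hB : podlesB a b ∈ S := hsub (by simp [podlesB])
    rintro _ (rfl | rfl)
    · exact podlesV_mem hS hB
    · exact podlesP_mem hS (hsub (by simp)) hB

end CStarAlgebra

end IsPodlesPair

end Podles

section HilbertSpace

open scoped InnerProductSpace
open Submodule ContinuousLinearMap

variable {𝕜 H ι κ : Type*} [RCLike 𝕜] [NormedAddCommGroup H] [InnerProductSpace 𝕜 H]

/-- `b` is an orthonormal family in the subspace `K`, complete in `K`: a Hilbert basis of `K`,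
stated so that neither closedness of `K` nor the coordinates in `ℓ²` have to be supplied. -/
structure IsHilbertBasisOf (K : Submodule 𝕜 H) (b : ι → H) : Prop where
  orthonormal : Orthonormal 𝕜 b
  mem (i : ι) : b i ∈ K
  eq_zero {v : H} : v ∈ K → (∀ i, ⟪b i, v⟫_𝕜 = 0) → v = 0

namespace IsHilbertBasisOf

variable {K K' : Submodule 𝕜 H} {b : ι → H} {b' : κ → H}

theorem sumElim (hb : IsHilbertBasisOf K b) (hb' : IsHilbertBasisOf K' b') (hKK' : K ⟂ K') :
    IsHilbertBasisOf (K ⊔ K') (Sum.elim b b') where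
  orthonormal := by
    classical
    rw [orthonormal_iff_ite]
    have hb₁ := orthonormal_iff_ite.1 hb.orthonormal
    have hb₂ := orthonormal_iff_ite.1 hb'.orthonormal
    rintro (i | i) (j | j)
    · simpa using hb₁ i j
    · simpa using hKK'.inner_eq (hb.mem i) (hb'.mem j)
    · simpa using hKK'.symm.inner_eq (hb'.mem i) (hb.mem j)
    · simpa using hb₂ i j
  mem := by
    rintro (i | i)
    · exact mem_sup_left (hb.mem i)
    · exact mem_sup_right (hb'.mem i)
  eq_zero {v} hv horth := by
    obtain ⟨y, hy, z, hz, rfl⟩ := mem_sup.1 hv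
    have hy0 : y = 0 := hb.eq_zero hy fun i => by
      simpa [inner_add_right, hKK'.inner_eq (hb.mem i) hz] using horth (.inl i)
    have hz0 : z = 0 := hb'.eq_zero hz fun i => by
      simpa [inner_add_right, hKK'.symm.inner_eq (hb'.mem i) hy] using horth (.inr i)
    rw [hy0, hz0, add_zero]

theorem map (hb : IsHilbertBasisOf K b) {T : H →ₗ[𝕜] H} {r : ℝ} (hr : 0 < r)
    (hT : ∀ v ∈ K, ∀ w ∈ K, ⟪T v, T w⟫_𝕜 = r * ⟪v, w⟫_𝕜) :
    IsHilbertBasisOf (K.map T) fun i => (((√r)⁻¹ : ℝ) : 𝕜) • T (b i) where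
  orthonormal := by
    classical
    rw [orthonormal_iff_ite]
    intro i j
    have hsq : (((√r)⁻¹ : ℝ) : 𝕜) * ((((√r)⁻¹ : ℝ) : 𝕜) * r) = 1 := by
      rw [← RCLike.ofReal_mul, ← RCLike.ofReal_mul, ← mul_assoc, ← mul_inv,
        Real.mul_self_sqrt hr.le, inv_mul_cancel₀ hr.ne', RCLike.ofReal_one]
    rw [inner_smul_left, inner_smul_right, hT _ (hb.mem i) _ (hb.mem j), RCLike.conj_ofReal,
      ← orthonormal_iff_ite.1 hb.orthonormal i j]
    linear_combination ⟪b i, b j⟫_𝕜 * hsq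
  mem i := (K.map T).smul_mem _ (mem_map_of_mem (hb.mem i))
  eq_zero := by
    rintro _ ⟨v, hv, rfl⟩ horth
    have hv0 : v = 0 := hb.eq_zero hv fun i => by
      simpa [inner_smul_left, hT _ (hb.mem i) _ hv, hr.ne', (Real.sqrt_pos.2 hr).ne'] using horth i
    rw [hv0, map_zero]

end IsHilbertBasisOf

theorem clm_ext_of_hilbertBasis {F : Type*} [NormedAddCommGroup F] [NormedSpace 𝕜 F]
    (B : HilbertBasis ι 𝕜 H) {S T : H →L[𝕜] F} (h : ∀ i, S (B i) = T (B i)) : S = T :=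
  ContinuousLinearMap.ext_on (Submodule.dense_iff_topologicalClosure_eq_top.2 B.dense_span)
    (by rintro _ ⟨i, rfl⟩; exact h i)

variable [CompleteSpace H] {V : H →L[𝕜] H}

theorem inner_star_left (T : H →L[𝕜] H) (v w : H) : ⟪star T v, w⟫_𝕜 = ⟪v, T w⟫_𝕜 :=
  adjoint_inner_left T w v

theorem inner_star_right (T : H →L[𝕜] H) (v w : H) : ⟪v, star T w⟫_𝕜 = ⟪T v, w⟫_𝕜 :=
  adjoint_inner_right T v w

theorem star_apply_apply_of_star_mul_self (hV : star V * V = 1) (v : H) : star V (V v) = v :=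
  congr($hV v)

theorem inner_pow_apply_of_star_mul_self (hV : star V * V = 1) (n : ℕ) (v w : H) :
    ⟪(V ^ n) v, (V ^ n) w⟫_𝕜 = ⟪v, w⟫_𝕜 := by
  induction n with
  | zero => rfl
  | succ n ih =>
    rw [pow_succ', mul_apply_eq_comp, mul_apply_eq_comp, ← inner_star_left,
      star_apply_apply_of_star_mul_self hV, ih]

theorem norm_pow_apply_of_star_mul_self (hV : star V * V = 1) (n : ℕ) (v : H) :
    ‖(V ^ n) v‖ = ‖v‖ := by
  rw [norm_eq_sqrt_re_inner (𝕜 := 𝕜), inner_pow_apply_of_star_mul_self hV,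
    ← norm_eq_sqrt_re_inner]

theorem apply_eq_zero_of_mem_range_pow (hV : star V * V = 1) {A : H →L[𝕜] H} {r : 𝕜}
    (hr : ‖r‖ < 1) (hAV : A * V = r • (V * A)) {w : H} (hw : ∀ n, ∃ y, (V ^ n) y = w) :
    A w = 0 := by
  have hAVpow (n : ℕ) : A * V ^ n = r ^ n • (V ^ n * A) := by
    induction n with
    | zero => simp
    | succ n ih =>
      rw [pow_succ, ← mul_assoc, ih, smul_mul_assoc, mul_assoc, hAV, mul_smul_comm, smul_smul,
        ← mul_assoc, pow_succ]
  have bound (n : ℕ) : ‖A w‖ ≤ ‖r‖ ^ n * (‖A‖ * ‖w‖) := by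
    obtain ⟨y, rfl⟩ := hw n
    calc ‖A ((V ^ n) y)‖ = ‖r‖ ^ n * ‖A y‖ := by
          rw [← mul_apply_eq_comp, hAVpow, smul_apply, norm_smul, norm_pow, mul_apply_eq_comp,
            norm_pow_apply_of_star_mul_self hV]
      _ ≤ ‖r‖ ^ n * (‖A‖ * ‖(V ^ n) y‖) := by
          rw [norm_pow_apply_of_star_mul_self hV]
          gcongr
          exact A.le_opNorm y
  have hlim : Filter.Tendsto (fun n : ℕ => ‖r‖ ^ n * (‖A‖ * ‖w‖)) Filter.atTop (nhds 0) := by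
    simpa using (tendsto_pow_atTop_nhds_zero_of_lt_one (norm_nonneg r) hr).mul_const (‖A‖ * ‖w‖)
  exact norm_le_zero_iff.1 (ge_of_tendsto' hlim bound)

section Wold

variable {b : ι → H}

theorem IsHilbertBasisOf.orthonormal_pow (hV : star V * V = 1)
    (hb : IsHilbertBasisOf ((star V).ker) b) :
    Orthonormal 𝕜 fun p : ι × ℕ => (V ^ p.2) (b p.1) := by
  classical
  have hker (i : ι) : star V (b i) = 0 := hb.mem i
  have horth (i j : ι) (k n : ℕ) : ⟪(V ^ k) (b i), (V ^ (k + (n + 1))) (b j)⟫_𝕜 = 0 := by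
    rw [pow_add, mul_apply_eq_comp, inner_pow_apply_of_star_mul_self hV, pow_succ',
      mul_apply_eq_comp, ← inner_star_left, hker i, inner_zero_left]
  rw [orthonormal_iff_ite]
  rintro ⟨i, k⟩ ⟨j, l⟩
  rcases lt_trichotomy k l with hkl | rfl | hlk
  · obtain ⟨n, rfl⟩ := Nat.exists_eq_add_of_lt hkl
    simpa [add_assoc] using horth i j k n
  · simp only [inner_pow_apply_of_star_mul_self hV, orthonormal_iff_ite.1 hb.orthonormal i j,
      Prod.mk.injEq, and_true]
  · obtain ⟨n, rfl⟩ := Nat.exists_eq_add_of_lt hlk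
    simpa [add_assoc] using inner_eq_zero_symm.1 (horth j i l n)

theorem IsHilbertBasisOf.mem_range_pow (hV : star V * V = 1)
    (hb : IsHilbertBasisOf ((star V).ker) b) {v : H}
    (hv : ∀ i k, ⟪(V ^ k) (b i), v⟫_𝕜 = 0) (n : ℕ) : ∃ y, (V ^ n) y = v := by
  induction n with
  | zero => exact ⟨v, rfl⟩
  | succ n ih =>
    obtain ⟨y, rfl⟩ := ih
    have hker (i : ι) : star V (b i) = 0 := hb.mem i
    have hy (i : ι) : ⟪b i, y⟫_𝕜 = 0 := by
      rw [← inner_pow_apply_of_star_mul_self hV n]; exact hv i n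
    have hdefect : y - V (star V y) = 0 := by
      refine hb.eq_zero ?_ fun i => ?_
      · change star V (y - V (star V y)) = 0
        rw [map_sub, star_apply_apply_of_star_mul_self hV, sub_self]
      · rw [inner_sub_right, hy i, ← inner_star_left, hker i, inner_zero_left,
          sub_zero]
    refine ⟨star V y, ?_⟩
    rw [pow_succ, mul_apply_eq_comp, ← sub_eq_zero.1 hdefect]

theorem IsHilbertBasisOf.exists_hilbertBasis_pow (hV : star V * V = 1)
    (hb : IsHilbertBasisOf ((star V).ker) b)
    (hpure : ∀ w, (∀ n, ∃ y, (V ^ n) y = w) → w = 0) :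
    ∃ B : HilbertBasis (ι × ℕ) 𝕜 H, ∀ p, B p = (V ^ p.2) (b p.1) := by
  have hcomplete : (span 𝕜 (Set.range fun p : ι × ℕ => (V ^ p.2) (b p.1)))ᗮ = ⊥ := by
    refine (Submodule.eq_bot_iff _).2 fun v hv => hpure v (hb.mem_range_pow hV fun i k => ?_)
    exact (mem_orthogonal _ _).1 hv _ (subset_span ⟨(i, k), rfl⟩)
  refine ⟨.mkOfOrthogonalEqBot (hb.orthonormal_pow hV) hcomplete, fun p => ?_⟩
  rw [HilbertBasis.coe_mkOfOrthogonalEqBot]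

end Wold

section ShiftModel

variable {H' : Type*} [NormedAddCommGroup H'] [InnerProductSpace 𝕜 H'] [CompleteSpace H']

/-- In the Hilbert basis `B`, the operator `V` is the unilateral shift in the second index with
multiplicity `ι`, and `P` is diagonal, supported on the wandering subspace spanned by the
`B (i, 0)`, with eigenvalues `d i`. -/
structure IsShiftModel (d : ι → 𝕜) (B : HilbertBasis (ι × ℕ) 𝕜 H) (V P : H →L[𝕜] H) : Prop where
  shift_apply (i : ι) (k : ℕ) : V (B (i, k)) = B (i, k + 1)
  diag_apply_zero (i : ι) : P (B (i, 0)) = d i • B (i, 0)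
  diag_apply_succ (i : ι) (k : ℕ) : P (B (i, k + 1)) = 0

theorem IsShiftModel.exists_starAlgEquiv {d : ι → 𝕜} {B : HilbertBasis (ι × ℕ) 𝕜 H}
    {B' : HilbertBasis (ι × ℕ) 𝕜 H'} {V P : H →L[𝕜] H} {V' P' : H' →L[𝕜] H'}
    (h : IsShiftModel d B V P) (h' : IsShiftModel d B' V' P') :
    ∃ Φ : (H →L[𝕜] H) ≃⋆ₐ[𝕜] (H' →L[𝕜] H'), Φ V = V' ∧ Φ P = P' := by
  let U : H ≃ₗᵢ[𝕜] H' := B.repr.trans B'.repr.symm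
  have hU (p) : U (B p) = B' p := by
    classical
    rw [LinearIsometryEquiv.trans_apply, B.repr_self, B'.repr_symm_single]
  have hU' (p) : U.symm (B' p) = B p := by rw [← hU, U.symm_apply_apply]
  refine ⟨U.conjStarAlgEquiv, clm_ext_of_hilbertBasis B' ?_, clm_ext_of_hilbertBasis B' ?_⟩
  · rintro ⟨i, k⟩
    rw [U.conjStarAlgEquiv_apply_apply, hU', h.shift_apply, h'.shift_apply, hU]
  · rintro ⟨i, _ | k⟩
    · rw [U.conjStarAlgEquiv_apply_apply, hU', h.diag_apply_zero, h'.diag_apply_zero, map_smul, hU]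
    · rw [U.conjStarAlgEquiv_apply_apply, hU', h.diag_apply_succ, h'.diag_apply_succ, map_zero]

end ShiftModel

end HilbertSpace

section PodlesOnHilbertSpace

open scoped InnerProductSpace
open Submodule ContinuousLinearMap

variable {H ι κ : Type*} [NormedAddCommGroup H] [InnerProductSpace ℂ H] [CompleteSpace H]
  {μ c r : ℝ} {a b : H →L[ℂ] H}

theorem ker_star_polarIsometry {x : H →L[ℂ] H} (hx : IsStrictlyPositive (star x * x)) :
    (star (polarIsometry x)).ker = (star x).ker := by
  have hsa (t : ℝ) : star ((star x * x) ^ t) = (star x * x) ^ t := CFC.rpow_nonneg.isSelfAdjoint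
  have hstar : star x = (star x * x) ^ (1 / 2 : ℝ) * star (polarIsometry x) := by
    conv_lhs => rw [← polarIsometry_mul_rpow hx, star_mul, hsa]
  have hstar' : star (polarIsometry x) = (star x * x) ^ (-(1 / 2) : ℝ) * star x := by
    rw [polarIsometry, star_mul, hsa]
  ext y
  constructor <;> intro (hy : _ = _)
  · change star x y = 0
    rw [hstar, mul_apply_eq_comp, show star (polarIsometry x) y = 0 from hy, map_zero]
  · change star (polarIsometry x) y = 0
    rw [hstar', mul_apply_eq_comp, show star x y = 0 from hy, map_zero]

theorem apply_star_apply_add (h : a * star a + b * star b = r • 1) (v : H) :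
    a (star a v) + b (star b v) = r • v :=
  congr($h v)

theorem isOrtho_ker_map_star (a : H →L[ℂ] H) (K : Submodule ℂ H) :
    a.ker ⟂ K.map (star a : H →L[ℂ] H).toLinearMap := by
  rw [isOrtho_iff_inner_eq]
  rintro v hv _ ⟨w, -, rfl⟩
  change ⟪v, star a w⟫_ℂ = 0
  rw [inner_star_right, show a v = 0 from hv, inner_zero_left]

theorem ker_star_mul (h : a * star a + b * star b = r • 1) (hr : r ≠ 0) :
    (star b * a).ker = a.ker ⊔ (star b).ker.map (star a : H →L[ℂ] H).toLinearMap := by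
  apply le_antisymm
  · intro y (hy : star b (a y) = 0)
    have haa : a (star a (a y)) = r • a y := by
      simpa [hy] using apply_star_apply_add h (a y)
    have hker : r • y - star a (a y) ∈ a.ker := by
      change a (r • y - star a (a y)) = 0
      rw [map_sub, haa, ContinuousLinearMap.map_smul_of_tower, sub_self]
    have hy' : y = (r⁻¹ : ℂ) • ((r • y - star a (a y)) + star a (a y)) := by
      rw [sub_add_cancel, ← Complex.ofReal_inv, Complex.coe_smul, inv_smul_smul₀ hr]
    rw [hy']
    exact smul_mem _ _ (add_mem (mem_sup_left hker) (mem_sup_right ⟨a y, hy, rfl⟩))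
  · refine sup_le (fun y (hy : a y = 0) => ?_) ?_
    · change star b (a y) = 0
      rw [hy, map_zero]
    · rintro _ ⟨w, hw, rfl⟩
      have hw : star b w = 0 := hw
      have haw : a (star a w) = r • w := by simpa [hw] using apply_star_apply_add h w
      change star b (a (star a w)) = 0
      rw [haw, ContinuousLinearMap.map_smul_of_tower, hw, smul_zero]

namespace IsPodlesPair

variable {f : ι → H} {g : κ → H}

theorem apply_star_apply_of_star_apply_eq_zero (h : IsPodlesPair μ c a b) {w : H}
    (hw : star b w = 0) : a (star a w) = (1 + c) • w := by
  simpa [hw] using apply_star_apply_add h.mul_star w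

theorem isHilbertBasisOf_ker_star_podlesV (h : IsPodlesPair μ c a b) (hμ : μ ^ 2 < 1) (hc : 0 < c)
    (hf : IsHilbertBasisOf a.ker f) (hg : IsHilbertBasisOf (star b).ker g) :
    IsHilbertBasisOf (star (podlesV a b)).ker
      (Sum.elim f fun i => (((√(1 + c))⁻¹ : ℝ) : ℂ) • star a (g i)) := by
  rw [podlesV, ker_star_polarIsometry (h.isStrictlyPositive_star_podlesB_mul hμ hc), star_podlesB,
    ker_star_mul h.mul_star (by positivity)]
  refine hf.sumElim (hg.map (by positivity) fun v _ w hw => ?_) (isOrtho_ker_map_star a _)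
  change ⟪star a v, star a w⟫_ℂ = _
  rw [inner_star_left, h.apply_star_apply_of_star_apply_eq_zero hw, ← Complex.coe_smul,
    inner_smul_right]
  rfl

theorem podlesP_apply_of_star_podlesV_apply_eq_zero {w : H} (hw : star (podlesV a b) w = 0) :
    podlesP c a b w = (1 + c)⁻¹ • star a (a w) := by
  simp [podlesP, hw]

theorem podlesP_apply_podlesV (h : IsPodlesPair μ c a b) (hμ : μ ^ 2 < 1) (hc : 0 < c) (v : H) :
    podlesP c a b (podlesV a b v) = 0 := by
  have hV := star_apply_apply_of_star_mul_self (h.star_podlesV_mul_self hμ hc) v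
  simp [podlesP, hV]

theorem exists_isShiftModel (h : IsPodlesPair μ c a b) (hμ : μ ^ 2 < 1) (hc : 0 < c)
    (hA : (podlesA c a).ker = ⊥) (hf : IsHilbertBasisOf a.ker f)
    (hg : IsHilbertBasisOf (star b).ker g) :
    ∃ B : HilbertBasis ((ι ⊕ κ) × ℕ) ℂ H,
      IsShiftModel (Sum.elim 0 1) B (podlesV a b) (podlesP c a b) := by
  have hV := h.star_podlesV_mul_self hμ hc
  have hb := h.isHilbertBasisOf_ker_star_podlesV hμ hc hf hg
  have hpure (w : H) (hw : ∀ n, ∃ y, (podlesV a b ^ n) y = w) : podlesA c a w = 0 := by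
    refine apply_eq_zero_of_mem_range_pow hV (r := ((μ ^ 2 : ℝ) : ℂ)) (by simpa using hμ) ?_ hw
    rw [Complex.coe_smul, h.podlesA_mul_podlesV]
  obtain ⟨B, hB⟩ := hb.exists_hilbertBasis_pow hV fun w hw =>
    (Submodule.eq_bot_iff _).1 hA w (hpure w hw)
  have hshift (i : ι ⊕ κ) (k : ℕ) : podlesV a b (B (i, k)) = B (i, k + 1) := by
    rw [hB, hB, pow_succ', mul_apply_eq_comp]
  refine ⟨B, hshift, fun i => ?_, fun i k => ?_⟩
  · rw [hB]
    change podlesP c a b _ = (Sum.elim 0 1 : ι ⊕ κ → ℂ) i • _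
    rw [pow_zero, one_apply_eq_self, podlesP_apply_of_star_podlesV_apply_eq_zero (hb.mem i)]
    rcases i with i | i
    · have hi : a (f i) = 0 := hf.mem i
      simp [hi]
    · have hi := h.apply_star_apply_of_star_apply_eq_zero (hg.mem i)
      have hc' : 1 + c ≠ 0 := by positivity
      simp [hi, hc', smul_comm _ (1 + c)]
  · rw [← hshift, h.podlesP_apply_podlesV hμ hc]

end IsPodlesPair

end PodlesOnHilbertSpace

section DiagonalRecurrence

open scoped InnerProductSpace
open Filter Topology

theorem memℓp_prod_range_of_tendsto_zero {t : ℕ → ℂ} (ht : Tendsto t atTop (𝓝 0)) :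
    Memℓp (fun j => ∏ i ∈ Finset.range j, t i) 2 := by
  refine memℓp_gen ?_
  refine summable_of_ratio_norm_eventually_le (r := 1 / 2) (by norm_num) ?_
  have hsq : Tendsto (fun j => ‖t j‖ ^ 2) atTop (𝓝 0) := by simpa using ht.norm.pow 2
  filter_upwards [hsq.eventually_le_const (by norm_num : (0 : ℝ) < 1 / 2)] with j hj
  simp only [ENNReal.toReal_ofNat, Real.rpow_ofNat, norm_pow, norm_norm, Finset.prod_range_succ,
    norm_mul, mul_pow]
  rw [mul_comm]
  gcongr

/-- The vector of `ℓ²(ℤ × ℕ)` with values `g j` along the diagonal `{(n - 2 * j, j) : j ∈ ℕ}` and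
zero elsewhere. -/
def diagonalVector (g : lp (fun _ : ℕ => ℂ) 2) (n : ℤ) : HC :=
  ⟨fun p => if p.1 + 2 * p.2 = n then g p.2 else 0, by
    have hinj : Function.Injective fun j : ℕ => (n - 2 * (j : ℤ), j) := fun i j hij =>
      (Prod.mk.inj hij).2
    refine memℓp_gen ((hinj.summable_iff ?_).1 ?_)
    · rintro ⟨m, j⟩ hmj
      have : m + 2 * j ≠ n := fun h => hmj ⟨j, by simp [← h]⟩
      simp [this]
    · simpa [Function.comp_def] using (lp.memℓp g).summable (by simp)⟩

theorem diagonalVector_apply (g : lp (fun _ : ℕ => ℂ) 2) (n m : ℤ) (j : ℕ) :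
    diagonalVector g n (m, j) = if m + 2 * j = n then g j else 0 := rfl

theorem inner_diagonalVector {g : lp (fun _ : ℕ => ℂ) 2} {v : HC}
    (hv : ∀ (m : ℤ) (j : ℕ), v (m, j) = g j * v (m + 2 * j, 0)) (n : ℤ) :
    ⟪diagonalVector g n, v⟫_ℂ = ⟪diagonalVector g n, diagonalVector g n⟫_ℂ * v (n, 0) := by
  rw [lp.inner_eq_tsum, lp.inner_eq_tsum, ← tsum_mul_right]
  refine tsum_congr fun ⟨m, j⟩ => ?_
  by_cases h : m + 2 * j = n
  · simp only [diagonalVector_apply, RCLike.inner_apply, hv m j, h, if_true]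
    ring
  · simp [diagonalVector_apply, h]

theorem apply_eq_prod_mul_of_recurrence {t : ℕ → ℂ} {v : HC}
    (hv : ∀ (m : ℤ) (j : ℕ), v (m - 1, j + 1) = t j * v (m + 1, j)) (m : ℤ) (j : ℕ) :
    v (m, j) = (∏ i ∈ Finset.range j, t i) * v (m + 2 * j, 0) := by
  induction j generalizing m with
  | zero => simp
  | succ j ih =>
    have hstep := hv (m + 1) j
    rw [add_sub_cancel_right, ih] at hstep
    rw [hstep, Finset.prod_range_succ, ← mul_assoc, mul_comm (t j),
      show m + 1 + 1 + 2 * (j : ℤ) = m + 2 * ((j + 1 : ℕ) : ℤ) by push_cast; ring]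

theorem exists_isHilbertBasisOf_of_recurrence {t : ℕ → ℂ} (ht : Tendsto t atTop (𝓝 0))
    {K : Submodule ℂ HC}
    (hK : ∀ v : HC, v ∈ K ↔ ∀ (m : ℤ) (j : ℕ), v (m - 1, j + 1) = t j * v (m + 1, j)) :
    ∃ f : ℤ → HC, IsHilbertBasisOf K f := by
  let g : lp (fun _ : ℕ => ℂ) 2 := ⟨_, memℓp_prod_range_of_tendsto_zero ht⟩
  have hg0 : g 0 = 1 := Finset.prod_range_zero t
  have hg (j : ℕ) : g (j + 1) = t j * g j := (Finset.prod_range_succ t j).trans (mul_comm _ _)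
  let F := diagonalVector g
  have hFrow (n k : ℤ) : F n (k, 0) = if k = n then 1 else 0 := by
    simp [F, diagonalVector_apply, hg0]
  have hFK (n : ℤ) : F n ∈ K := (hK _).2 fun m j => by
    have : m - 1 + 2 * ((j + 1 : ℕ) : ℤ) = m + 1 + 2 * j := by push_cast; ring
    rw [diagonalVector_apply, diagonalVector_apply, this, hg]
    split_ifs <;> simp
  have hinner {v : HC} (hv : v ∈ K) (n : ℤ) : ⟪F n, v⟫_ℂ = ⟪F n, F n⟫_ℂ * v (n, 0) :=
    inner_diagonalVector (apply_eq_prod_mul_of_recurrence ((hK v).1 hv)) n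
  have hF0 (n : ℤ) : F n ≠ 0 := fun h => by simpa [h] using hFrow n n
  refine ⟨fun n => ((‖F n‖⁻¹ : ℝ) : ℂ) • F n, ?_, fun n => K.smul_mem _ (hFK n), ?_⟩
  · refine ⟨fun n => ?_, fun n k hnk => ?_⟩
    · simp [norm_smul, hF0 n]
    · simp [inner_smul_left, inner_smul_right, hinner (hFK k) n, hFrow, hnk]
  · intro v hv horth
    have hrow (n : ℤ) : v (n, 0) = 0 := by
      simpa [inner_smul_left, hinner hv n, hF0 n] using horth n
    ext ⟨m, j⟩
    rw [apply_eq_prod_mul_of_recurrence ((hK v).1 hv), hrow, mul_zero]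
    rfl

end DiagonalRecurrence

section Kernel

open scoped InnerProductSpace
open ContinuousLinearMap

namespace IsPodlesPair

variable {H : Type*} [NormedAddCommGroup H] [InnerProductSpace ℂ H] [CompleteSpace H]
  {μ c : ℝ} {a b : H →L[ℂ] H} {w : H}

theorem podlesB_apply_star_apply (h : IsPodlesPair μ c a b) (hw : podlesA c a w = 0) :
    podlesB a b (star (podlesB a b) w) = c • w := by
  simpa [hw] using congr($(h.podlesB_mul_star) w)

theorem norm_star_podlesB_apply (h : IsPodlesPair μ c a b) (hc : 0 ≤ c) (hw : podlesA c a w = 0) :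
    ‖star (podlesB a b) w‖ = √c * ‖w‖ := by
  have hsq : ‖star (podlesB a b) w‖ ^ 2 = c * ‖w‖ ^ 2 := by
    rw [← inner_self_eq_norm_sq (𝕜 := ℂ), inner_star_left, h.podlesB_apply_star_apply hw,
      ← Complex.coe_smul, inner_smul_right, ← inner_self_eq_norm_sq (𝕜 := ℂ)]
    exact Complex.re_ofReal_mul _ _
  rw [← Real.sqrt_sq (norm_nonneg (star (podlesB a b) w)), hsq, Real.sqrt_mul hc,
    Real.sqrt_sq (norm_nonneg w)]

theorem podlesA_apply_star_podlesB_apply (h : IsPodlesPair μ c a b) (hμ : μ ≠ 0)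
    (hw : podlesA c a w = 0) : podlesA c a (star (podlesB a b) w) = 0 := by
  have hstar : star (podlesB a b) * podlesA c a = μ ^ 2 • (podlesA c a * star (podlesB a b)) := by
    simpa [(isSelfAdjoint_podlesA c a).star_eq] using congr(star $h.podlesA_mul_podlesB)
  have : μ ^ 2 • podlesA c a (star (podlesB a b) w) = 0 := by
    simpa [hw] using congr($hstar w).symm
  simpa [hμ] using this

end IsPodlesPair

end Kernel

section Coordinates

open scoped InnerProductSpace
open ContinuousLinearMap Filter Topology

variable {q c : ℝ} {x : Fin 2 → (HC →L[ℂ] HC)}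

/-- The eigenvalue `q⁻ʲ` of `γ` on `e_j`. -/
def gammaWeight (q : ℝ) (j : ℕ) : ℝ := q⁻¹ ^ j

/-- The coefficient `(1 - q⁻²ʲ)^{1/2}` in `α e_j = (1 - q⁻²ʲ)^{1/2} e_{j-1}`. -/
def alphaWeight (q : ℝ) (j : ℕ) : ℝ := √(1 - gammaWeight q j ^ 2)

theorem gammaWeight_zero (q : ℝ) : gammaWeight q 0 = 1 := pow_zero _

theorem alphaWeight_zero (q : ℝ) : alphaWeight q 0 = 0 := by simp [alphaWeight, gammaWeight]

theorem gammaWeight_succ (q : ℝ) (j : ℕ) : gammaWeight q (j + 1) = q⁻¹ * gammaWeight q j :=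
  pow_succ' _ _

theorem gammaWeight_pos (hq : 1 < q) (j : ℕ) : 0 < gammaWeight q j :=
  pow_pos (inv_pos.2 (zero_lt_one.trans hq)) j

theorem gammaWeight_le_one (hq : 1 < q) (j : ℕ) : gammaWeight q j ≤ 1 :=
  pow_le_one₀ (inv_nonneg.2 (zero_le_one.trans hq.le)) (inv_le_one_of_one_le₀ hq.le)

theorem gammaWeight_succ_lt_one (hq : 1 < q) (j : ℕ) : gammaWeight q (j + 1) < 1 :=
  pow_lt_one₀ (inv_nonneg.2 (zero_le_one.trans hq.le)) (inv_lt_one_of_one_lt₀ hq) j.succ_ne_zero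

theorem tendsto_gammaWeight (hq : 1 < q) : Tendsto (gammaWeight q) atTop (𝓝 0) :=
  tendsto_pow_atTop_nhds_zero_of_lt_one (inv_nonneg.2 (zero_le_one.trans hq.le))
    (inv_lt_one_of_one_lt₀ hq)

theorem tendsto_alphaWeight (hq : 1 < q) : Tendsto (alphaWeight q) atTop (𝓝 1) := by
  have h := (((tendsto_gammaWeight hq).pow 2).const_sub 1).sqrt
  rwa [zero_pow two_ne_zero, sub_zero, Real.sqrt_one] at h

theorem alphaWeight_sq (hq : 1 < q) (j : ℕ) : alphaWeight q j ^ 2 = 1 - gammaWeight q j ^ 2 :=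
  Real.sq_sqrt (sub_nonneg.2 (pow_le_one₀ (gammaWeight_pos hq j).le (gammaWeight_le_one hq j)))

theorem alphaWeight_succ_pos (hq : 1 < q) (j : ℕ) : 0 < alphaWeight q (j + 1) :=
  Real.sqrt_pos.2 (sub_pos.2
    (pow_lt_one₀ (gammaWeight_pos hq _).le (gammaWeight_succ_lt_one hq j) two_ne_zero))

theorem zpow_neg_eq_gammaWeight (q : ℝ) (j : ℕ) : q ^ (-(j : ℤ)) = gammaWeight q j := by
  rw [zpow_neg, zpow_natCast, gammaWeight, inv_pow]

theorem sqrt_one_sub_zpow_eq_alphaWeight (q : ℝ) (j : ℕ) :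
    √(1 - q ^ (-2 * (j : ℤ))) = alphaWeight q j := by
  rw [alphaWeight, ← zpow_neg_eq_gammaWeight, ← zpow_natCast, ← zpow_mul]
  congr 3
  push_cast
  ring

theorem inner_ec (m : ℤ) (j : ℕ) (v : HC) : ⟪ec m j, v⟫_ℂ = v (m, j) := by
  simp [ec, lp.inner_single_left]

theorem ec_apply (m n : ℤ) (j k : ℕ) : ec m j (n, k) = if n = m ∧ k = j then 1 else 0 := by
  simp [ec, lp.single_apply, Pi.single_apply]

theorem inner_smul_ec_add_smul_ec (r s : ℝ) (m n : ℤ) (j k : ℕ) (v : HC) :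
    ⟪r • ec m j + s • ec n k, v⟫_ℂ = r * v (m, j) + s * v (n, k) := by
  rw [inner_add_left, inner_smul_left_eq_smul, inner_smul_left_eq_smul, inner_ec, inner_ec,
    Complex.real_smul, Complex.real_smul]

theorem smul_ec_add_smul_ec_apply (r s : ℝ) (m n i : ℤ) (j k l : ℕ) :
    (r • ec m j + s • ec n k) (i, l) =
      r * (if i = m ∧ l = j then 1 else 0) + s * (if i = n ∧ l = k then 1 else 0) := by
  simp only [← Complex.coe_smul, lp.coeFn_add, lp.coeFn_smul, Pi.add_apply, Pi.smul_apply,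
    smul_eq_mul, ec_apply]

namespace IsXPair

theorem apply_zero_ec (hx : IsXPair q c x) (m : ℤ) (j : ℕ) :
    x 0 (ec m j) =
      (√c * alphaWeight q j) • ec (m + 1) (j - 1) + gammaWeight q j • ec (m - 1) j := by
  cases j with
  | zero => simpa [alphaWeight_zero, gammaWeight_zero] using hx.1 m
  | succ j =>
    have h := hx.2.1 m j
    rwa [← Nat.cast_succ, sqrt_one_sub_zpow_eq_alphaWeight, zpow_neg_eq_gammaWeight] at h

theorem apply_one_ec (hx : IsXPair q c x) (m : ℤ) (j : ℕ) :
    x 1 (ec m j) = (-(√c * gammaWeight q (j + 1))) • ec (m + 1) j +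
      alphaWeight q (j + 1) • ec (m - 1) (j + 1) := by
  have h := hx.2.2 m j
  rwa [← Nat.cast_succ, sqrt_one_sub_zpow_eq_alphaWeight, zpow_neg_eq_gammaWeight, neg_mul, neg_mul,
    mul_assoc, ← gammaWeight_succ] at h

theorem star_zero_apply (hx : IsXPair q c x) (v : HC) (m : ℤ) (j : ℕ) :
    star (x 0) v (m, j) =
      √c * alphaWeight q j * v (m + 1, j - 1) + gammaWeight q j * v (m - 1, j) := by
  rw [← inner_ec, inner_star_right, hx.apply_zero_ec, inner_smul_ec_add_smul_ec, Complex.ofReal_mul]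

theorem star_one_apply (hx : IsXPair q c x) (v : HC) (m : ℤ) (j : ℕ) :
    star (x 1) v (m, j) =
      -(√c * gammaWeight q (j + 1)) * v (m + 1, j) + alphaWeight q (j + 1) * v (m - 1, j + 1) := by
  rw [← inner_ec, inner_star_right, hx.apply_one_ec, inner_smul_ec_add_smul_ec, Complex.ofReal_neg,
    Complex.ofReal_mul]

theorem star_zero_ec (hx : IsXPair q c x) (m : ℤ) (j : ℕ) :
    star (x 0) (ec m j) =
      (√c * alphaWeight q (j + 1)) • ec (m - 1) (j + 1) + gammaWeight q j • ec (m + 1) j := by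
  ext ⟨n, k⟩
  rw [hx.star_zero_apply, smul_ec_add_smul_ec_apply, ec_apply, ec_apply, Complex.ofReal_mul]
  congr 1
  · rcases k with _ | k
    · simp [alphaWeight_zero]
    · by_cases h : n + 1 = m ∧ k = j
      · obtain ⟨rfl, rfl⟩ := h
        simp
      · have h' : ¬(n = m - 1 ∧ k + 1 = j + 1) := by omega
        rw [Nat.add_sub_cancel, if_neg h, if_neg h', mul_zero, mul_zero]
  · by_cases h : n - 1 = m ∧ k = j
    · obtain ⟨rfl, rfl⟩ := h
      simp
    · have h' : ¬(n = m + 1 ∧ k = j) := by omega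
      rw [if_neg h, if_neg h', mul_zero, mul_zero]

theorem star_one_ec (hx : IsXPair q c x) (m : ℤ) (j : ℕ) :
    star (x 1) (ec m j) =
      (-(√c * gammaWeight q (j + 1))) • ec (m - 1) j + alphaWeight q j • ec (m + 1) (j - 1) := by
  ext ⟨n, k⟩
  rw [hx.star_one_apply, smul_ec_add_smul_ec_apply, ec_apply, ec_apply, Complex.ofReal_neg,
    Complex.ofReal_mul]
  congr 1
  · by_cases h : n + 1 = m ∧ k = j
    · obtain ⟨rfl, rfl⟩ := h
      simp
    · have h' : ¬(n = m - 1 ∧ k = j) := by omega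
      rw [if_neg h, if_neg h', mul_zero, mul_zero]
  · rcases j with _ | j
    · simp [alphaWeight_zero]
    · by_cases h : n - 1 = m ∧ k + 1 = j + 1
      · obtain ⟨rfl, h⟩ := h
        obtain rfl : k = j := Nat.succ_injective h
        simp
      · have h' : ¬(n = m + 1 ∧ k = j) := by omega
        rw [Nat.add_sub_cancel, if_neg h, if_neg h', mul_zero, mul_zero]

theorem zero_apply (hx : IsXPair q c x) (v : HC) (m : ℤ) (j : ℕ) :
    x 0 v (m, j) =
      √c * alphaWeight q (j + 1) * v (m - 1, j + 1) + gammaWeight q j * v (m + 1, j) := by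
  rw [← inner_ec, ← inner_star_left, hx.star_zero_ec, inner_smul_ec_add_smul_ec,
    Complex.ofReal_mul]

theorem one_apply (hx : IsXPair q c x) (v : HC) (m : ℤ) (j : ℕ) :
    x 1 v (m, j) =
      -(√c * gammaWeight q (j + 1)) * v (m - 1, j) + alphaWeight q j * v (m + 1, j - 1) := by
  rw [← inner_ec, ← inner_star_left, hx.star_one_ec, inner_smul_ec_add_smul_ec, Complex.ofReal_neg,
    Complex.ofReal_mul]

end IsXPair

end Coordinates

section ConcretePair

open scoped InnerProductSpace
open ContinuousLinearMap Filter Topology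

variable {q c : ℝ} {x : Fin 2 → (HC →L[ℂ] HC)}

theorem mem_ker_iff_forall_apply_eq_zero (T : HC →L[ℂ] HC) (v : HC) :
    v ∈ T.ker ↔ ∀ (m : ℤ) (j : ℕ), T v (m, j) = 0 :=
  ⟨fun h m j => by rw [show T v = 0 from h]; rfl, fun h => lp.ext (funext fun ⟨m, j⟩ => h m j)⟩

theorem mul_add_mul_eq_zero_iff {K : Type*} [Field K] {p r y z : K} (hp : p ≠ 0) :
    p * z + r * y = 0 ↔ z = -(r / p) * y := by
  constructor
  · intro h
    field_simp
    linear_combination h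
  · rintro rfl
    field_simp
    ring

namespace IsXPair

theorem isPodlesPair (hx : IsXPair q c x) (hq : 1 < q) (hc : 0 ≤ c) :
    IsPodlesPair q⁻¹ c (x 0) (x 1) := by
  have hsqrt : (√c : ℂ) ^ 2 = c := by exact_mod_cast Real.sq_sqrt hc
  have hα (j : ℕ) : (alphaWeight q j : ℂ) ^ 2 = 1 - (gammaWeight q j : ℂ) ^ 2 := by
    exact_mod_cast alphaWeight_sq hq j
  have hγ (j : ℕ) : (gammaWeight q (j + 1) : ℂ) = (q⁻¹ : ℝ) * gammaWeight q j := by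
    exact_mod_cast gammaWeight_succ q j
  constructor
  · ext v ⟨m, j⟩
    change x 0 (star (x 0) v) (m, j) + x 1 (star (x 1) v) (m, j) = (1 + c) • v (m, j)
    rw [hx.zero_apply, hx.one_apply, Complex.real_smul]
    simp only [hx.star_zero_apply, hx.star_one_apply, sub_add_cancel, add_sub_cancel_right,
      Nat.add_sub_cancel, Complex.ofReal_add, Complex.ofReal_one]
    rcases j with _ | j
    · rw [alphaWeight_zero, gammaWeight_zero, Complex.ofReal_zero, Complex.ofReal_one]
      linear_combination v (m, 0) * (√c ^ 2 * hα 1 + hsqrt)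
    · simp only [Nat.add_sub_cancel]
      linear_combination v (m, j + 1) * (√c ^ 2 * hα (j + 2) + hα (j + 1) + hsqrt)
  · ext v ⟨m, j⟩
    change q⁻¹ ^ 2 • star (x 0) (x 0 v) (m, j) + star (x 1) (x 1 v) (m, j) =
      (1 + q⁻¹ ^ 2 * c) • v (m, j)
    rw [hx.star_zero_apply, hx.star_one_apply, Complex.real_smul, Complex.real_smul]
    simp only [hx.zero_apply, hx.one_apply, sub_add_cancel, add_sub_cancel_right,
      Nat.add_sub_cancel, Complex.ofReal_add, Complex.ofReal_one, Complex.ofReal_mul,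
      Complex.ofReal_pow]
    rcases j with _ | j
    · have hα₁ := hα 1
      simp only [hγ, alphaWeight_zero, gammaWeight_zero, Complex.ofReal_zero, Complex.ofReal_one]
        at hα₁ ⊢
      linear_combination v (m, 0) * (hα₁ + (q⁻¹ : ℝ) ^ 2 * hsqrt)
    · have hα₁ := hα (j + 1)
      have hα₂ := hα (j + 2)
      simp only [hγ, Nat.add_sub_cancel] at hα₁ hα₂ ⊢
      linear_combination v (m, j + 1) *
        ((q⁻¹ : ℝ) ^ 2 * √c ^ 2 * hα₁ + hα₂ + (q⁻¹ : ℝ) ^ 2 * hsqrt)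

theorem mem_ker_zero_iff (hx : IsXPair q c x) (hq : 1 < q) (hc : 0 < c) (v : HC) :
    v ∈ (x 0).ker ↔ ∀ (m : ℤ) (j : ℕ), v (m - 1, j + 1) =
      (-(gammaWeight q j / (√c * alphaWeight q (j + 1))) : ℝ) * v (m + 1, j) := by
  rw [mem_ker_iff_forall_apply_eq_zero]
  refine forall₂_congr fun m j => ?_
  have h : (√c * alphaWeight q (j + 1) : ℂ) ≠ 0 := by
    exact_mod_cast (mul_pos (Real.sqrt_pos.2 hc) (alphaWeight_succ_pos hq j)).ne'
  rw [hx.zero_apply, mul_add_mul_eq_zero_iff h]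
  norm_cast

theorem mem_ker_star_one_iff (hx : IsXPair q c x) (hq : 1 < q) (v : HC) :
    v ∈ (star (x 1)).ker ↔ ∀ (m : ℤ) (j : ℕ), v (m - 1, j + 1) =
      (√c * gammaWeight q (j + 1) / alphaWeight q (j + 1) : ℝ) * v (m + 1, j) := by
  rw [mem_ker_iff_forall_apply_eq_zero]
  refine forall₂_congr fun m j => ?_
  have h : (alphaWeight q (j + 1) : ℂ) ≠ 0 := by exact_mod_cast (alphaWeight_succ_pos hq j).ne'
  rw [hx.star_one_apply, add_comm, mul_add_mul_eq_zero_iff h, neg_div, neg_neg]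
  norm_cast

theorem exists_isHilbertBasisOf_ker_zero (hx : IsXPair q c x) (hq : 1 < q) (hc : 0 < c) :
    ∃ f : ℤ → HC, IsHilbertBasisOf (x 0).ker f := by
  refine exists_isHilbertBasisOf_of_recurrence ?_ (hx.mem_ker_zero_iff hq hc)
  have hs := (tendsto_add_atTop_iff_nat 1).2 (tendsto_alphaWeight hq)
  have h := ((tendsto_gammaWeight hq).div (hs.const_mul √c)
    (by simpa using (Real.sqrt_pos.2 hc).ne')).neg
  exact (Complex.continuous_ofReal.tendsto' _ 0 (by simp)).comp h

theorem exists_isHilbertBasisOf_ker_star_one (hx : IsXPair q c x) (hq : 1 < q) :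
    ∃ f : ℤ → HC, IsHilbertBasisOf (star (x 1)).ker f := by
  refine exists_isHilbertBasisOf_of_recurrence ?_ (hx.mem_ker_star_one_iff hq)
  have hs := (tendsto_add_atTop_iff_nat 1).2 (tendsto_alphaWeight hq)
  have ht := (tendsto_add_atTop_iff_nat 1).2 (tendsto_gammaWeight hq)
  have h := (ht.const_mul √c).div hs one_ne_zero
  exact (Complex.continuous_ofReal.tendsto' _ 0 (by simp)).comp h

theorem podlesB_apply_row_zero (hx : IsXPair q c x) (v : HC) (m : ℤ) :
    podlesB (x 0) (x 1) v (m, 0) = -(√c * q⁻¹ : ℝ) * v (m - 2, 0) := by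
  change star (x 0) (x 1 v) (m, 0) = _
  rw [hx.star_zero_apply, hx.one_apply, hx.one_apply, gammaWeight_succ, alphaWeight_zero,
    gammaWeight_zero, mul_one, show m - 1 - 1 = m - 2 by ring]
  push_cast
  ring

/-- On the kernel of `A` the operator `B B*` is `c` and `B*` scales norms by `√c`, while `B` scales
row-zero coordinates only by `√c q⁻¹`. -/
theorem norm_apply_row_zero_le (hx : IsXPair q c x) (hq : 1 < q) (hc : 0 < c) (n : ℕ) {w : HC}
    (hw : podlesA c (x 0) w = 0) (m : ℤ) : ‖w (m, 0)‖ ≤ q⁻¹ ^ n * ‖w‖ := by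
  have h := hx.isPodlesPair hq hc.le
  have hq0 : 0 < q⁻¹ := inv_pos.2 (zero_lt_one.trans hq)
  induction n generalizing w m with
  | zero => simpa using lp.norm_apply_le_norm two_ne_zero w (m, 0)
  | succ n ih =>
    have hcw : (c : ℂ) * w (m, 0) =
        -(√c * q⁻¹ : ℝ) * star (podlesB (x 0) (x 1)) w (m - 2, 0) := by
      rw [← hx.podlesB_apply_row_zero, h.podlesB_apply_star_apply hw]
      exact (Complex.real_smul).symm
    have hstar := ih (h.podlesA_apply_star_podlesB_apply hq0.ne' hw) (m - 2)
    rw [h.norm_star_podlesB_apply hc.le hw] at hstar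
    refine le_of_mul_le_mul_left ?_ hc
    calc c * ‖w (m, 0)‖ = √c * q⁻¹ * ‖star (podlesB (x 0) (x 1)) w (m - 2, 0)‖ := by
          simpa [abs_of_pos hc, abs_of_pos (zero_lt_one.trans hq), abs_of_nonneg]
            using congr(‖$hcw‖)
      _ ≤ √c * q⁻¹ * (q⁻¹ ^ n * (√c * ‖w‖)) := by gcongr
      _ = c * (q⁻¹ ^ (n + 1) * ‖w‖) := by
          rw [pow_succ]
          linear_combination q⁻¹ ^ n * q⁻¹ * ‖w‖ * Real.mul_self_sqrt hc.le

theorem apply_row_zero_eq_zero (hx : IsXPair q c x) (hq : 1 < q) (hc : 0 < c) {w : HC}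
    (hw : podlesA c (x 0) w = 0) (m : ℤ) : w (m, 0) = 0 := by
  have hlim : Tendsto (fun n : ℕ => q⁻¹ ^ n * ‖w‖) atTop (𝓝 0) := by
    simpa using (tendsto_pow_atTop_nhds_zero_of_lt_one (inv_nonneg.2 (zero_le_one.trans hq.le))
      (inv_lt_one_of_one_lt₀ hq)).mul_const ‖w‖
  exact norm_le_zero_iff.1 (ge_of_tendsto' hlim fun n => hx.norm_apply_row_zero_le hq hc n hw m)

theorem podlesA_apply (hx : IsXPair q c x) (v : HC) (m : ℤ) (j : ℕ) :
    podlesA c (x 0) v (m, j) =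
      √c * alphaWeight q j * (x 0 v) (m + 1, j - 1) + gammaWeight q j * (x 0 v) (m - 1, j) -
        c * v (m, j) := by
  rw [← hx.star_zero_apply, ← Complex.real_smul]
  rfl

theorem ker_podlesA_eq_bot (hx : IsXPair q c x) (hq : 1 < q) (hc : 0 < c) :
    (podlesA c (x 0)).ker = ⊥ := by
  refine (Submodule.eq_bot_iff _).2 fun w (hw : podlesA c (x 0) w = 0) => ?_
  suffices hrow : ∀ (j : ℕ) (m : ℤ), w (m, j) = 0 from lp.ext (funext fun ⟨m, j⟩ => hrow j m)
  intro j
  induction j using Nat.strong_induction_on with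
  | _ j ih =>
    rcases j with _ | j
    · exact hx.apply_row_zero_eq_zero hq hc hw
    · intro m
      have hcoord : podlesA c (x 0) w (m + 2, j) = 0 := by rw [hw]; rfl
      have hprev : (alphaWeight q j : ℂ) * x 0 w (m + 2 + 1, j - 1) = 0 := by
        rcases j with _ | j
        · simp [alphaWeight_zero]
        · simp [hx.zero_apply, ih j (by omega), ih (j + 1) (by omega)]
      have hnext : x 0 w (m + 2 - 1, j) = √c * alphaWeight q (j + 1) * w (m, j + 1) := by
        rw [hx.zero_apply, ih j j.lt_succ_self, mul_zero, add_zero, show m + 2 - 1 - 1 = m by ring]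
      rw [hx.podlesA_apply, mul_assoc, hprev, hnext, ih j j.lt_succ_self] at hcoord
      simpa [(gammaWeight_pos hq j).ne', (alphaWeight_succ_pos hq j).ne', hc.le, hc.ne']
        using hcoord

theorem exists_isShiftModel (hx : IsXPair q c x) (hq : 1 < q) (hc : 0 < c) :
    ∃ B : HilbertBasis ((ℤ ⊕ ℤ) × ℕ) ℂ HC, IsShiftModel (Sum.elim 0 1) B
      (podlesV (x 0) (x 1)) (podlesP c (x 0) (x 1)) := by
  have hμ : q⁻¹ ^ 2 < 1 := pow_lt_one₀ (inv_nonneg.2 (zero_le_one.trans hq.le))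
    (inv_lt_one_of_one_lt₀ hq) two_ne_zero
  obtain ⟨f, hf⟩ := hx.exists_isHilbertBasisOf_ker_zero hq hc
  obtain ⟨g, hg⟩ := hx.exists_isHilbertBasisOf_ker_star_one hq
  exact (hx.isPodlesPair hq hc.le).exists_isShiftModel hμ hc
    (hx.ker_podlesA_eq_bot hq hc) hf hg

theorem cqc_eq (hx : IsXPair q c x) (hq : 1 < q) (hc : 0 < c) :
    Cqc x = (StarAlgebra.adjoin ℂ
      {podlesV (x 0) (x 1), podlesP c (x 0) (x 1)}).topologicalClosure := by
  have hμ : q⁻¹ ^ 2 < 1 := pow_lt_one₀ (inv_nonneg.2 (zero_le_one.trans hq.le))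
    (inv_lt_one_of_one_lt₀ hq) two_ne_zero
  rw [← (hx.isPodlesPair hq hc.le).topologicalClosure_adjoin_eq hμ hc, Cqc]
  congr 2
  ext a
  simp only [Set.mem_ofPred_eq, Fin.exists_fin_two, Set.mem_insert_iff, Set.mem_singleton_iff,
    or_assoc]

end IsXPair

end ConcretePair

/-- For all reals `q, q' > 1` and `0 < c, c' < ∞`, the C*-algebras `C_{q,c}` and
`C_{q',c'}` are isomorphic as unital C*-algebras (each being isomorphic to the groupoid
C*-algebra `C*(𝔊')`); in particular the C*-algebra of the nonstandard Podleś quantum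
2-sphere is independent of the parameters `q` and `c`. -/
theorem stmt_4 (q q' : ℝ) (hq : 1 < q) (hq' : 1 < q') (c c' : ℝ)
    (hc : 0 < c) (hc' : 0 < c')
    (x x' : Fin 2 → (HC →L[ℂ] HC)) (hx : IsXPair q c x) (hx' : IsXPair q' c' x') :
    Nonempty ((Cqc x) ≃⋆ₐ[ℂ] (Cqc x')) := by
  obtain ⟨B, hB⟩ := hx.exists_isShiftModel hq hc
  obtain ⟨B', hB'⟩ := hx'.exists_isShiftModel hq' hc'
  obtain ⟨Φ, hΦV, hΦP⟩ := hB.exists_starAlgEquiv hB'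
  rw [hx.cqc_eq hq hc, hx'.cqc_eq hq' hc', ← hΦV, ← hΦP, ← Set.image_pair]
  exact nonempty_starAlgEquiv_topologicalClosure_adjoin_image Φ _
end
end
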